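/- arXiv:2411.11316 — 5 statements merged into one kernel-verified Lean document; each statement's English description precedes it below -/
import Mathlib

section
/- Let P ∈ ℝ[x] be a polynomial whose coefficient of x is non-Liouville. Then there exist constants μ ∈ (0,1), C > 0 and C₀ > 0 such that for every positive integer d and every real X with X/d > C, one has | #A_d(X) − X/d² | ≤ C₀·(X/d)^{1−μ}. -/
open Real Finset

/-- `α` is Liouville: for every `n ∈ ℕ` there are integers `p, q` with `q > 1`
and `|α - p/q| ≤ q^(-n)`. -/
def IsLiouvilleReal (α : ℝ) : Prop :=
  ∀ n : ℕ, ∃ p q : ℤ, 1 < q ∧ |α - (p : ℝ) / (q : ℝ)| ≤ (q : ℝ) ^ (-(n : ℤ))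

open Classical in
/-- The finset of primes `p < z`. -/
noncomputable def primesLt (z : ℝ) : Finset ℕ :=
  (Finset.range ⌈z⌉₊).filter fun p => p.Prime ∧ (p : ℝ) < z

/-- `P_z`, the product of all primes `p < z`. -/
noncomputable def Pz (z : ℝ) : ℕ := ∏ p ∈ primesLt z, p

open Classical in
/-- `S(X)`: the number of naturals `1 ≤ x ≤ X` with `gcd(x, ⌊P(x)⌋) = 1`. -/
noncomputable def S (P : Polynomial ℝ) (X : ℝ) : ℕ :=
  ((Finset.Icc 1 ⌊X⌋₊).filter fun x => Int.gcd (x : ℤ) ⌊P.eval (x : ℝ)⌋ = 1).card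

open Classical in
/-- `A_d(X)`: the set of naturals `1 ≤ x ≤ X` with `d ∣ x` and `d ∣ ⌊P(x)⌋`. -/
noncomputable def AP (P : Polynomial ℝ) (d : ℕ) (X : ℝ) : Finset ℕ :=
  (Finset.Icc 1 ⌊X⌋₊).filter fun x => (d : ℤ) ∣ (x : ℤ) ∧ (d : ℤ) ∣ ⌊P.eval (x : ℝ)⌋

open Classical in
/-- `S(X, z)`: the number of naturals `1 ≤ x ≤ X` with `gcd(gcd(x, ⌊P(x)⌋), P_z) = 1`. -/
noncomputable def S2 (P : Polynomial ℝ) (X z : ℝ) : ℕ :=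
  ((Finset.Icc 1 ⌊X⌋₊).filter fun x =>
    Nat.gcd (Int.gcd (x : ℤ) ⌊P.eval (x : ℝ)⌋) (Pz z) = 1).card

/-- `z = X ^ (c / log log X)` with `c = 1/(2(A+1))`. -/
noncomputable def zf (A X : ℝ) : ℝ := X ^ ((1 / (2 * (A + 1))) / Real.log (Real.log X))

/-!
For `x = d * m` the condition `d ∣ ⌊P(x)⌋` says that the fractional part of `P(d m) / d` is less
than `1 / d`, so the theorem is an equidistribution statement, uniform in `d`, with a power saving
in the number `X / d` of points. The linear coefficient of `h P(d m) / d` is `h` times that of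
`P`, whatever `d` is. By the inverse theorem for Weyl sums, a large sum `∑ e(h P(d m) / d)` would
make this coefficient very well approximable by rationals with small denominators, which is
excluded when the linear coefficient of `P` is not Liouville. The inverse theorem is proved by
induction on the degree: Weyl differencing and Vinogradov's recurrence lemma approximate the
leading coefficient, which is then removed by partial summation and by completing the remaining
rational phase. Bounds for the exponential sums are turned into a discrepancy bound through the
Fourier series of the second periodic Bernoulli function.
-/

open scoped FourierTransform
open Polynomial (taylor hasseDeriv)

section FourierChar

theorem fourierChar_intCast (n : ℤ) : 𝐞 (n : ℝ) = 1 := by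
  rw [Real.fourierChar_apply', mul_comm, Circle.exp_int_mul_two_pi]

theorem fourierChar_natCast_mul (n : ℕ) (x : ℝ) : 𝐞 (n * x) = 𝐞 x ^ n := by
  rw [← nsmul_eq_mul, AddChar.map_nsmul_eq_pow]

theorem norm_fourierChar_sub_one (x : ℝ) : ‖(𝐞 x : ℂ) - 1‖ = 2 * |sin (π * x)| := by
  rw [Real.fourierChar_apply, mul_comm _ Complex.I, Complex.norm_exp_I_mul_ofReal_sub_one,
    norm_mul, Real.norm_ofNat, Real.norm_eq_abs]
  ring_nf

theorem norm_fourierChar_sub_fourierChar_le (x y : ℝ) :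
    ‖(𝐞 x : ℂ) - 𝐞 y‖ ≤ 2 * π * |x - y| := by
  have hfactor : (𝐞 x : ℂ) - 𝐞 y = (𝐞 (x - y) - 1) * 𝐞 y := by
    rw [sub_mul, one_mul, ← Circle.coe_mul, ← AddChar.map_add_eq_mul, sub_add_cancel]
  rw [hfactor, norm_mul, Circle.norm_coe, mul_one, norm_fourierChar_sub_one]
  have hsin : |sin (π * (x - y))| ≤ |π * (x - y)| := abs_sin_le_abs
  rw [abs_mul, abs_of_pos pi_pos] at hsin
  linarith

theorem four_mul_norm_le_norm_fourierChar_sub_one (x : ℝ) :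
    4 * ‖(x : UnitAddCircle)‖ ≤ ‖(𝐞 x : ℂ) - 1‖ := by
  set θ := x - round x with hθ
  have hchar : 𝐞 x = 𝐞 θ := by
    rw [← sub_add_cancel x (round x), AddChar.map_add_eq_mul, fourierChar_intCast, mul_one]
  have habs : |π * θ| = π * |θ| := by rw [abs_mul, abs_of_pos pi_pos]
  have hsin : 2 / π * |π * θ| ≤ |sin (π * θ)| :=
    mul_abs_le_abs_sin (by rw [habs]; nlinarith [pi_pos, abs_sub_round x])
  rw [UnitAddCircle.norm_eq, ← hθ, hchar, norm_fourierChar_sub_one]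
  rw [habs, ← mul_assoc, div_mul_cancel₀ _ pi_ne_zero] at hsin
  linarith

theorem norm_sum_fourierChar_natCast_mul_mul_norm_le (x : ℝ) (N : ℕ) :
    ‖∑ m ∈ range N, (𝐞 (m * x) : ℂ)‖ * ‖(x : UnitAddCircle)‖ ≤ 1 / 2 := by
  have hgeom : ‖∑ m ∈ range N, (𝐞 (m * x) : ℂ)‖ * ‖(𝐞 x : ℂ) - 1‖ ≤ 2 := by
    simp only [fourierChar_natCast_mul, Circle.coe_pow]
    rw [← norm_mul, geom_sum_mul, ← Circle.coe_pow]
    refine (norm_sub_le _ _).trans_eq ?_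
    rw [Circle.norm_coe, norm_one, one_add_one_eq_two]
  have := mul_le_mul_of_nonneg_left (four_mul_norm_le_norm_fourierChar_sub_one x)
    (norm_nonneg (∑ m ∈ range N, (𝐞 (m * x) : ℂ)))
  linarith

theorem norm_sum_fourierChar_le {ι : Type*} (s : Finset ι) (x : ι → ℝ) :
    ‖∑ i ∈ s, (𝐞 (x i) : ℂ)‖ ≤ #s := by
  simpa only [Circle.norm_coe, sum_const, nsmul_eq_mul, mul_one] using
    norm_sum_le s fun i ↦ (𝐞 (x i) : ℂ)

end FourierChar

section UnitAddCircle

theorem coe_add_intCast_unitAddCircle (x : ℝ) (n : ℤ) :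
    ((x + n : ℝ) : UnitAddCircle) = x := by
  rw [AddCircle.coe_add, add_eq_left, AddCircle.coe_eq_zero_iff]
  exact ⟨n, by rw [zsmul_one]⟩

theorem norm_natCast_mul_unitAddCircle_le (n : ℕ) (x : ℝ) :
    ‖((n * x : ℝ) : UnitAddCircle)‖ ≤ n * ‖(x : UnitAddCircle)‖ := by
  rw [← nsmul_eq_mul, AddCircle.coe_nsmul]
  exact norm_nsmul_le

theorem norm_unitAddCircle_le_half (x : UnitAddCircle) : ‖x‖ ≤ 1 / 2 := by
  simpa only [abs_one] using AddCircle.norm_le_half_period (1 : ℝ) (x := x) one_ne_zero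

end UnitAddCircle

/-- The exponential sum `∑ e(Q(m))` over `0 ≤ m < N`. -/
noncomputable def weylSum (Q : Polynomial ℝ) (N : ℕ) : ℂ :=
  ∑ m ∈ range N, (𝐞 (Q.eval (m : ℝ)) : ℂ)

theorem norm_weylSum_le (Q : Polynomial ℝ) (N : ℕ) : ‖weylSum Q N‖ ≤ N :=
  (norm_sum_fourierChar_le _ _).trans_eq (by rw [card_range])

/-- Inverse theorem for Weyl sums of degree at most `k`, with polynomial bounds: if a Weyl sum of
length `N` has size at least `N / K`, then the nonconstant coefficients of its phase have a common
approximate denominator of size `K ^ O(1)`, the quality at degree `i` being `K ^ O(1) / N ^ i`. -/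
def WeylInverse (k : ℕ) : Prop :=
  ∃ A : ℕ, ∀ K : ℝ, 2 ≤ K → ∀ N : ℕ, 1 ≤ N → ∀ Q : Polynomial ℝ, Q.natDegree ≤ k →
    N / K ≤ ‖weylSum Q N‖ → ∃ q : ℕ, 1 ≤ q ∧ q ≤ K ^ A ∧
      ∀ i, 1 ≤ i → i ≤ k → ‖((q * Q.coeff i : ℝ) : UnitAddCircle)‖ ≤ K ^ A / N ^ i

theorem weylInverse_one : WeylInverse 1 := by
  refine ⟨1, fun K hK N hN Q hQ hlarge ↦ ⟨1, le_rfl, by norm_num; linarith, ?_⟩⟩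
  have hN0 : (0 : ℝ) < N := by exact_mod_cast hN
  have hsum : ‖weylSum Q N‖ = ‖∑ m ∈ range N, (𝐞 (m * Q.coeff 1) : ℂ)‖ := by
    have heval (m : ℕ) : (𝐞 (Q.eval (m : ℝ)) : ℂ) = 𝐞 (Q.coeff 0) * 𝐞 (m * Q.coeff 1) := by
      rw [Polynomial.eval_eq_sum_range' (Nat.lt_succ_of_le hQ), ← Circle.coe_mul,
        ← AddChar.map_add_eq_mul, sum_range_succ, sum_range_one]
      ring_nf
    simp only [weylSum, heval]
    rw [← mul_sum, norm_mul, Circle.norm_coe, one_mul]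
  intro i hi₁ hi₂
  obtain rfl : i = 1 := le_antisymm hi₂ hi₁
  have hprod : N / K * ‖(Q.coeff 1 : UnitAddCircle)‖ ≤ 1 / 2 :=
    (mul_le_mul_of_nonneg_right (hlarge.trans_eq hsum) (norm_nonneg _)).trans
      (norm_sum_fourierChar_natCast_mul_mul_norm_le _ N)
  rw [Nat.cast_one, one_mul, pow_one, pow_one, le_div_iff₀ hN0]
  rw [div_mul_eq_mul_div, div_le_iff₀ (by linarith)] at hprod
  linarith

section Differencing

open ComplexConjugate

theorem norm_sq_sum_range_add_sum_norm_sq {𝕜 : Type*} [RCLike 𝕜] (f : ℕ → 𝕜) (N : ℕ) :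
    ‖∑ m ∈ range N, f m‖ ^ 2 + ∑ m ∈ range N, ‖f m‖ ^ 2 =
      2 * RCLike.re (∑ h ∈ range N, ∑ m ∈ range (N - h), f (m + h) * conj (f m)) := by
  have hflip : ∑ h ∈ range N, ∑ m ∈ range (N - h), f (m + h) * conj (f m) =
      ∑ n ∈ range N, f n * conj (∑ m ∈ range (n + 1), f m) := by
    rw [← sum_range_diag_flip N fun h m ↦ f (m + h) * conj (f m)]
    refine sum_congr rfl fun n _ ↦ ?_
    rw [← sum_flip f, map_sum, mul_sum]
    refine sum_congr rfl fun h hh ↦ ?_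
    rw [Nat.sub_add_cancel (mem_range_succ_iff.1 hh)]
  rw [hflip]
  clear hflip
  induction N with
  | zero => simp
  | succ N ih =>
    rw [sum_range_succ _ N, sum_range_succ _ N, sum_range_succ _ N, map_add, mul_add, ← ih,
      sum_range_succ f N, map_add (starRingEnd 𝕜), mul_add, map_add, RCLike.mul_conj,
      ← RCLike.ofReal_pow, RCLike.ofReal_re, ← RCLike.normSq_eq_def', RCLike.normSq_add,
      RCLike.normSq_eq_def', RCLike.normSq_eq_def', ← RCLike.conj_re, map_mul, RCLike.conj_conj,
      mul_comm (conj _)]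
    ring

theorem norm_sq_sum_range_le {𝕜 : Type*} [RCLike 𝕜] (f : ℕ → 𝕜) (N : ℕ) :
    ‖∑ m ∈ range N, f m‖ ^ 2 ≤
      2 * ∑ h ∈ range N, ‖∑ m ∈ range (N - h), f (m + h) * conj (f m)‖ :=
  calc ‖∑ m ∈ range N, f m‖ ^ 2
    _ ≤ ‖∑ m ∈ range N, f m‖ ^ 2 + ∑ m ∈ range N, ‖f m‖ ^ 2 :=
      le_add_of_nonneg_right (sum_nonneg fun _ _ ↦ sq_nonneg _)
    _ = _ := norm_sq_sum_range_add_sum_norm_sq f N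
    _ ≤ _ := by gcongr; exact (RCLike.re_le_norm _).trans (norm_sum_le _ _)

theorem norm_sq_weylSum_le (Q : Polynomial ℝ) (N : ℕ) :
    ‖weylSum Q N‖ ^ 2 ≤ 2 * ∑ h ∈ range N, ‖weylSum (taylor (h : ℝ) Q - Q) (N - h)‖ := by
  refine (norm_sq_sum_range_le _ N).trans_eq ?_
  congr 1
  refine sum_congr rfl fun h _ ↦ congrArg _ (sum_congr rfl fun m _ ↦ ?_)
  rw [← Circle.coe_inv_eq_conj, ← Circle.coe_mul, ← AddChar.map_neg_eq_inv,
    ← AddChar.map_add_eq_mul, ← sub_eq_add_neg, Polynomial.eval_sub, Polynomial.taylor_eval,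
    Nat.cast_add]

theorem sum_le_card_filter_mul_add {ι : Type*} {s : Finset ι} {f : ι → ℝ} {M c : ℝ}
    (hc : 0 ≤ c) (hM : ∀ i ∈ s, f i ≤ M) :
    ∑ i ∈ s, f i ≤ #{i ∈ s | c ≤ f i} * M + #s * c := by
  rw [← sum_filter_add_sum_filter_not s (c ≤ f ·)]
  refine add_le_add ?_ ?_
  · rw [← nsmul_eq_mul]
    exact sum_le_card_nsmul _ _ _ fun i hi ↦ hM i (mem_filter.1 hi).1
  · calc ∑ i ∈ s with ¬c ≤ f i, f i
      _ ≤ #{i ∈ s | ¬c ≤ f i} • c :=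
        sum_le_card_nsmul _ _ _ fun i hi ↦ (not_le.1 (mem_filter.1 hi).2).le
      _ ≤ #s * c := by rw [nsmul_eq_mul]; gcongr; exact filter_subset _ _

theorem div_le_card_filter_le_norm_weylSum {K : ℝ} (hK : 0 < K) {N : ℕ} {Q : Polynomial ℝ}
    (hlarge : N / K ≤ ‖weylSum Q N‖) :
    N / (4 * K ^ 2) ≤
      #((range N).filter fun h : ℕ ↦
        N / (4 * K ^ 2) ≤ ‖weylSum (taylor (h : ℝ) Q - Q) (N - h)‖) := by
  rcases N.eq_zero_or_pos with rfl | hN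
  · simp
  have hN0 : (0 : ℝ) < N := by exact_mod_cast hN
  have hsum := sum_le_card_filter_mul_add (s := range N) (M := N) (c := N / (4 * K ^ 2))
    (f := fun h ↦ ‖weylSum (taylor (h : ℝ) Q - Q) (N - h)‖) (by positivity)
    fun h _ ↦ (norm_weylSum_le _ _).trans (by exact_mod_cast N.sub_le h)
  have hsq : (N / K) ^ 2 ≤ ‖weylSum Q N‖ ^ 2 := by gcongr
  have hsplit : (N / K) ^ 2 = 4 * (N * (N / (4 * K ^ 2))) := by field_simp
  rw [card_range] at hsum
  refine le_of_mul_le_mul_right ?_ hN0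
  linarith [norm_sq_weylSum_le Q N]

theorem coeff_taylor_of_natDegree_le {R : Type*} [CommSemiring R] {Q : Polynomial R} {k : ℕ}
    (hQ : Q.natDegree ≤ k + 1) (r : R) :
    (taylor r Q).coeff k = Q.coeff k + (k + 1) * Q.coeff (k + 1) * r := by
  have hdeg : (hasseDeriv k Q).natDegree < 2 := by
    have := Polynomial.natDegree_hasseDeriv_le Q k
    lia
  rw [Polynomial.taylor_coeff, Polynomial.eval_eq_sum_range' hdeg, sum_range_succ, sum_range_one]
  simp [Polynomial.hasseDeriv_coeff, add_comm 1 k]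

theorem natDegree_taylor_sub_le {R : Type*} [CommRing R] {Q : Polynomial R} {k : ℕ}
    (hQ : Q.natDegree ≤ k + 1) (r : R) : (taylor r Q - Q).natDegree ≤ k := by
  refine Polynomial.natDegree_le_iff_coeff_eq_zero.2 fun i hi ↦ ?_
  rw [Polynomial.coeff_sub, coeff_taylor_of_natDegree_le (by lia),
    Polynomial.coeff_eq_zero_of_natDegree_lt (n := i + 1) (by lia)]
  ring

theorem coeff_taylor_sub {R : Type*} [CommRing R] {Q : Polynomial R} {k : ℕ}
    (hQ : Q.natDegree ≤ k + 1) (r : R) :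
    (taylor r Q - Q).coeff k = (k + 1) * Q.coeff (k + 1) * r := by
  rw [Polynomial.coeff_sub, coeff_taylor_of_natDegree_le hQ, add_sub_cancel_left]

end Differencing

section Recurrence

theorem exists_lt_lt_add_of_card {H : Finset ℕ} {N L : ℕ} (hL : 0 < L) (hH : H ⊆ range N)
    (hcard : N / L + 1 < #H) : ∃ a ∈ H, ∃ b ∈ H, a < b ∧ b < a + L := by
  have hmaps : Set.MapsTo (· / L) (H : Set ℕ) (range (N / L + 1)) := fun h hh ↦
    mem_coe.2 (mem_range_succ_iff.2 (Nat.div_le_div_right (mem_range.1 (hH hh)).le))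
  have hclose {a b : ℕ} (hab : a / L = b / L) : b < a + L := by
    have := Nat.div_add_mod a L
    have := Nat.div_add_mod b L
    have := Nat.mod_lt b hL
    rw [hab] at *
    lia
  obtain ⟨a, ha, b, hb, hne, hab⟩ :=
    exists_ne_map_eq_of_card_lt_of_maps_to (by rwa [card_range]) hmaps
  rcases hne.lt_or_gt with hlt | hlt
  · exact ⟨a, ha, b, hb, hlt, hclose hab⟩
  · exact ⟨b, hb, a, ha, hlt, hclose hab.symm⟩

theorem card_le_add_one_of_one_le_abs_sub {ι : Type*} {s : Finset ι} {f : ι → ℝ} {L : ℝ}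
    (hL : 0 ≤ L) (hsep : ∀ a ∈ s, ∀ b ∈ s, a ≠ b → 1 ≤ |f a - f b|)
    (hdiam : ∀ a ∈ s, ∀ b ∈ s, |f a - f b| ≤ L) : #s ≤ L + 1 := by
  rcases s.eq_empty_or_nonempty with rfl | hs
  · rw [card_empty, Nat.cast_zero]; linarith
  obtain ⟨m, hm, hmin⟩ := exists_min_image s f hs
  have hcard : #s ≤ #(range (⌊L⌋₊ + 1)) := by
    refine card_le_card_of_injOn (fun a ↦ ⌊f a - f m⌋₊) (fun a ha ↦ ?_) fun a ha b hb hab ↦ ?_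
    · exact mem_coe.2 (mem_range_succ_iff.2
        (Nat.floor_le_floor ((le_abs_self _).trans (hdiam a ha m hm))))
    · by_contra hne
      have hab' : (⌊f a - f m⌋₊ : ℝ) = ⌊f b - f m⌋₊ := congrArg Nat.cast hab
      refine (hsep a ha b hb hne).not_gt (abs_sub_lt_iff.2 ⟨?_, ?_⟩) <;>
        linarith [Nat.floor_le (sub_nonneg.2 (hmin a ha)), Nat.lt_floor_add_one (f a - f m),
          Nat.floor_le (sub_nonneg.2 (hmin b hb)), Nat.lt_floor_add_one (f b - f m)]
  rw [card_range] at hcard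
  calc (#s : ℝ) ≤ ⌊L⌋₊ + 1 := by exact_mod_cast hcard
    _ ≤ L + 1 := by gcongr; exact Nat.floor_le hL

theorem one_le_abs_intCast_sub {a b : ℤ} (hab : a ≠ b) : (1 : ℝ) ≤ |(a : ℝ) - b| := by
  exact_mod_cast Int.one_le_abs (sub_ne_zero.2 hab)

theorem card_le_of_norm_mul_sub_le {s : Finset ℕ} {T : ℕ} {θ c ε : ℝ} (hθ : θ ≠ 0) (hε : 0 ≤ ε)
    (hs : s ⊆ range T) (hclose : ∀ t ∈ s, ‖((t * θ - c : ℝ) : UnitAddCircle)‖ ≤ ε) :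
    #s ≤ (2 * ε / |θ| + 1) * (T * |θ| + 2) := by
  have hθ' : 0 < |θ| := abs_pos.2 hθ
  have hdist (t u : ℕ) : |(t * θ - c) - (u * θ - c)| = |(t : ℝ) - u| * |θ| := by
    rw [sub_sub_sub_cancel_right, ← sub_mul, abs_mul]
  set r : ℕ → ℤ := fun t ↦ round (t * θ - c)
  have hfiber (n : ℤ) : (#{t ∈ s | r t = n} : ℝ) ≤ 2 * ε / |θ| + 1 := by
    refine card_le_add_one_of_one_le_abs_sub (f := Nat.cast) (by positivity)
      (fun t _ u _ htu ↦ ?_) fun t ht u hu ↦ ?_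
    · exact one_le_abs_intCast_sub (Nat.cast_injective.ne htu)
    · rw [mem_filter] at ht hu
      have ht' := hclose t ht.1
      have hu' := hclose u hu.1
      rw [UnitAddCircle.norm_eq, show round _ = n from ht.2] at ht'
      rw [UnitAddCircle.norm_eq, show round _ = n from hu.2, abs_sub_comm] at hu'
      rw [le_div_iff₀ hθ', ← hdist]
      linarith [abs_sub_le (t * θ - c) n (u * θ - c)]
  have himage : (#(s.image r) : ℝ) ≤ T * |θ| + 1 + 1 := by
    refine card_le_add_one_of_one_le_abs_sub (f := Int.cast) (by positivity)
      (fun m _ n _ hmn ↦ one_le_abs_intCast_sub hmn) ?_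
    simp only [forall_mem_image]
    intro t ht u hu
    have htu : |(t : ℝ) - u| ≤ T := by
      have := mem_range.1 (hs ht)
      have := mem_range.1 (hs hu)
      exact_mod_cast abs_le.2 (⟨by lia, by lia⟩ : -(T : ℤ) ≤ t - u ∧ (t : ℤ) - u ≤ T)
    have hmul : |(t * θ - c) - (u * θ - c)| ≤ T * |θ| := by rw [hdist]; gcongr
    have ht' := abs_sub_round (t * θ - c)
    have hu' := abs_sub_round (u * θ - c)
    rw [abs_le] at hmul ht' hu' ⊢
    constructor <;> linarith
  have hcard := card_le_mul_card_image (f := r) s ⌊2 * ε / |θ| + 1⌋₊ fun n _ ↦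
    Nat.le_floor (hfiber n)
  calc (#s : ℝ) ≤ ⌊2 * ε / |θ| + 1⌋₊ * #(s.image r) := by exact_mod_cast hcard
    _ ≤ (2 * ε / |θ| + 1) * (T * |θ| + 2) := by
      gcongr
      · exact Nat.floor_le (by positivity)
      · linarith

theorem card_le_of_norm_mul_le_of_mod_eq {s : Finset ℕ} {N q r : ℕ} {β ε : ℝ} (hε : 0 ≤ ε)
    (hqβ : 0 < ‖((q * β : ℝ) : UnitAddCircle)‖) (hs : s ⊆ range N) (hmod : ∀ h ∈ s, h % q = r)
    (hclose : ∀ h ∈ s, ‖((h * β : ℝ) : UnitAddCircle)‖ ≤ ε) :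
    #s ≤ (2 * ε / ‖((q * β : ℝ) : UnitAddCircle)‖ + 1) *
      ((N / q + 1) * ‖((q * β : ℝ) : UnitAddCircle)‖ + 2) := by
  set θ : ℝ := q * β - round (q * β : ℝ) with hθ
  have hnorm : ‖((q * β : ℝ) : UnitAddCircle)‖ = |θ| := UnitAddCircle.norm_eq
  rw [hnorm] at hqβ ⊢
  have hdecomp {h : ℕ} (hh : h ∈ s) : q * (h / q) + r = h := by
    rw [← hmod h hh, Nat.div_add_mod]
  have hinj : Set.InjOn (· / q) (s : Set ℕ) := fun h hh k hk hhk ↦ by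
    rw [← hdecomp hh, ← hdecomp hk, show h / q = k / q from hhk]
  have hrange : s.image (· / q) ⊆ range (N / q + 1) := image_subset_iff.2 fun h hh ↦
    mem_range_succ_iff.2 (Nat.div_le_div_right (mem_range.1 (hs hh)).le)
  have hclose' : ∀ t ∈ s.image (· / q), ‖((t * θ - -(r * β) : ℝ) : UnitAddCircle)‖ ≤ ε := by
    simp only [forall_mem_image]
    intro h hh
    have hshift : ((h / q : ℕ) * θ - -(r * β) : ℝ) =
        h * β + (-((h / q : ℕ) : ℤ) * round (q * β : ℝ) : ℤ) := by
      have hdecomp' : (q * (h / q : ℕ) + r : ℝ) = h := by exact_mod_cast hdecomp hh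
      rw [← hdecomp', hθ, Int.cast_mul, Int.cast_neg, Int.cast_natCast]
      ring
    rw [hshift, coe_add_intCast_unitAddCircle]
    exact hclose h hh
  have hcard := card_le_of_norm_mul_sub_le (abs_pos.1 hqβ) hε hrange hclose'
  rw [card_image_of_injOn hinj, Nat.cast_succ] at hcard
  refine hcard.trans ?_
  gcongr
  exact Nat.cast_div_le

theorem card_le_of_norm_mul_le {H : Finset ℕ} {N q : ℕ} {β ε : ℝ} (hq : 1 ≤ q) (hε : 0 ≤ ε)
    (hqβ : 0 < ‖((q * β : ℝ) : UnitAddCircle)‖) (hH : H ⊆ range N)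
    (hclose : ∀ h ∈ H, ‖((h * β : ℝ) : UnitAddCircle)‖ ≤ ε) :
    #H ≤ (2 * ε / ‖((q * β : ℝ) : UnitAddCircle)‖ + 1) *
      (N * ‖((q * β : ℝ) : UnitAddCircle)‖ + 3 * q) := by
  set δ := ‖((q * β : ℝ) : UnitAddCircle)‖
  have hsum : (#H : ℝ) = ∑ r ∈ range q, (#{h ∈ H | h % q = r} : ℝ) := by
    exact_mod_cast card_eq_sum_card_fiberwise fun h _ ↦
      mem_coe.2 (mem_range.2 (Nat.mod_lt h hq))
  calc (#H : ℝ)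
    _ ≤ ∑ _ ∈ range q, (2 * ε / δ + 1) * ((N / q + 1) * δ + 2) :=
      hsum.trans_le (sum_le_sum fun r _ ↦ card_le_of_norm_mul_le_of_mod_eq hε hqβ
        ((filter_subset _ _).trans hH) (fun h hh ↦ (mem_filter.1 hh).2)
        fun h hh ↦ hclose h (mem_filter.1 hh).1)
    _ = (2 * ε / δ + 1) * (N * δ + (δ + 2) * q) := by
      rw [sum_const, card_range, nsmul_eq_mul]; field_simp; ring
    _ ≤ (2 * ε / δ + 1) * (N * δ + 3 * q) := by
      gcongr
      linarith [norm_unitAddCircle_le_half ((q * β : ℝ) : UnitAddCircle)]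

theorem exists_norm_mul_le_of_card {H : Finset ℕ} {N : ℕ} {K β ε : ℝ} (hK : 1 ≤ K)
    (hN : 24 * K ^ 2 ≤ N) (hε : ε ≤ 1 / (16 * K)) (hH : H ⊆ range N) (hcard : N / K ≤ #H)
    (hclose : ∀ h ∈ H, ‖((h * β : ℝ) : UnitAddCircle)‖ ≤ ε) :
    ∃ q : ℕ, 1 ≤ q ∧ q ≤ 2 * K ∧ ‖((q * β : ℝ) : UnitAddCircle)‖ ≤ 24 * K ^ 2 * ε / N := by
  have hK0 : 0 < K := by linarith
  have hN0 : (0 : ℝ) < N := by nlinarith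
  have hNK : 24 * K ≤ N / K := by rw [le_div_iff₀ hK0]; linarith
  obtain ⟨a, ha, b, hb, hab, hba⟩ :
      ∃ a ∈ H, ∃ b ∈ H, a < b ∧ b < a + (⌊2 * K⌋₊ + 1) := by
    refine exists_lt_lt_add_of_card (Nat.succ_pos _) hH ?_
    have hdiv : ((N / (⌊2 * K⌋₊ + 1) : ℕ) : ℝ) ≤ N / (2 * K) :=
      Nat.cast_div_le.trans (by gcongr; exact_mod_cast (Nat.lt_floor_add_one (2 * K)).le)
    have : (N : ℝ) / (2 * K) = N / K / 2 := by field_simp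
    exact_mod_cast (by linarith : ((N / (⌊2 * K⌋₊ + 1) : ℕ) : ℝ) + 1 < #H)
  have hε0 : 0 ≤ ε := (norm_nonneg _).trans (hclose a ha)
  have hq : ((b - a : ℕ) : ℝ) ≤ 2 * K :=
    (Nat.le_floor_iff (by positivity)).1 (by lia)
  refine ⟨b - a, by lia, hq, ?_⟩
  set δ := ‖(((b - a : ℕ) * β : ℝ) : UnitAddCircle)‖ with hδ
  have hδε : δ ≤ 2 * ε := by
    rw [hδ, Nat.cast_sub hab.le, sub_mul, AddCircle.coe_sub]
    linarith [norm_sub_le (((b * β : ℝ) : UnitAddCircle)) ((a * β : ℝ) : UnitAddCircle),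
      hclose a ha, hclose b hb]
  have hδ0 : 0 ≤ δ := norm_nonneg _
  rcases hδ0.eq_or_lt with hδ0 | hδ0
  · rw [← hδ0]; positivity
  have hcount := hcard.trans (card_le_of_norm_mul_le (by lia) hε0 hδ0 hH hclose)
  rw [← hδ] at hcount
  -- The terms of the count that do not involve `1 / δ` make up at most half of `N / K`.
  have hmain : N * (2 * ε + δ) ≤ N / K / 4 := by
    calc N * (2 * ε + δ) ≤ N * (4 * (1 / (16 * K))) := by gcongr; linarith
      _ = N / K / 4 := by field_simp; norm_num
  have hexpand : (2 * ε / δ + 1) * (N * δ + 3 * (b - a : ℕ)) =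
      N * (2 * ε + δ) + 3 * (b - a : ℕ) + 6 * (b - a : ℕ) * ε / δ := by
    have := hδ0.ne'
    field_simp
    ring
  have hhalf : N / K / 2 ≤ 6 * (b - a : ℕ) * ε / δ := by linarith
  rw [le_div_iff₀ hN0]
  rw [div_div, div_le_div_iff₀ (by positivity) hδ0] at hhalf
  calc δ * N ≤ 12 * K * ε * (b - a : ℕ) := by linarith
    _ ≤ 12 * K * ε * (2 * K) := by gcongr
    _ = 24 * K ^ 2 * ε := by ring

theorem exists_norm_mul_le_of_forall_exists {H : Finset ℕ} {N T : ℕ} {K β ε : ℝ} (hK : 1 ≤ K)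
    (hT : 1 ≤ T) (hN : 24 * (K * T) ^ 2 ≤ N) (hε : ε ≤ 1 / (16 * (K * T))) (hH : H ⊆ range N)
    (hcard : N / K ≤ #H)
    (hclose : ∀ h ∈ H, ∃ q : ℕ, 1 ≤ q ∧ q ≤ T ∧ ‖((q * (h * β) : ℝ) : UnitAddCircle)‖ ≤ ε) :
    ∃ q : ℕ, 1 ≤ q ∧ q ≤ 2 * (K * T) * T ∧
      ‖((q * β : ℝ) : UnitAddCircle)‖ ≤ 24 * (K * T) ^ 2 * ε / N := by
  have hT' : (1 : ℝ) ≤ T := by exact_mod_cast hT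
  choose! q hq₁ hqT hqβ using hclose
  obtain ⟨r, hr, hfiber⟩ := exists_le_card_fiber_of_nsmul_le_card_of_maps_to (b := N / (K * T))
    (fun h hh ↦ mem_Icc.2 ⟨hq₁ h hh, hqT h hh⟩) (nonempty_Icc.2 hT) <| by
      rw [Nat.card_Icc, Nat.add_sub_cancel, nsmul_eq_mul]
      refine le_trans (le_of_eq ?_) hcard
      field_simp
  rw [mem_Icc] at hr
  obtain ⟨t, ht₁, htK, htβ⟩ := exists_norm_mul_le_of_card (β := r * β) (by nlinarith) hN hε
    ((filter_subset _ _).trans hH) hfiber fun h hh ↦ by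
      rw [mul_left_comm, ← (mem_filter.1 hh).2]
      exact hqβ h (mem_filter.1 hh).1
  refine ⟨t * r, Nat.mul_pos ht₁ hr.1, ?_, ?_⟩
  · push_cast
    gcongr
    exact_mod_cast hr.2
  · rwa [Nat.cast_mul, mul_assoc]

end Recurrence

section LeadingCoefficient

variable {d : ℕ}

theorem const_mul_pow_le {c K : ℝ} {j n : ℕ} (hK : 2 ≤ K) (hc : c ≤ 2 ^ j) :
    c * K ^ n ≤ K ^ (n + j) := by
  rw [pow_add, mul_comm]
  gcongr
  exact hc.trans (by gcongr)

theorem WeylInverse.exists_card_differences (hd : WeylInverse d) (hd₁ : 1 ≤ d) :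
    ∃ A : ℕ, ∀ K : ℝ, 2 ≤ K → ∀ N : ℕ, 1 ≤ N → ∀ Q : Polynomial ℝ, Q.natDegree ≤ d + 1 →
      N / K ≤ ‖weylSum Q N‖ → ∃ H ⊆ range N, N / K ^ 4 ≤ #H ∧ ∀ h ∈ H, ∃ q : ℕ, 1 ≤ q ∧
        q ≤ K ^ A ∧
        ‖((q * (h * ((d + 1) * Q.coeff (d + 1))) : ℝ) : UnitAddCircle)‖ ≤ K ^ A / N ^ d := by
  obtain ⟨A, hA⟩ := hd
  refine ⟨4 * A + 4 * d, fun K hK N hN Q hQ hlarge ↦ ?_⟩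
  have hK0 : 0 < K := by linarith
  have hK1 : 1 ≤ K := by linarith
  have hK4 : N / K ^ 4 ≤ N / (4 * K ^ 2) := by
    gcongr
    exact const_mul_pow_le (j := 2) hK (by norm_num)
  refine ⟨_, filter_subset _ _, hK4.trans (div_le_card_filter_le_norm_weylSum hK0 hlarge),
    fun h hh ↦ ?_⟩
  obtain ⟨hhN, hh⟩ := mem_filter.1 hh
  have hlen : N / K ^ 4 ≤ (N - h : ℕ) := hK4.trans (hh.trans (norm_weylSum_le _ _))
  have hlen0 : 0 < N - h := Nat.sub_pos_of_lt (mem_range.1 hhN)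
  have hlarge' : (N - h : ℕ) / K ^ 4 ≤ ‖weylSum (taylor (h : ℝ) Q - Q) (N - h)‖ := by
    refine le_trans ?_ (hK4.trans hh)
    gcongr
    exact N.sub_le h
  obtain ⟨q, hq₁, hqK, hq⟩ := hA (K ^ 4) (hK.trans (le_self_pow₀ hK1 (by norm_num))) (N - h)
    hlen0 _ (natDegree_taylor_sub_le hQ _) hlarge'
  refine ⟨q, hq₁, ?_, ?_⟩
  · rw [← pow_mul] at hqK
    exact hqK.trans (pow_le_pow_right₀ hK1 (by lia))
  · have hqd := hq d hd₁ le_rfl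
    rw [coeff_taylor_sub hQ, mul_comm _ (h : ℝ), ← pow_mul] at hqd
    calc _ ≤ K ^ (4 * A) / (N - h : ℕ) ^ d := hqd
      _ ≤ K ^ (4 * A) / (N / K ^ 4) ^ d := by gcongr
      _ = K ^ (4 * A + 4 * d) / N ^ d := by rw [div_pow, div_div_eq_mul_div, pow_add, pow_mul K 4 d]

theorem exists_norm_mul_le_pow_of_forall_exists {H : Finset ℕ} {N A : ℕ} {K β : ℝ} (hd : 1 ≤ d)
    (hK : 2 ≤ K) (hN : K ^ (2 * A + 13) ≤ N) (hH : H ⊆ range N) (hcard : N / K ^ 4 ≤ #H)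
    (hclose : ∀ h ∈ H, ∃ q : ℕ, 1 ≤ q ∧ q ≤ K ^ A ∧
      ‖((q * (h * β) : ℝ) : UnitAddCircle)‖ ≤ K ^ A / N ^ d) :
    ∃ q : ℕ, 1 ≤ q ∧ q ≤ K ^ (2 * A + 5) ∧
      ‖((q * β : ℝ) : UnitAddCircle)‖ ≤ K ^ (3 * A + 13) / N ^ (d + 1) := by
  have hK1 : 1 ≤ K := by linarith
  have hN1 : (1 : ℝ) ≤ N := (one_le_pow₀ hK1).trans hN
  set T := ⌊K ^ A⌋₊
  have hT : (T : ℝ) ≤ K ^ A := Nat.floor_le (by positivity)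
  have hT1 : 1 ≤ T := Nat.floor_pos.2 (one_le_pow₀ hK1)
  have hlength : 24 * (K ^ 4 * T) ^ 2 ≤ N :=
    calc 24 * (K ^ 4 * T) ^ 2 ≤ 24 * (K ^ 4 * K ^ A) ^ 2 := by gcongr
      _ = 24 * K ^ (2 * A + 8) := by ring
      _ ≤ K ^ (2 * A + 13) := const_mul_pow_le (j := 5) hK (by norm_num)
      _ ≤ N := hN
  have hquality : K ^ A / N ^ d ≤ 1 / (16 * (K ^ 4 * T)) := by
    rw [div_le_div_iff₀ (by positivity) (by positivity), one_mul]
    calc K ^ A * (16 * (K ^ 4 * T)) ≤ K ^ A * (16 * (K ^ 4 * K ^ A)) := by gcongr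
      _ = 16 * K ^ (2 * A + 4) := by ring
      _ ≤ K ^ (2 * A + 4 + 9) := const_mul_pow_le hK (by norm_num)
      _ ≤ N := hN
      _ ≤ N ^ d := le_self_pow₀ hN1 (by lia)
  obtain ⟨q, hq₁, hqK, hq⟩ := exists_norm_mul_le_of_forall_exists (one_le_pow₀ hK1) hT1 hlength
    hquality hH hcard fun h hh ↦ by
      obtain ⟨q, hq₁, hqK, hq⟩ := hclose h hh
      exact ⟨q, hq₁, Nat.le_floor hqK, hq⟩
  refine ⟨q, hq₁, ?_, ?_⟩
  · calc (q : ℝ) ≤ 2 * (K ^ 4 * K ^ A) * K ^ A := hqK.trans (by gcongr)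
      _ = 2 * K ^ (2 * A + 4) := by ring
      _ ≤ K ^ (2 * A + 4 + 1) := const_mul_pow_le hK (by norm_num)
  · calc _ ≤ 24 * (K ^ 4 * T) ^ 2 * (K ^ A / N ^ d) / N := hq
      _ ≤ 24 * (K ^ 4 * K ^ A) ^ 2 * (K ^ A / N ^ d) / N := by gcongr
      _ = 24 * K ^ (3 * A + 8) / N ^ (d + 1) := by field_simp; ring
      _ ≤ K ^ (3 * A + 8 + 5) / N ^ (d + 1) := by
        gcongr
        exact const_mul_pow_le hK (by norm_num)

theorem WeylInverse.exists_leading (hd : WeylInverse d) (hd₁ : 1 ≤ d) :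
    ∃ A : ℕ, ∀ K : ℝ, 2 ≤ K → ∀ N : ℕ, 1 ≤ N → ∀ Q : Polynomial ℝ, Q.natDegree ≤ d + 1 →
      N / K ≤ ‖weylSum Q N‖ → ∃ q : ℕ, 1 ≤ q ∧ q ≤ K ^ A ∧
        ‖((q * Q.coeff (d + 1) : ℝ) : UnitAddCircle)‖ ≤ K ^ A / N ^ (d + 1) := by
  obtain ⟨A, hA⟩ := hd.exists_card_differences hd₁
  refine ⟨(2 * A + 13) * (d + 1) + (3 * A + d + 13), fun K hK N hN Q hQ hlarge ↦ ?_⟩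
  have hK1 : 1 ≤ K := by linarith
  rcases lt_or_ge (N : ℝ) (K ^ (2 * A + 13)) with hsmall | hlong
  · refine ⟨1, le_rfl, by exact_mod_cast one_le_pow₀ hK1, ?_⟩
    refine (norm_unitAddCircle_le_half _).trans (one_half_lt_one.le.trans ?_)
    rw [one_le_div (by positivity)]
    calc (N : ℝ) ^ (d + 1) ≤ (K ^ (2 * A + 13)) ^ (d + 1) := by gcongr
      _ ≤ _ := by rw [← pow_mul]; exact pow_le_pow_right₀ hK1 (by lia)
  obtain ⟨H, hH, hcard, hclose⟩ := hA K hK N hN Q hQ hlarge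
  obtain ⟨q, hq₁, hqK, hq⟩ :=
    exists_norm_mul_le_pow_of_forall_exists hd₁ hK hlong hH hcard hclose
  refine ⟨q * (d + 1), Nat.mul_pos hq₁ d.succ_pos, ?_, ?_⟩
  · have hd2 : ((d + 1 : ℕ) : ℝ) ≤ 2 ^ d := by exact_mod_cast Nat.lt_two_pow_self
    calc ((q * (d + 1) : ℕ) : ℝ) ≤ (d + 1 : ℕ) * K ^ (2 * A + 5) := by
          rw [Nat.cast_mul, mul_comm]
          gcongr
      _ ≤ K ^ (2 * A + 5 + d) := const_mul_pow_le hK hd2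
      _ ≤ _ := pow_le_pow_right₀ hK1 (by lia)
  · rw [Nat.cast_mul, Nat.cast_succ, mul_assoc]
    exact hq.trans
      (div_le_div_of_nonneg_right (pow_le_pow_right₀ hK1 (by lia)) (by positivity))

end LeadingCoefficient

section LowerCoefficients

theorem exists_norm_sum_range_smul_le {𝕜 E : Type*} [NormedRing 𝕜] [SeminormedAddCommGroup E]
    [Module 𝕜 E] [IsBoundedSMul 𝕜 E] (g : ℕ → 𝕜) (f : ℕ → E) (N : ℕ) :
    ∃ n ≤ N, ‖∑ m ∈ range N, g m • f m‖ ≤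
      (‖g (N - 1)‖ + ∑ m ∈ range (N - 1), ‖g (m + 1) - g m‖) * ‖∑ m ∈ range n, f m‖ := by
  obtain ⟨n, hn, hmax⟩ := exists_max_image (range (N + 1)) (fun n ↦ ‖∑ m ∈ range n, f m‖)
    nonempty_range_add_one
  refine ⟨n, mem_range_succ_iff.1 hn, ?_⟩
  rw [sum_range_by_parts, add_mul, sum_mul]
  refine (norm_sub_le _ _).trans (add_le_add ?_ ((norm_sum_le _ _).trans (sum_le_sum ?_)))
  · refine (norm_smul_le _ _).trans ?_
    gcongr
    exact hmax N (self_mem_range_succ N)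
  · intro m hm
    refine (norm_smul_le _ _).trans ?_
    gcongr
    have := mem_range.1 hm
    exact hmax (m + 1) (mem_range.2 (by lia))

theorem exists_norm_weylSum_add_le (Q : Polynomial ℝ) (θ : ℝ) (d N : ℕ) :
    ∃ n ≤ N, ‖weylSum (Q + Polynomial.monomial d θ) N‖ ≤
      (1 + 2 * π * |θ| * N ^ d) * ‖weylSum Q n‖ := by
  obtain ⟨n, hn, hle⟩ := exists_norm_sum_range_smul_le (fun m : ℕ ↦ (𝐞 (θ * m ^ d) : ℂ))
    (fun m : ℕ ↦ (𝐞 (Q.eval (m : ℝ)) : ℂ)) N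
  have hvar : ∑ m ∈ range (N - 1), ‖(𝐞 (θ * (m + 1 : ℕ) ^ d) : ℂ) - 𝐞 (θ * m ^ d)‖ ≤
      2 * π * |θ| * N ^ d :=
    calc ∑ m ∈ range (N - 1), ‖(𝐞 (θ * (m + 1 : ℕ) ^ d) : ℂ) - 𝐞 (θ * m ^ d)‖
      _ ≤ ∑ m ∈ range (N - 1), 2 * π * |θ| * ((m + 1 : ℕ) ^ d - m ^ d) := by
        refine sum_le_sum fun m _ ↦ (norm_fourierChar_sub_fourierChar_le _ _).trans_eq ?_
        have hmono : (m : ℝ) ^ d ≤ (m + 1 : ℕ) ^ d := by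
          gcongr
          exact_mod_cast m.le_succ
        rw [← mul_sub, abs_mul, abs_of_nonneg (sub_nonneg.2 hmono), mul_assoc _ |θ|]
      _ = 2 * π * |θ| * ((N - 1 : ℕ) ^ d - (0 : ℕ) ^ d) := by
        rw [← mul_sum, sum_range_sub fun m : ℕ ↦ (m : ℝ) ^ d]
      _ ≤ 2 * π * |θ| * N ^ d := by
        gcongr
        refine (sub_le_self _ (by positivity)).trans ?_
        gcongr
        exact N.sub_le 1
  refine ⟨n, hn, ?_⟩
  calc ‖weylSum (Q + Polynomial.monomial d θ) N‖
    _ = ‖∑ m ∈ range N, (𝐞 (θ * m ^ d) : ℂ) • (𝐞 (Q.eval (m : ℝ)) : ℂ)‖ := by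
      simp only [weylSum, Polynomial.eval_add, Polynomial.eval_monomial, AddChar.map_add_eq_mul,
        Circle.coe_mul, smul_eq_mul, mul_comm]
    _ ≤ _ := hle
    _ ≤ (1 + 2 * π * |θ| * N ^ d) * ‖weylSum Q n‖ := by
      rw [Circle.norm_coe]
      gcongr
      exact le_rfl

theorem stdAddChar_intCast_eq_fourierChar {q : ℕ} [NeZero q] (j : ℤ) :
    ZMod.stdAddChar (j : ZMod q) = (𝐞 (j / q) : ℂ) := by
  rw [ZMod.stdAddChar_coe, Real.fourierChar_apply]
  push_cast
  ring_nf

theorem exists_norm_sum_le_mul_norm_sum_stdAddChar {ι : Type*} {q : ℕ} [NeZero q]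
    {g : ZMod q → ℂ} (hg : ∀ r, ‖g r‖ ≤ 1) (s : Finset ι) (φ : ι → ZMod q) (f : ι → ℂ) :
    ∃ a : ZMod q, ‖∑ i ∈ s, g (φ i) * f i‖ ≤
      q * ‖∑ i ∈ s, ZMod.stdAddChar (a * φ i) * f i‖ := by
  obtain ⟨a, -, hmax⟩ := exists_max_image univ
    (fun a : ZMod q ↦ ‖∑ i ∈ s, ZMod.stdAddChar (a * φ i) * f i‖) univ_nonempty
  refine ⟨a, ?_⟩
  have hdft (b : ZMod q) : ‖ZMod.dft g b‖ ≤ q := by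
    rw [ZMod.dft_apply]
    refine (norm_sum_le_of_le univ (n := fun _ ↦ 1) fun j _ ↦ ?_).trans_eq (by simp)
    rw [norm_smul, AddChar.norm_apply, one_mul]
    exact hg j
  have hexpand : ∑ i ∈ s, g (φ i) * f i =
      (q : ℂ)⁻¹ * ∑ b, ZMod.dft g b * ∑ i ∈ s, ZMod.stdAddChar (b * φ i) * f i := by
    have hinv (r : ZMod q) :
        g r = (q : ℂ)⁻¹ * ∑ b, ZMod.stdAddChar (b * r) * ZMod.dft g b := by
      simpa only [LinearEquiv.symm_apply_apply, smul_eq_mul] using ZMod.invDFT_apply (ZMod.dft g) r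
    simp only [hinv, mul_sum, sum_mul]
    rw [sum_comm]
    exact sum_congr rfl fun b _ ↦ sum_congr rfl fun i _ ↦ by ring
  have hq : (q : ℝ) ≠ 0 := NeZero.ne _
  calc ‖∑ i ∈ s, g (φ i) * f i‖
    _ ≤ (q : ℝ)⁻¹ * ∑ _b : ZMod q, q * ‖∑ i ∈ s, ZMod.stdAddChar (a * φ i) * f i‖ := by
      rw [hexpand, norm_mul, norm_inv, Complex.norm_natCast]
      gcongr
      refine norm_sum_le_of_le _ fun b hb ↦ ?_
      rw [norm_mul]
      exact mul_le_mul (hdft b) (hmax b hb) (norm_nonneg _) (Nat.cast_nonneg q)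
    _ = q * ‖∑ i ∈ s, ZMod.stdAddChar (a * φ i) * f i‖ := by
      rw [sum_const, card_univ, ZMod.card, nsmul_eq_mul, inv_mul_cancel_left₀ hq]

/-- Completion: the rational phase `p m ^ d / q` only depends on `m` modulo `q`. -/
theorem exists_norm_weylSum_add_rat_le (Q : Polynomial ℝ) (p : ℤ) {q : ℕ} (hq : q ≠ 0) (d N : ℕ) :
    ∃ a : ℕ, ‖weylSum (Q + Polynomial.monomial d (p / q : ℝ)) N‖ ≤
      q * ‖weylSum (Q + Polynomial.monomial 1 (a / q : ℝ)) N‖ := by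
  have : NeZero q := ⟨hq⟩
  obtain ⟨a, ha⟩ := exists_norm_sum_le_mul_norm_sum_stdAddChar
    (g := fun r : ZMod q ↦ ZMod.stdAddChar ((p : ZMod q) * r ^ d))
    (fun r ↦ (AddChar.norm_apply _ _).le)
    (range N) (fun m : ℕ ↦ (m : ZMod q)) fun m ↦ (𝐞 (Q.eval (m : ℝ)) : ℂ)
  have hphase (c : ℤ) (k m : ℕ) :
      (𝐞 ((Q + Polynomial.monomial k (c / q : ℝ)).eval (m : ℝ)) : ℂ) =
        ZMod.stdAddChar ((c : ZMod q) * (m : ZMod q) ^ k) * 𝐞 (Q.eval (m : ℝ)) := by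
    have hcast : (c : ZMod q) * (m : ZMod q) ^ k = (c * m ^ k : ℤ) := by push_cast; rfl
    rw [hcast, stdAddChar_intCast_eq_fourierChar, Polynomial.eval_add, Polynomial.eval_monomial,
      add_comm, AddChar.map_add_eq_mul, Circle.coe_mul, div_mul_eq_mul_div, Int.cast_mul,
      Int.cast_pow, Int.cast_natCast]
  have hval : (a.val : ZMod q) = a := ZMod.natCast_zmod_val a
  refine ⟨a.val, ?_⟩
  simp only [weylSum, ← Int.cast_natCast (R := ℝ) a.val, hphase]
  simpa only [pow_one, Int.cast_natCast, hval] using ha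

theorem exists_norm_weylSum_le_norm_weylSum_erase (Q : Polynomial ℝ) (d N : ℕ) {q : ℕ}
    (hq : 1 ≤ q) : ∃ a : ℕ, ∃ n ≤ N, ‖weylSum Q N‖ ≤
      q * (1 + 2 * π * ‖((q * Q.coeff d : ℝ) : UnitAddCircle)‖ * N ^ d) *
        ‖weylSum (Q.erase d + Polynomial.monomial 1 (a / q : ℝ)) n‖ := by
  set p := round (q * Q.coeff d : ℝ)
  set θ := Q.coeff d - p / q with hθ
  have hq' : (1 : ℝ) ≤ q := by exact_mod_cast hq
  have hq0 : (q : ℝ) ≠ 0 := by positivity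
  have hθle : |θ| ≤ ‖((q * Q.coeff d : ℝ) : UnitAddCircle)‖ := by
    have hmul : q * Q.coeff d - p = q * θ := by rw [hθ]; field_simp
    rw [UnitAddCircle.norm_eq, hmul, abs_mul, Nat.abs_cast]
    exact le_mul_of_one_le_left (abs_nonneg θ) hq'
  have hsplit : Q.erase d + Polynomial.monomial d (p / q : ℝ) + Polynomial.monomial d θ = Q := by
    rw [add_assoc, ← map_add, hθ, add_sub_cancel, add_comm, Polynomial.monomial_add_erase]
  obtain ⟨n, hn, hsmooth⟩ := exists_norm_weylSum_add_le
    (Q.erase d + Polynomial.monomial d (p / q : ℝ)) θ d N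
  obtain ⟨a, hrat⟩ := exists_norm_weylSum_add_rat_le (Q.erase d) p (by lia : q ≠ 0) d n
  rw [hsplit] at hsmooth
  refine ⟨a, n, hn, ?_⟩
  set W := ‖weylSum (Q.erase d + Polynomial.monomial 1 (a / q : ℝ)) n‖
  calc ‖weylSum Q N‖
    _ ≤ (1 + 2 * π * ‖((q * Q.coeff d : ℝ) : UnitAddCircle)‖ * N ^ d) * (q * W) :=
      hsmooth.trans (by gcongr)
    _ = _ := by ring

theorem WeylInverse.exists_lower_degree {d : ℕ} (hd : WeylInverse d) (hd₁ : 1 ≤ d) :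
    ∃ A : ℕ, ∀ K : ℝ, 2 ≤ K → ∀ N : ℕ, 1 ≤ N → ∀ Q : Polynomial ℝ, Q.natDegree ≤ d + 1 →
      N / K ≤ ‖weylSum Q N‖ → ∃ q : ℕ, 1 ≤ q ∧ q ≤ K ^ A ∧
        ‖((q * Q.coeff (d + 1) : ℝ) : UnitAddCircle)‖ ≤ K ^ A / N ^ (d + 1) ∧
        ∃ a : ℕ, ∃ n ≤ N, N / K ^ A ≤
          ‖weylSum (Q.erase (d + 1) + Polynomial.monomial 1 (a / q : ℝ)) n‖ := by
  obtain ⟨A, hA⟩ := hd.exists_leading hd₁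
  refine ⟨2 * A + 4 + 1, fun K hK N hN Q hQ hlarge ↦ ?_⟩
  have hK1 : 1 ≤ K := by linarith
  have hpow : K ^ A ≤ K ^ (2 * A + 4 + 1) := pow_le_pow_right₀ hK1 (by lia)
  obtain ⟨q, hq₁, hqK, hq⟩ := hA K hK N hN Q hQ hlarge
  obtain ⟨a, n, hn, hle⟩ := exists_norm_weylSum_le_norm_weylSum_erase Q (d + 1) N hq₁
  refine ⟨q, hq₁, hqK.trans hpow, hq.trans (by gcongr), a, n, hn, ?_⟩
  set W := ‖weylSum (Q.erase (d + 1) + Polynomial.monomial 1 (a / q : ℝ)) n‖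
  have hδ : ‖((q * Q.coeff (d + 1) : ℝ) : UnitAddCircle)‖ * N ^ (d + 1) ≤ K ^ A :=
    (le_div_iff₀ (by positivity)).1 hq
  have hfactor : q * (1 + 2 * π * ‖((q * Q.coeff (d + 1) : ℝ) : UnitAddCircle)‖ * N ^ (d + 1)) ≤
      K ^ (2 * A + 4) :=
    calc _ ≤ K ^ A * (K ^ A + 2 * 4 * K ^ A) := by
          rw [mul_assoc (2 * π)]
          gcongr
          exacts [one_le_pow₀ hK1, pi_le_four]
      _ = 9 * K ^ (2 * A) := by ring
      _ ≤ K ^ (2 * A + 4) := const_mul_pow_le hK (by norm_num)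
  have hNW : N / K ≤ K ^ (2 * A + 4) * W := hlarge.trans (hle.trans (by gcongr))
  rw [div_le_iff₀ (by positivity)] at hNW ⊢
  rw [pow_succ]
  linarith

theorem natDegree_erase_add_monomial_le {R : Type*} [Semiring R] {Q : Polynomial R} {d : ℕ}
    (hQ : Q.natDegree ≤ d + 1) (hd : 1 ≤ d) (c : R) :
    (Q.erase (d + 1) + Polynomial.monomial 1 c).natDegree ≤ d := by
  refine Polynomial.natDegree_add_le_of_degree_le ?_ ((Polynomial.natDegree_monomial_le c).trans hd)
  refine Polynomial.natDegree_le_iff_coeff_eq_zero.2 fun i hi ↦ ?_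
  rw [Polynomial.coeff_erase]
  split_ifs with h
  · rfl
  · exact Polynomial.coeff_eq_zero_of_natDegree_lt (by lia)

theorem norm_mul_coeff_le_of_erase_add_monomial (Q : Polynomial ℝ) {d i : ℕ} (hi : i ≠ d) {q : ℕ}
    (hq : q ≠ 0) (a r : ℕ) :
    ‖(((r * q : ℕ) * Q.coeff i : ℝ) : UnitAddCircle)‖ ≤
      q * ‖((r * (Q.erase d + Polynomial.monomial 1 (a / q : ℝ)).coeff i : ℝ) :
        UnitAddCircle)‖ := by
  have hq0 : (q : ℝ) ≠ 0 := Nat.cast_ne_zero.2 hq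
  have hcoeff : (r * q : ℕ) * Q.coeff i + (if i = 1 then r * a else 0 : ℤ) =
      q * (r * (Q.erase d + Polynomial.monomial 1 (a / q : ℝ)).coeff i) := by
    rw [Polynomial.coeff_add, Polynomial.coeff_erase, if_neg hi, Polynomial.coeff_monomial]
    rcases eq_or_ne i 1 with rfl | hi1
    · rw [if_pos rfl, if_pos rfl]
      push_cast
      field_simp
    · rw [if_neg hi1, if_neg hi1.symm]
      push_cast
      ring
  rw [← coe_add_intCast_unitAddCircle _ (if i = 1 then r * a else 0), hcoeff]
  exact norm_natCast_mul_unitAddCircle_le _ _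

theorem WeylInverse.succ {d : ℕ} (hd : WeylInverse d) (hd₁ : 1 ≤ d) : WeylInverse (d + 1) := by
  obtain ⟨B, hB⟩ := hd.exists_lower_degree hd₁
  obtain ⟨A, hA⟩ := hd
  refine ⟨B + (B + 1) * A + (B + 1) * d, fun K hK N hN Q hQ hlarge ↦ ?_⟩
  have hK1 : 1 ≤ K := by linarith
  obtain ⟨q, hq₁, hqK, hq, a, n, hn, hW⟩ := hB K hK N hN Q hQ hlarge
  set R := Q.erase (d + 1) + Polynomial.monomial 1 (a / q : ℝ)
  have hW' : N / K ^ (B + 1) ≤ ‖weylSum R n‖ := le_trans (by gcongr; exact B.le_succ) hW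
  have hn' : N / K ^ (B + 1) ≤ n := hW'.trans (norm_weylSum_le _ _)
  have hn0 : (0 : ℝ) < n := lt_of_lt_of_le (by positivity) hn'
  obtain ⟨r, hr₁, hrK, hr⟩ := hA (K ^ (B + 1)) (hK.trans (le_self_pow₀ hK1 B.succ_ne_zero)) n
    (by exact_mod_cast hn0) R (natDegree_erase_add_monomial_le hQ hd₁ _)
    (le_trans (by gcongr) hW')
  rw [← pow_mul] at hrK hr
  refine ⟨r * q, Nat.mul_pos hr₁ hq₁, ?_, fun i hi₁ hi ↦ ?_⟩
  · calc ((r * q : ℕ) : ℝ) ≤ K ^ ((B + 1) * A) * K ^ B := by rw [Nat.cast_mul]; gcongr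
      _ = K ^ (B + (B + 1) * A) := by rw [← pow_add, add_comm]
      _ ≤ _ := pow_le_pow_right₀ hK1 (Nat.le_add_right _ _)
  rcases hi.eq_or_lt with rfl | hi
  · calc _ ≤ r * ‖((q * Q.coeff (d + 1) : ℝ) : UnitAddCircle)‖ := by
          rw [Nat.cast_mul, mul_assoc]
          exact norm_natCast_mul_unitAddCircle_le _ _
      _ ≤ K ^ ((B + 1) * A) * (K ^ B / N ^ (d + 1)) := by gcongr
      _ = K ^ (B + (B + 1) * A) / N ^ (d + 1) := by
        rw [← mul_div_assoc, ← pow_add, add_comm ((B + 1) * A)]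
      _ ≤ _ := div_le_div_of_nonneg_right (pow_le_pow_right₀ hK1 (Nat.le_add_right _ _))
        (by positivity)
  · calc _ ≤ q * ‖((r * R.coeff i : ℝ) : UnitAddCircle)‖ :=
          norm_mul_coeff_le_of_erase_add_monomial Q hi.ne (by lia) a r
      _ ≤ K ^ B * (K ^ ((B + 1) * A) / (N / K ^ (B + 1)) ^ i) := by
        gcongr
        exact (hr i hi₁ (Nat.le_of_lt_succ hi)).trans (by gcongr)
      _ = K ^ (B + (B + 1) * A + (B + 1) * i) / N ^ i := by
        rw [div_pow, ← pow_mul, div_div_eq_mul_div, ← mul_div_assoc, pow_add, pow_add, mul_assoc]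
      _ ≤ _ := by gcongr; exact Nat.le_of_lt_succ hi

theorem weylInverse {k : ℕ} (hk : 1 ≤ k) : WeylInverse k :=
  Nat.le_induction weylInverse_one (fun _ hd₁ hd ↦ hd.succ hd₁) k hk

end LowerCoefficients

section Discrepancy

theorem bernoulliFun_two_fract_le (x : ℝ) :
    bernoulliFun 2 (Int.fract x) ≤ bernoulliFun 2 x := by
  have hfract₀ := Int.fract_nonneg x
  have hfract₁ := Int.fract_lt_one x
  have hdiff : bernoulliFun 2 x - bernoulliFun 2 (Int.fract x) =
      ⌊x⌋ * (2 * Int.fract x + ⌊x⌋ - 1) := by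
    rw [bernoulliFun_two, bernoulliFun_two, Int.fract]
    ring
  rw [← sub_nonneg, hdiff]
  rcases lt_trichotomy ⌊x⌋ 0 with hneg | hzero | hpos
  · have : (⌊x⌋ : ℝ) ≤ -1 := by exact_mod_cast Int.le_sub_one_of_lt hneg
    exact mul_nonneg_of_nonpos_of_nonpos (by linarith) (by linarith)
  · rw [hzero, Int.cast_zero, zero_mul]
  · have : (1 : ℝ) ≤ ⌊x⌋ := by exact_mod_cast hpos
    exact mul_nonneg (by linarith) (by linarith)

theorem bernoulliFun_two_fract_add_le (x t : ℝ) :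
    bernoulliFun 2 (Int.fract (x + t)) ≤
      bernoulliFun 2 (Int.fract x) + 2 * t * bernoulliFun 1 (Int.fract x) + t ^ 2 := by
  have hfract : Int.fract (x + t) = Int.fract (Int.fract x + t) :=
    Int.fract_eq_fract.2 ⟨⌊x⌋, by rw [Int.fract]; ring⟩
  rw [hfract]
  refine (bernoulliFun_two_fract_le _).trans_eq ?_
  rw [bernoulliFun_two, bernoulliFun_two, bernoulliFun_one]
  ring

theorem hasSum_cos_bernoulliFun_two_fract (x : ℝ) :
    HasSum (fun n : ℕ ↦ 1 / (n : ℝ) ^ 2 * cos (2 * π * n * x))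
      (π ^ 2 * bernoulliFun 2 (Int.fract x)) := by
  convert hasSum_one_div_nat_pow_mul_cos one_ne_zero
    ⟨Int.fract_nonneg x, (Int.fract_lt_one x).le⟩ using 1
  · ext n
    have hperiod : 2 * π * n * x = 2 * π * n * Int.fract x + ((n * ⌊x⌋ : ℤ) : ℝ) * (2 * π) := by
      rw [Int.fract]
      push_cast
      ring
    rw [hperiod, cos_add_int_mul_two_pi, mul_one]
  · rw [mul_one, ← bernoulliFun, Nat.factorial_two]
    push_cast
    ring

theorem summable_sqrt_div_sq : Summable fun n : ℕ ↦ √n / (n : ℝ) ^ 2 := by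
  refine (summable_nat_rpow_inv (p := 3 / 2) |>.2 (by norm_num)).congr fun n ↦ ?_
  rcases n.eq_zero_or_pos with rfl | hn
  · simp
  have hn0 : (0 : ℝ) < n := by exact_mod_cast hn
  rw [sqrt_eq_rpow, ← rpow_natCast, ← rpow_sub hn0, ← rpow_neg hn0.le]
  norm_num

variable {ι : Type*} {s : Finset ι} {x : ι → ℝ}

theorem abs_sum_bernoulliFun_two_fract_le {E : ℝ}
    (hE : ∀ n : ℕ, 1 ≤ n → ‖∑ i ∈ s, (𝐞 (n * x i) : ℂ)‖ ≤ E * √n) :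
    |∑ i ∈ s, bernoulliFun 2 (Int.fract (x i))| ≤ E * ∑' n : ℕ, √n / (n : ℝ) ^ 2 := by
  have hcos (n : ℕ) : |∑ i ∈ s, cos (2 * π * n * x i)| ≤ ‖∑ i ∈ s, (𝐞 (n * x i) : ℂ)‖ := by
    have hre (i : ι) : cos (2 * π * n * x i) = (𝐞 (n * x i) : ℂ).re := by
      rw [Real.fourierChar_apply, Complex.exp_ofReal_mul_I_re, mul_assoc]
    simp only [hre, ← Complex.re_sum]
    exact Complex.abs_re_le_norm _
  have hsum : HasSum (fun n : ℕ ↦ 1 / (n : ℝ) ^ 2 * ∑ i ∈ s, cos (2 * π * n * x i))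
      (π ^ 2 * ∑ i ∈ s, bernoulliFun 2 (Int.fract (x i))) := by
    simp only [mul_sum]
    exact hasSum_sum fun i _ ↦ hasSum_cos_bernoulliFun_two_fract (x i)
  have hbound := tsum_of_norm_bounded (summable_sqrt_div_sq.hasSum.mul_left E) fun n ↦
    show ‖1 / (n : ℝ) ^ 2 * ∑ i ∈ s, cos (2 * π * n * x i)‖ ≤ _ by
      rcases n.eq_zero_or_pos with rfl | hn
      · simp
      rw [norm_mul, norm_of_nonneg (by positivity), one_div_mul_eq_div, ← mul_div_assoc]
      gcongr
      exact (hcos n).trans (hE n hn)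
  have hpi : 1 ≤ π := one_le_two.trans two_le_pi
  rw [hsum.tsum_eq, norm_mul, norm_of_nonneg (sq_nonneg π)] at hbound
  exact (le_mul_of_one_le_left (norm_nonneg _) (one_le_pow₀ hpi)).trans hbound

/-- By convexity, difference quotients of the second Bernoulli function control the first. -/
theorem abs_sum_bernoulliFun_one_fract_le {F η : ℝ} (hη : 0 < η)
    (hF : ∀ y, |∑ i ∈ s, bernoulliFun 2 (Int.fract (x i + y))| ≤ F) :
    |∑ i ∈ s, bernoulliFun 1 (Int.fract (x i))| ≤ η * #s / 2 + F / η := by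
  have hconvex (t : ℝ) :
      -(2 * F) ≤ 2 * t * ∑ i ∈ s, bernoulliFun 1 (Int.fract (x i)) + #s * t ^ 2 := by
    have hsum := sum_le_sum fun i (_ : i ∈ s) ↦ bernoulliFun_two_fract_add_le (x i) t
    rw [sum_add_distrib, sum_add_distrib, ← mul_sum, sum_const, nsmul_eq_mul] at hsum
    have hzero := hF 0
    simp only [add_zero] at hzero
    linarith [(abs_le.1 (hF t)).1, (abs_le.1 hzero).2]
  have hpos := hconvex η
  have hneg := hconvex (-η)
  have hcommon : η * #s / 2 + F / η = (#s * η ^ 2 + 2 * F) / (2 * η) := by field_simp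
  rw [hcommon, le_div_iff₀ (by positivity), ← abs_of_pos (by positivity : 0 < 2 * η), ← abs_mul]
  exact abs_le.2 ⟨by linarith, by linarith⟩

theorem ite_fract_lt_eq {c : ℝ} (hc₀ : 0 ≤ c) (hc₁ : c ≤ 1) (x : ℝ) :
    (if Int.fract x < c then 1 else 0 : ℝ) =
      c + (bernoulliFun 1 (Int.fract (x - c)) - bernoulliFun 1 (Int.fract x)) := by
  have hfract₀ := Int.fract_nonneg x
  have hfract₁ := Int.fract_lt_one x
  have hfloor := Int.fract_add_floor x
  rw [bernoulliFun_one, bernoulliFun_one]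
  split_ifs with h
  · have : Int.fract (x - c) = Int.fract x - c + 1 :=
      Int.fract_eq_iff.2 ⟨by linarith, by linarith, ⌊x⌋ - 1, by push_cast; linarith⟩
    rw [this]
    ring
  · have : Int.fract (x - c) = Int.fract x - c :=
      Int.fract_eq_iff.2 ⟨by linarith, by linarith, ⌊x⌋, by linarith⟩
    rw [this]
    ring

theorem norm_sum_fourierChar_mul_add (s : Finset ι) (x : ι → ℝ) (n y : ℝ) :
    ‖∑ i ∈ s, (𝐞 (n * (x i + y)) : ℂ)‖ = ‖∑ i ∈ s, (𝐞 (n * x i) : ℂ)‖ := by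
  simp only [mul_add, AddChar.map_add_eq_mul, Circle.coe_mul]
  rw [← sum_mul, norm_mul, Circle.norm_coe, mul_one]

theorem abs_card_fract_lt_sub_le {E η c : ℝ} (hη : 0 < η)
    (hE : ∀ n : ℕ, 1 ≤ n → ‖∑ i ∈ s, (𝐞 (n * x i) : ℂ)‖ ≤ E * √n) (hc₀ : 0 ≤ c) (hc₁ : c ≤ 1) :
    |(#{i ∈ s | Int.fract (x i) < c} : ℝ) - c * #s| ≤
      η * #s + 2 * (E * ∑' n : ℕ, √n / (n : ℝ) ^ 2) / η := by
  have hsaw (y : ℝ) := abs_sum_bernoulliFun_one_fract_le (s := s) (x := fun i ↦ x i + y) hη fun z ↦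
    abs_sum_bernoulliFun_two_fract_le fun n hn ↦ by
      simp only [norm_sum_fourierChar_mul_add]
      exact hE n hn
  have hcard : (#{i ∈ s | Int.fract (x i) < c} : ℝ) - c * #s =
      ∑ i ∈ s, bernoulliFun 1 (Int.fract (x i + -c)) -
        ∑ i ∈ s, bernoulliFun 1 (Int.fract (x i + 0)) := by
    simp only [card_filter, Nat.cast_sum, Nat.cast_ite, Nat.cast_one, Nat.cast_zero,
      ite_fract_lt_eq hc₀ hc₁, sum_add_distrib, sum_sub_distrib, sum_const, nsmul_eq_mul,
      add_zero, ← sub_eq_add_neg]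
    ring
  rw [hcard]
  refine (abs_sub _ _).trans ((add_le_add (hsaw (-c)) (hsaw 0)).trans_eq ?_)
  ring

theorem abs_card_fract_lt_sub_le_of_forall_le {J c : ℝ} (hJ : 1 ≤ J)
    (hx : ∀ n : ℕ, 1 ≤ n → n ≤ J ^ 4 → ‖∑ i ∈ s, (𝐞 (n * x i) : ℂ)‖ ≤ #s / J ^ 4)
    (hc₀ : 0 ≤ c) (hc₁ : c ≤ 1) :
    |(#{i ∈ s | Int.fract (x i) < c} : ℝ) - c * #s| ≤
      (1 + 2 * ∑' n : ℕ, √n / (n : ℝ) ^ 2) * (#s / J) := by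
  have hJ0 : 0 < J := by linarith
  have hE (n : ℕ) (hn : 1 ≤ n) : ‖∑ i ∈ s, (𝐞 (n * x i) : ℂ)‖ ≤ #s / J ^ 2 * √n := by
    rcases le_or_gt (n : ℝ) (J ^ 4) with hnJ | hnJ
    · calc _ ≤ #s / J ^ 4 := hx n hn hnJ
        _ ≤ #s / J ^ 2 := by gcongr; norm_num
        _ ≤ _ := le_mul_of_one_le_right (by positivity) (one_le_sqrt.2 (by exact_mod_cast hn))
    · have hsqrt : J ^ 2 ≤ √n := le_sqrt_of_sq_le (by rw [← pow_mul]; exact hnJ.le)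
      calc _ ≤ (#s : ℝ) := norm_sum_fourierChar_le _ _
        _ = #s / J ^ 2 * J ^ 2 := by field_simp
        _ ≤ _ := by gcongr
  refine (abs_card_fract_lt_sub_le (inv_pos.2 hJ0) hE hc₀ hc₁).trans_eq ?_
  field_simp

end Discrepancy

section Diophantine

theorem exists_forall_inv_pow_lt_norm_of_not_isLiouvilleReal {α : ℝ} (hα : ¬ IsLiouvilleReal α) :
    ∃ n : ℕ, ∀ q : ℕ, 1 ≤ q → ((2 * q : ℝ) ^ n)⁻¹ < ‖((q * α : ℝ) : UnitAddCircle)‖ := by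
  simp only [IsLiouvilleReal, not_forall, not_exists, not_and, not_le] at hα
  obtain ⟨n, hn⟩ := hα
  refine ⟨n, fun q hq ↦ ?_⟩
  have hq1 : (1 : ℝ) ≤ q := by exact_mod_cast hq
  have hlt := hn (2 * round (q * α : ℝ)) (2 * q) (by lia)
  push_cast at hlt
  rw [zpow_neg, zpow_natCast, mul_div_mul_left _ _ two_ne_zero] at hlt
  refine hlt.trans_le ?_
  calc |α - round (q * α : ℝ) / q|
    _ ≤ q * |α - round (q * α : ℝ) / q| := le_mul_of_one_le_left (abs_nonneg _) hq1
    _ = ‖((q * α : ℝ) : UnitAddCircle)‖ := by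
      rw [UnitAddCircle.norm_eq, ← Nat.abs_cast q, ← abs_mul, Nat.abs_cast]
      congr 1
      field_simp

theorem WeylInverse.exists_power_saving {k n : ℕ} {α : ℝ} (hk : WeylInverse k) (hk₁ : 1 ≤ k)
    (hα : ∀ q : ℕ, 1 ≤ q → ((2 * q : ℝ) ^ n)⁻¹ < ‖((q * α : ℝ) : UnitAddCircle)‖) :
    ∃ G : ℕ, ∀ K : ℝ, 2 ≤ K → ∀ N : ℕ, K ^ G ≤ N → ∀ h : ℕ, 1 ≤ h → h ≤ K →
      ∀ Q : Polynomial ℝ, Q.natDegree ≤ k → Q.coeff 1 = h * α → ‖weylSum Q N‖ ≤ N / K := by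
  obtain ⟨A, hA⟩ := hk
  refine ⟨A + (A + 2) * n, fun K hK N hN h hh hhK Q hQ hQα ↦ ?_⟩
  have hN0 : (0 : ℝ) < N := lt_of_lt_of_le (by positivity) hN
  by_contra! hlarge
  obtain ⟨q, hq, hqK, hqQ⟩ := hA K hK N (by exact_mod_cast hN0) Q hQ hlarge.le
  have hupper := hqQ 1 le_rfl hk₁
  have hlower := hα (q * h) (Nat.mul_pos hq hh)
  rw [pow_one, hQα, ← mul_assoc] at hupper
  push_cast at hlower
  have hdenom : 2 * (q * h : ℝ) ≤ K ^ (A + 2) :=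
    calc 2 * (q * h : ℝ) ≤ K * (K ^ A * K) := by gcongr
      _ = K ^ (A + 2) := by ring
  have hN' : K ^ A * (2 * (q * h : ℝ)) ^ n ≤ N :=
    calc K ^ A * (2 * (q * h : ℝ)) ^ n ≤ K ^ A * (K ^ (A + 2)) ^ n := by gcongr
      _ = K ^ (A + (A + 2) * n) := by rw [← pow_mul, ← pow_add]
      _ ≤ N := hN
  refine (hlower.trans_le hupper).not_ge ?_
  rwa [← one_div, div_le_div_iff₀ hN0 (by positivity), one_mul]

end Diophantine

section Counting

theorem natCast_dvd_floor_iff {d : ℕ} (hd : 0 < d) (y : ℝ) :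
    (d : ℤ) ∣ ⌊y⌋ ↔ Int.fract (y / d) < 1 / d := by
  have hd0 : (0 : ℝ) < d := by exact_mod_cast hd
  have hfract₁ := Int.fract_lt_one y
  constructor
  · rintro ⟨k, hk⟩
    have hfract : Int.fract (y / d) = Int.fract y / d := by
      refine Int.fract_eq_iff.2 ⟨by positivity, (div_lt_one hd0).2 ?_, k, ?_⟩
      · exact hfract₁.trans_le (by exact_mod_cast hd)
      · rw [← sub_div, Int.self_sub_fract, hk, Int.cast_mul, Int.cast_natCast,
          mul_div_cancel_left₀ _ hd0.ne']
    rw [hfract]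
    gcongr
  · intro hlt
    refine ⟨⌊y / d⌋, Int.floor_eq_iff.2 ?_⟩
    have hfloor : (d : ℝ) * ⌊y / d⌋ = y - Int.fract (y / d) * d := by
      rw [Int.fract]
      field_simp
      ring
    have hnonneg := mul_nonneg (Int.fract_nonneg (y / d)) hd0.le
    rw [lt_div_iff₀ hd0] at hlt
    push_cast
    exact ⟨by linarith, by linarith⟩

theorem AP_eq_image (P : Polynomial ℝ) {d : ℕ} (hd : 0 < d) (X : ℝ) :
    AP P d X =
      image (d * ·) {m ∈ Icc 1 ⌊X / d⌋₊ | Int.fract (P.eval ((d * m : ℕ) : ℝ) / d) < 1 / d} := by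
  ext x
  simp only [AP, mem_filter, mem_image, mem_Icc, Nat.floor_div_natCast, Nat.le_div_iff_mul_le hd,
    ← natCast_dvd_floor_iff hd, Int.natCast_dvd_natCast]
  constructor
  · rintro ⟨⟨hx₁, hxX⟩, ⟨m, rfl⟩, hP⟩
    exact ⟨m, ⟨⟨Nat.pos_of_mul_pos_left hx₁, by rwa [mul_comm]⟩, hP⟩, rfl⟩
  · rintro ⟨m, ⟨⟨hm₁, hmX⟩, hP⟩, rfl⟩
    exact ⟨⟨Nat.mul_pos hd hm₁, by rwa [mul_comm]⟩, Dvd.intro _ rfl, hP⟩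

theorem abs_card_AP_sub_le (P : Polynomial ℝ) {d : ℕ} (hd : 0 < d) (X : ℝ) :
    |(#(AP P d X) : ℝ) -
      #{m ∈ range (⌊X / d⌋₊ + 1) | Int.fract (P.eval ((d * m : ℕ) : ℝ) / d) < 1 / d}| ≤ 1 := by
  rw [AP_eq_image P hd, card_image_of_injective _ (mul_right_injective₀ hd.ne')]
  set p : ℕ → Prop := fun m ↦ Int.fract (P.eval ((d * m : ℕ) : ℝ) / d) < 1 / d
  have hrange : range (⌊X / d⌋₊ + 1) = insert 0 (Icc 1 ⌊X / d⌋₊) := by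
    ext m
    simp only [mem_range, mem_insert, mem_Icc]
    lia
  have hle : #{m ∈ Icc 1 ⌊X / d⌋₊ | p m} ≤ #{m ∈ range (⌊X / d⌋₊ + 1) | p m} :=
    card_le_card (filter_subset_filter _ (hrange ▸ subset_insert _ _))
  have hge : #{m ∈ range (⌊X / d⌋₊ + 1) | p m} ≤ #{m ∈ Icc 1 ⌊X / d⌋₊ | p m} + 1 := by
    rw [hrange, filter_insert]
    split_ifs
    exacts [card_insert_le _ _, Nat.le_succ _]
  have hle' : (#{m ∈ Icc 1 ⌊X / d⌋₊ | p m} : ℝ) ≤ #{m ∈ range (⌊X / d⌋₊ + 1) | p m} := by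
    exact_mod_cast hle
  have hge' : (#{m ∈ range (⌊X / d⌋₊ + 1) | p m} : ℝ) ≤ #{m ∈ Icc 1 ⌊X / d⌋₊ | p m} + 1 := by
    exact_mod_cast hge
  exact abs_le.2 ⟨by linarith, by linarith⟩

end Counting

section Equidistribution

theorem exists_norm_sum_fourierChar_eval_mul_div_le {P : Polynomial ℝ}
    (hP : ¬ IsLiouvilleReal (P.coeff 1)) :
    ∃ G : ℕ, ∀ K : ℝ, 2 ≤ K → ∀ N : ℕ, K ^ G ≤ N → ∀ h : ℕ, 1 ≤ h → h ≤ K → ∀ d : ℕ, 0 < d →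
      ‖∑ m ∈ range N, (𝐞 (h * (P.eval ((d * m : ℕ) : ℝ) / d)) : ℂ)‖ ≤ N / K := by
  obtain ⟨n, hn⟩ := exists_forall_inv_pow_lt_norm_of_not_isLiouvilleReal hP
  obtain ⟨G, hG⟩ := (weylInverse P.natDegree.succ_pos).exists_power_saving P.natDegree.succ_pos hn
  refine ⟨G, fun K hK N hN h hh hhK d hd ↦ ?_⟩
  set Q := Polynomial.C (h / d : ℝ) * P.comp (Polynomial.C (d : ℝ) * Polynomial.X) with hQ
  have heval (m : ℕ) : Q.eval (m : ℝ) = h * (P.eval ((d * m : ℕ) : ℝ) / d) := by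
    simp only [hQ, Polynomial.eval_mul, Polynomial.eval_C, Polynomial.eval_comp,
      Polynomial.eval_X, Nat.cast_mul, mul_comm_div]
  have hdegree : Q.natDegree ≤ P.natDegree + 1 :=
    calc Q.natDegree ≤ (P.comp (Polynomial.C (d : ℝ) * Polynomial.X)).natDegree :=
          Polynomial.natDegree_C_mul_le _ _
      _ ≤ P.natDegree * 1 := Polynomial.natDegree_comp_le.trans <|
          Nat.mul_le_mul_left _ <|
            (Polynomial.natDegree_C_mul_le _ _).trans Polynomial.natDegree_X_le
      _ ≤ P.natDegree + 1 := by lia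
  have hcoeff : Q.coeff 1 = h * P.coeff 1 := by
    rw [hQ, Polynomial.coeff_C_mul, Polynomial.comp_C_mul_X_coeff]
    field_simp
  simpa only [weylSum, heval] using hG K hK N hN h hh hhK Q hdegree hcoeff

theorem exists_abs_card_fract_eval_mul_div_lt_sub_le {P : Polynomial ℝ}
    (hP : ¬ IsLiouvilleReal (P.coeff 1)) :
    ∃ G : ℕ, ∃ C > 0, ∀ N : ℕ, 2 ^ (G + 1) ≤ N → ∀ d : ℕ, 0 < d →
      |(#{m ∈ range N | Int.fract (P.eval ((d * m : ℕ) : ℝ) / d) < 1 / d} : ℝ) - 1 / d * N| ≤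
        C * (N : ℝ) ^ (1 - 1 / (4 * (G + 1)) : ℝ) := by
  obtain ⟨G, hG⟩ := exists_norm_sum_fourierChar_eval_mul_div_le hP
  refine ⟨G, 1 + 2 * ∑' n : ℕ, √n / (n : ℝ) ^ 2, ?_, fun N hN d hd ↦ ?_⟩
  · have : 0 ≤ ∑' n : ℕ, √n / (n : ℝ) ^ 2 := tsum_nonneg fun n ↦ by positivity
    linarith
  have hN1 : (1 : ℝ) ≤ N := by exact_mod_cast Nat.one_le_two_pow.trans hN
  have hN0 : (0 : ℝ) < N := by linarith
  set J : ℝ := (N : ℝ) ^ (1 / (4 * (G + 1)) : ℝ) with hJ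
  have hJ1 : 1 ≤ J := one_le_rpow hN1 (by positivity)
  have hJpow : (J ^ 4) ^ (G + 1) = N := by
    rw [← pow_mul, hJ, ← rpow_mul_natCast hN0.le]
    push_cast
    rw [one_div_mul_cancel (by positivity), rpow_one]
  have hK : 2 ≤ J ^ 4 :=
    le_of_pow_le_pow_left₀ G.succ_ne_zero (by positivity) (by rw [hJpow]; exact_mod_cast hN)
  have hKN : (J ^ 4) ^ G ≤ N :=
    (pow_le_pow_right₀ (by linarith) G.le_succ).trans_eq hJpow
  have hdisc := abs_card_fract_lt_sub_le_of_forall_le (s := range N)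
    (x := fun m ↦ P.eval ((d * m : ℕ) : ℝ) / d) (c := 1 / d) hJ1
    (fun h hh hhK ↦ by simpa only [card_range] using hG (J ^ 4) hK N hKN h hh hhK d hd)
    (by positivity) (div_le_one_of_le₀ (by exact_mod_cast hd) (by positivity))
  rw [rpow_sub hN0, rpow_one]
  simpa only [card_range] using hdisc

theorem natCast_floor_add_one_rpow_le {x s : ℝ} (hx : 1 ≤ x) (hs₀ : 0 ≤ s) (hs₁ : s ≤ 1) :
    ((⌊x⌋₊ + 1 : ℕ) : ℝ) ^ s ≤ 2 * x ^ s := by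
  have hfloor : (⌊x⌋₊ : ℝ) ≤ x := Nat.floor_le (by linarith)
  calc ((⌊x⌋₊ + 1 : ℕ) : ℝ) ^ s ≤ (2 * x) ^ s := by
        gcongr
        push_cast
        linarith
    _ = 2 ^ s * x ^ s := mul_rpow zero_le_two (by linarith)
    _ ≤ 2 * x ^ s := by
        gcongr
        exact rpow_le_self_of_one_le one_le_two hs₁

theorem abs_one_div_mul_floor_add_one_sub_le {d : ℕ} (hd : 0 < d) {X : ℝ} (hX : 0 ≤ X) :
    |1 / d * ((⌊X / d⌋₊ + 1 : ℕ) : ℝ) - X / d ^ 2| ≤ 1 := by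
  have hfloor : (⌊X / d⌋₊ : ℝ) ≤ X / d := Nat.floor_le (by positivity)
  have hfloor' : X / d < ⌊X / d⌋₊ + 1 := Nat.lt_floor_add_one _
  have hd' : 1 / (d : ℝ) ≤ 1 := div_le_one_of_le₀ (by exact_mod_cast hd) (by positivity)
  have hfactor : 1 / d * ((⌊X / d⌋₊ + 1 : ℕ) : ℝ) - X / d ^ 2 =
      1 / d * (⌊X / d⌋₊ + 1 - X / d) := by
    push_cast
    field_simp
  rw [hfactor, abs_of_nonneg (mul_nonneg (by positivity) (by linarith))]
  exact mul_le_one₀ hd' (by linarith) (by linarith)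

theorem abs_card_AP_sub_div_sq_le (P : Polynomial ℝ) {d : ℕ} (hd : 0 < d) {X : ℝ} (hX : 0 ≤ X) :
    |(#(AP P d X) : ℝ) - X / d ^ 2| ≤
      |(#{m ∈ range (⌊X / d⌋₊ + 1) | Int.fract (P.eval ((d * m : ℕ) : ℝ) / d) < 1 / d} : ℝ) -
        1 / d * (⌊X / d⌋₊ + 1 : ℕ)| + 2 := by
  set count := #{m ∈ range (⌊X / d⌋₊ + 1) | Int.fract (P.eval ((d * m : ℕ) : ℝ) / d) < 1 / d}
  have hcard : |(#(AP P d X) : ℝ) - count| ≤ 1 := abs_card_AP_sub_le P hd X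
  have hmain := abs_one_div_mul_floor_add_one_sub_le hd hX
  have htriangle := abs_sub_le (#(AP P d X) : ℝ) count (X / d ^ 2)
  have htriangle' := abs_sub_le (count : ℝ) (1 / d * (⌊X / d⌋₊ + 1 : ℕ)) (X / d ^ 2)
  linarith

end Equidistribution

/-- There exist `μ ∈ (0,1)`, `C > 0`, `C₀ > 0` such that for every positive integer `d`
and real `X` with `X/d > C`, `|#A_d(X) - X/d²| ≤ C₀·(X/d)^(1-μ)`. -/
theorem statement3 (P : Polynomial ℝ) (hP : ¬ IsLiouvilleReal (P.coeff 1)) :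
    ∃ μ : ℝ, μ ∈ Set.Ioo (0 : ℝ) 1 ∧ ∃ C > (0 : ℝ), ∃ C₀ > (0 : ℝ),
      ∀ d : ℕ, 0 < d → ∀ X : ℝ, X / (d : ℝ) > C →
        |((AP P d X).card : ℝ) - X / (d : ℝ) ^ 2| ≤ C₀ * (X / (d : ℝ)) ^ (1 - μ) := by
  obtain ⟨G, C, hC, hcount⟩ := exists_abs_card_fract_eval_mul_div_lt_sub_le hP
  set μ : ℝ := 1 / (4 * (G + 1))
  have hμ₀ : 0 < μ := by positivity
  have hμ₁ : μ < 1 := (div_lt_one (by positivity)).2 (by linarith [G.cast_nonneg (α := ℝ)])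
  refine ⟨μ, ⟨hμ₀, hμ₁⟩, 2 ^ (G + 1), by positivity, 2 * C + 2, by positivity, fun d hd X hX ↦ ?_⟩
  have hY : 1 ≤ X / d := (one_le_pow₀ one_le_two).trans hX.le
  have hX₀ : 0 ≤ X := by
    rw [le_div_iff₀ (by exact_mod_cast hd)] at hY
    linarith [d.cast_nonneg (α := ℝ)]
  have hN : 2 ^ (G + 1) ≤ ⌊X / d⌋₊ + 1 := by exact_mod_cast (hX.trans (Nat.lt_floor_add_one _)).le
  have hNY : ((⌊X / d⌋₊ + 1 : ℕ) : ℝ) ^ (1 - μ) ≤ 2 * (X / d) ^ (1 - μ) :=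
    natCast_floor_add_one_rpow_le hY (by linarith) (by linarith)
  calc |((AP P d X).card : ℝ) - X / d ^ 2|
    _ ≤ _ := abs_card_AP_sub_div_sq_le P hd hX₀
    _ ≤ C * ((⌊X / d⌋₊ + 1 : ℕ) : ℝ) ^ (1 - μ) + 2 := by gcongr; exact hcount _ hN d hd
    _ ≤ C * (2 * (X / d) ^ (1 - μ)) + 2 * (X / d) ^ (1 - μ) := by
      gcongr
      linarith [one_le_rpow hY (by linarith : 0 ≤ 1 - μ)]
    _ = (2 * C + 2) * (X / d) ^ (1 - μ) := by ring
end

section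
/- For every real A > 0 there is a constant C > 0 such that, with c = 1/(2(A+1)) and z = X^{c/log log X}, for all sufficiently large X the number of positive integers d ≤ X with gcd(d, P_z) = 1 satisfies | #{d ≤ X : gcd(d, P_z) = 1} − X·∏_{p prime, p < z}(1 − 1/p) | ≤ C·X/(log X)^A. -/
open Real Finset

/-!
By inclusion–exclusion, `#{n ≤ X : gcd(n, P) = 1} = ∑_{d ∣ P} μ(d) ⌊X/d⌋` for squarefree `P`, and
replacing each `⌊X/d⌋` by `X/d` gives the main term `X ∏_{p ∣ P} (1 - 1/p)`. Summing the trivial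
bound `1` for each replacement would cost `2 ^ π(z)`, so we use Rankin's trick: for any `0 ≤ s ≤ 1`
the replacement costs at most `(X/d)^s`, and `∑_{d ∣ P} (X/d)^s = X^s ∏_{p ∣ P} (1 + p^(-s))`.
For `s = 1 - K / log z` Mertens' bounds show that the last product is `O_K(log z)`, so the error is
`O_K(X^(1 - K / log z) log z)`. When `z = X^(c / log log X)` we have
`X^(K / log z) = (log X)^(K / c)`, and `K` can be chosen as large as we please.
-/

section Mertens

open ArithmeticFunction.vonMangoldt

theorem sum_primesLE_log_mul_div_le (N : ℕ) :
    ∑ p ∈ N.primesLE, log p * (N / p : ℕ) ≤ N * log N := by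
  calc ∑ p ∈ N.primesLE, log p * (N / p : ℕ)
      = ∑ p ∈ N.primesLE, Λ p * (N / p : ℕ) := Finset.sum_congr rfl fun p hp => by
        rw [ArithmeticFunction.vonMangoldt_apply_prime (Nat.prime_of_mem_primesLE hp)]
    _ ≤ ∑ n ∈ Ioc 0 N, Λ n * (N / n : ℕ) := by
        rw [Nat.primesLE_eq_filter_Ioc_zero]
        exact sum_le_sum_of_subset_of_nonneg (filter_subset _ _) fun n _ _ =>
          mul_nonneg ArithmeticFunction.vonMangoldt_nonneg (Nat.cast_nonneg _)
    _ = ∑ n ∈ Ioc 0 N, log n := by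
        rw [← ArithmeticFunction.sum_Ioc_mul_zeta_eq_sum, ArithmeticFunction.vonMangoldt_mul_zeta]
        rfl
    _ ≤ ∑ _n ∈ Ioc 0 N, log N := Finset.sum_le_sum fun n hn => by
        have hn := mem_Ioc.1 hn
        exact log_le_log (by exact_mod_cast hn.1) (by exact_mod_cast hn.2)
    _ = N * log N := by simp

theorem sum_primesLE_log_div_le (N : ℕ) :
    ∑ p ∈ N.primesLE, log p / p ≤ log N + log 4 := by
  rcases N.eq_zero_or_pos with rfl | hN
  · simpa using log_nonneg (by norm_num : (1 : ℝ) ≤ 4)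
  have hN' : (0 : ℝ) < N := by exact_mod_cast hN
  refine le_of_mul_le_mul_left ?_ hN'
  calc N * ∑ p ∈ N.primesLE, log p / p
      ≤ ∑ p ∈ N.primesLE, (log p * (N / p : ℕ) + log p) := by
        rw [mul_sum]
        refine Finset.sum_le_sum fun p _ => ?_
        have hfloor : (N : ℝ) / p ≤ (N / p : ℕ) + 1 := by
          rw [← Nat.floor_div_eq_div (K := ℝ)]
          exact (Nat.lt_floor_add_one _).le
        calc N * (log p / p) = log p * (N / p) := by ring
          _ ≤ log p * ((N / p : ℕ) + 1) :=
            mul_le_mul_of_nonneg_left hfloor (log_natCast_nonneg p)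
          _ = log p * (N / p : ℕ) + log p := by ring
    _ = ∑ p ∈ N.primesLE, log p * (N / p : ℕ) + Chebyshev.theta N := by
        rw [sum_add_distrib, Chebyshev.theta_eq_sum_primesLE_log]
    _ ≤ N * log N + log 4 * N :=
        add_le_add (sum_primesLE_log_mul_div_le N) (Chebyshev.theta_le_log4_mul_x hN'.le)
    _ = N * (log N + log 4) := by ring

theorem sum_primesLE_succ_sub {N : ℕ} (hN : 0 < N) :
    ∑ p ∈ (N + 1).primesLE, 1 / (p : ℝ) - (∑ p ∈ (N + 1).primesLE, log p / p) / log ↑(N + 1)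
      = ∑ p ∈ N.primesLE, 1 / (p : ℝ) - (∑ p ∈ N.primesLE, log p / p) / log ↑(N + 1) := by
  have hlog : log ↑(N + 1) ≠ 0 := (log_pos (by exact_mod_cast Nat.succ_lt_succ hN)).ne'
  rw [Nat.primesLE_succ]
  split_ifs
  · rw [sum_insert (Nat.notMem_primesLE N), sum_insert (Nat.notMem_primesLE N)]
    field_simp
    ring
  · rfl

/-- Abel summation: `log log` enters because `log n * (1 / log n - 1 / log (n + 1))` is at most
`log log (n + 1) - log log n`. -/
theorem sum_primesLE_one_div_le_sum_log_div {N : ℕ} (hN : 2 ≤ N) :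
    ∑ p ∈ N.primesLE, 1 / (p : ℝ) ≤ (∑ p ∈ N.primesLE, log p / p) / log N
      + (log (log N) - log (log 2)) + log 4 * (1 / log 2 - 1 / log N) := by
  induction N, hN using Nat.le_induction with
  | base =>
    have hprimes : Nat.primesLE 2 = {2} := by decide
    have hlog2 : log 2 ≠ 0 := (log_pos one_lt_two).ne'
    simp [hprimes, hlog2, div_div_cancel_left']
  | succ N hN ih =>
    have hN' : (2 : ℝ) ≤ N := by exact_mod_cast hN
    have ha : 0 < log N := log_pos (by linarith)
    have hab : log N ≤ log ↑(N + 1) := log_le_log (by linarith) (by simp)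
    have hb : 0 < log ↑(N + 1) := ha.trans_le hab
    have hstep := sum_primesLE_succ_sub (N := N) (by lia)
    have hmertens := sum_primesLE_log_div_le N
    generalize log ↑(N + 1) = b at *
    generalize log (N : ℝ) = a at *
    have hweight : 0 ≤ 1 / a - 1 / b := sub_nonneg.2 (one_div_le_one_div_of_le ha hab)
    have hloglog : 1 - a / b ≤ log b - log a := by
      simpa [log_div hb.ne' ha.ne'] using one_sub_inv_le_log_of_pos (div_pos hb ha)
    have habel : (∑ p ∈ N.primesLE, log p / p) * (1 / a - 1 / b)
        ≤ (log b - log a) + log 4 * (1 / a - 1 / b) :=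
      calc (∑ p ∈ N.primesLE, log p / p) * (1 / a - 1 / b)
          ≤ (a + log 4) * (1 / a - 1 / b) := by gcongr
        _ = (1 - a / b) + log 4 * (1 / a - 1 / b) := by field_simp
        _ ≤ _ := by gcongr
    rw [mul_sub, mul_one_div, mul_one_div] at habel
    linarith

theorem sum_primesLE_one_div_le {N : ℕ} (hN : 2 ≤ N) :
    ∑ p ∈ N.primesLE, 1 / (p : ℝ) ≤ log (log N) + 4 := by
  have hlogN : 0 < log N := log_pos (by exact_mod_cast hN)
  have hlog2 := log_two_gt_d9
  have hloglog2 : -log (log 2) ≤ 1 := by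
    have hinv : (log 2)⁻¹ ≤ 2 := inv_le_of_inv_le₀ (by norm_num) (by linarith)
    linarith [one_sub_inv_le_log_of_pos (log_pos one_lt_two)]
  have hmertens : (∑ p ∈ N.primesLE, log p / p) / log N ≤ 1 + log 4 / log N := by
    rw [div_le_iff₀ hlogN, add_mul, div_mul_cancel₀ _ hlogN.ne', one_mul]
    exact sum_primesLE_log_div_le N
  have hconst : log 4 * (1 / log 2 - 1 / log N) = 2 - log 4 / log N := by
    rw [mul_sub, mul_one_div, mul_one_div, log_four_eq, mul_div_cancel_right₀ _ (by linarith)]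
  linarith [sum_primesLE_one_div_le_sum_log_div hN]

end Mertens

section Sieve

open ArithmeticFunction.Moebius ArithmeticFunction.zeta

theorem ite_gcd_eq_one_eq_sum_moebius (n : ℕ) {P : ℕ} (hP : P ≠ 0) :
    (if n.gcd P = 1 then 1 else 0) = ∑ d ∈ P.divisors, if d ∣ n then μ d else 0 := by
  have hdivisors : {d ∈ P.divisors | d ∣ n} = (n.gcd P).divisors := by
    ext d
    simp [Nat.dvd_gcd_iff, hP, and_comm]
  rw [← sum_filter, hdivisors, ← ArithmeticFunction.coe_mul_zeta_apply,
    ArithmeticFunction.moebius_mul_coe_zeta, ArithmeticFunction.one_apply]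

theorem card_filter_gcd_eq_one_eq_sum_moebius (N : ℕ) {P : ℕ} (hP : P ≠ 0) :
    (#{n ∈ Icc 1 N | n.gcd P = 1} : ℤ) = ∑ d ∈ P.divisors, μ d * (N / d : ℕ) := by
  simp only [card_filter, Nat.cast_sum, Nat.cast_ite, Nat.cast_one, Nat.cast_zero,
    ite_gcd_eq_one_eq_sum_moebius _ hP]
  rw [sum_comm]
  refine Finset.sum_congr rfl fun d _ => ?_
  rw [← sum_filter, sum_const, ← Nat.Ioc_filter_dvd_card_eq_div, nsmul_eq_mul, mul_comm]
  rfl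

/-- The arithmetic function `d ↦ d ^ s`. Its value at `0` is `0`, as an `ArithmeticFunction` must
have it, also for `s = 0`, where `Real.rpow` gives `0 ^ 0 = 1`. -/
noncomputable def rpowArith (s : ℝ) : ArithmeticFunction ℝ :=
  ⟨fun d => if d = 0 then 0 else (d : ℝ) ^ s, if_pos rfl⟩

theorem rpowArith_apply (s : ℝ) {d : ℕ} (hd : d ≠ 0) : rpowArith s d = (d : ℝ) ^ s :=
  if_neg hd

theorem isMultiplicative_rpowArith (s : ℝ) : (rpowArith s).IsMultiplicative := by
  refine ArithmeticFunction.IsMultiplicative.iff_ne_zero.2 ⟨?_, fun {m n} hm hn _ => ?_⟩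
  · simp [rpowArith_apply]
  · rw [rpowArith_apply s hm, rpowArith_apply s hn, rpowArith_apply s (mul_ne_zero hm hn),
      Nat.cast_mul, mul_rpow m.cast_nonneg n.cast_nonneg]

theorem sum_divisors_rpow {P : ℕ} (hP : Squarefree P) (s : ℝ) :
    ∑ d ∈ P.divisors, (d : ℝ) ^ s = ∏ p ∈ P.primeFactors, (1 + (p : ℝ) ^ s) := by
  calc ∑ d ∈ P.divisors, (d : ℝ) ^ s
      = ∑ d ∈ P.divisors, rpowArith s d := Finset.sum_congr rfl fun d hd =>
        (rpowArith_apply s (Nat.pos_of_mem_divisors hd).ne').symm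
    _ = ∏ p ∈ P.primeFactors, (1 + rpowArith s p) :=
        ((isMultiplicative_rpowArith s).prodPrimeFactors_one_add_of_squarefree hP).symm
    _ = ∏ p ∈ P.primeFactors, (1 + (p : ℝ) ^ s) := Finset.prod_congr rfl fun p hp => by
        rw [rpowArith_apply s (Nat.prime_of_mem_primeFactors hp).ne_zero]

theorem sum_divisors_moebius_mul_rpow {P : ℕ} (hP : Squarefree P) (s : ℝ) :
    ∑ d ∈ P.divisors, μ d * (d : ℝ) ^ s = ∏ p ∈ P.primeFactors, (1 - (p : ℝ) ^ s) := by
  calc ∑ d ∈ P.divisors, μ d * (d : ℝ) ^ s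
      = ∑ d ∈ P.divisors, μ d * rpowArith s d := Finset.sum_congr rfl fun d hd => by
        rw [rpowArith_apply s (Nat.pos_of_mem_divisors hd).ne']
    _ = ∏ p ∈ P.primeFactors, (1 - rpowArith s p) :=
        ((isMultiplicative_rpowArith s).prodPrimeFactors_one_sub_of_squarefree _ hP).symm
    _ = ∏ p ∈ P.primeFactors, (1 - (p : ℝ) ^ s) := Finset.prod_congr rfl fun p hp => by
        rw [rpowArith_apply s (Nat.prime_of_mem_primeFactors hp).ne_zero]

theorem abs_natFloor_sub_le_rpow {x s : ℝ} (hx : 0 ≤ x) (hs₀ : 0 ≤ s) (hs₁ : s ≤ 1) :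
    |⌊x⌋₊ - x| ≤ x ^ s := by
  rcases le_or_gt 1 x with h | h
  · exact (Nat.abs_floor_sub_le hx).trans (one_le_rpow h hs₀)
  · rw [Nat.floor_eq_zero.2 h, Nat.cast_zero, zero_sub, abs_neg, abs_of_nonneg hx]
    exact self_le_rpow_of_le_one hx h.le hs₁

theorem abs_card_filter_gcd_eq_one_sub_le {P : ℕ} (hP : Squarefree P) {X s : ℝ} (hX : 0 ≤ X)
    (hs₀ : 0 ≤ s) (hs₁ : s ≤ 1) :
    |(#{n ∈ Icc 1 ⌊X⌋₊ | n.gcd P = 1} : ℝ) - X * ∏ p ∈ P.primeFactors, (1 - 1 / (p : ℝ))|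
      ≤ X ^ s * ∏ p ∈ P.primeFactors, (1 + (p : ℝ) ^ (-s)) := by
  have hcard : (#{n ∈ Icc 1 ⌊X⌋₊ | n.gcd P = 1} : ℝ) = ∑ d ∈ P.divisors, (μ d : ℝ) * ⌊X / d⌋₊ := by
    simpa only [Nat.floor_div_natCast, Int.cast_sum, Int.cast_mul, Int.cast_natCast] using
      congrArg (Int.cast : ℤ → ℝ) (card_filter_gcd_eq_one_eq_sum_moebius ⌊X⌋₊ hP.ne_zero)
  have hmain : X * ∏ p ∈ P.primeFactors, (1 - 1 / (p : ℝ)) = ∑ d ∈ P.divisors, μ d * (X / d) := by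
    simp only [one_div, ← rpow_neg_one, ← sum_divisors_moebius_mul_rpow hP, mul_sum]
    simp only [rpow_neg_one, div_eq_mul_inv, mul_left_comm]
  have hmoebius (d : ℕ) : |(μ d : ℝ)| ≤ 1 := by
    exact_mod_cast ArithmeticFunction.abs_moebius_le_one
  rw [hcard, hmain, ← sum_sub_distrib]
  calc |∑ d ∈ P.divisors, (μ d * ⌊X / d⌋₊ - μ d * (X / d))|
      ≤ ∑ d ∈ P.divisors, |μ d * ⌊X / d⌋₊ - μ d * (X / d)| := abs_sum_le_sum_abs _ _
    _ ≤ ∑ d ∈ P.divisors, (X / d) ^ s := Finset.sum_le_sum fun d _ => by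
        rw [← mul_sub, abs_mul]
        exact (mul_le_of_le_one_left (abs_nonneg _) (hmoebius d)).trans
          (abs_natFloor_sub_le_rpow (by positivity) hs₀ hs₁)
    _ = X ^ s * ∑ d ∈ P.divisors, (d : ℝ) ^ (-s) := by
        rw [mul_sum]
        refine Finset.sum_congr rfl fun d _ => ?_
        rw [div_rpow hX d.cast_nonneg, rpow_neg d.cast_nonneg, div_eq_mul_inv]
    _ = X ^ s * ∏ p ∈ P.primeFactors, (1 + (p : ℝ) ^ (-s)) := by rw [sum_divisors_rpow hP]

end Sieve

section SmallPrimes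

theorem mem_primesLt {z : ℝ} {p : ℕ} : p ∈ primesLt z ↔ p.Prime ∧ (p : ℝ) < z := by
  simp only [primesLt, mem_filter, mem_range, Nat.lt_ceil]
  tauto

theorem primesLt_subset_primesLE_floor (z : ℝ) : primesLt z ⊆ ⌊z⌋₊.primesLE := fun p hp => by
  obtain ⟨hprime, hlt⟩ := mem_primesLt.1 hp
  exact Nat.mem_primesLE.2 ⟨Nat.le_floor hlt.le, hprime⟩

theorem primeFactors_Pz (z : ℝ) : (Pz z).primeFactors = primesLt z :=
  Nat.primeFactors_prod fun _ hp => (mem_primesLt.1 hp).1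

theorem squarefree_Pz (z : ℝ) : Squarefree (Pz z) := by
  refine squarefree_prod_of_pairwise_isCoprime (fun p hp q hq hpq => ?_)
    fun p hp => (mem_primesLt.1 hp).1.squarefree
  exact Nat.coprime_iff_isRelPrime.1
    ((Nat.coprime_primes (mem_primesLt.1 hp).1 (mem_primesLt.1 hq).1).2 hpq)

theorem sum_primesLt_one_div_le {z : ℝ} (hz : 2 ≤ z) :
    ∑ p ∈ primesLt z, 1 / (p : ℝ) ≤ log (log z) + 4 := by
  have hfloor : 2 ≤ ⌊z⌋₊ := Nat.le_floor (by exact_mod_cast hz)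
  have hlog : 0 < log ⌊z⌋₊ := log_pos (by exact_mod_cast hfloor)
  calc ∑ p ∈ primesLt z, 1 / (p : ℝ)
      ≤ ∑ p ∈ ⌊z⌋₊.primesLE, 1 / (p : ℝ) :=
        sum_le_sum_of_subset_of_nonneg (primesLt_subset_primesLE_floor z)
          fun p _ _ => by positivity
    _ ≤ log (log ⌊z⌋₊) + 4 := sum_primesLE_one_div_le hfloor
    _ ≤ log (log z) + 4 := by
        gcongr
        exact Nat.floor_le (by linarith)

theorem sum_primesLt_log_div_le {z : ℝ} (hz : 1 ≤ z) :
    ∑ p ∈ primesLt z, log p / p ≤ log z + log 4 := by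
  have hfloor : 0 < ⌊z⌋₊ := Nat.floor_pos.2 hz
  calc ∑ p ∈ primesLt z, log p / p
      ≤ ∑ p ∈ ⌊z⌋₊.primesLE, log p / p :=
        sum_le_sum_of_subset_of_nonneg (primesLt_subset_primesLE_floor z)
          fun p _ _ => div_nonneg (log_natCast_nonneg p) p.cast_nonneg
    _ ≤ log ⌊z⌋₊ + log 4 := sum_primesLE_log_div_le _
    _ ≤ log z + log 4 := by
        gcongr
        exact Nat.floor_le (by linarith)

theorem exp_le_one_add_mul_exp (t : ℝ) : exp t ≤ 1 + t * exp t := by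
  have h : (1 - t) * exp t ≤ exp (-t) * exp t := by
    gcongr
    exact one_sub_le_exp_neg t
  rw [← exp_add, neg_add_cancel, exp_zero] at h
  linarith

theorem rpow_div_log_sub_one_le {K x z : ℝ} (hK : 0 ≤ K) (hx : 1 ≤ x) (hz : 1 < z)
    (hxz : x ≤ z) :
    x ^ (K / log z - 1) ≤ 1 / x + K * exp K / log z * (log x / x) := by
  have hx₀ : 0 < x := by linarith
  have hlogx : 0 ≤ log x := log_nonneg hx
  have hlogz : 0 < log z := log_pos hz
  set t := log x * (K / log z) with ht
  have htK : t ≤ K := by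
    calc log x * (K / log z) ≤ log z * (K / log z) := by gcongr
      _ = K := mul_div_cancel₀ K hlogz.ne'
  calc x ^ (K / log z - 1) = exp t / x := by rw [rpow_sub_one hx₀.ne', rpow_def_of_pos hx₀]
    _ ≤ (1 + t * exp K) / x := by
        gcongr
        exact (exp_le_one_add_mul_exp t).trans (by gcongr)
    _ = 1 / x + K * exp K / log z * (log x / x) := by rw [ht]; ring

theorem sum_primesLt_rpow_le {K z : ℝ} (hK : 0 ≤ K) (hz : 2 ≤ z) :
    ∑ p ∈ primesLt z, (p : ℝ) ^ (K / log z - 1) ≤ log (log z) + (4 + 3 * K * exp K) := by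
  have hlogz : 0 < log z := log_pos (by linarith)
  have hlog4 : log 4 ≤ 2 * log z := by
    rw [log_four_eq]
    gcongr
  calc ∑ p ∈ primesLt z, (p : ℝ) ^ (K / log z - 1)
      ≤ ∑ p ∈ primesLt z, (1 / (p : ℝ) + K * exp K / log z * (log p / p)) :=
        Finset.sum_le_sum fun p hp => by
          obtain ⟨hprime, hlt⟩ := mem_primesLt.1 hp
          exact rpow_div_log_sub_one_le hK (by exact_mod_cast hprime.one_le) (by linarith) hlt.le
    _ = ∑ p ∈ primesLt z, 1 / (p : ℝ) + K * exp K / log z * ∑ p ∈ primesLt z, log p / p := by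
        rw [sum_add_distrib, mul_sum]
    _ ≤ (log (log z) + 4) + K * exp K / log z * (3 * log z) := by
        gcongr
        · exact sum_primesLt_one_div_le hz
        · linarith [sum_primesLt_log_div_le (z := z) (by linarith)]
    _ = log (log z) + (4 + 3 * K * exp K) := by
        field_simp
        ring

theorem prod_primesLt_one_add_rpow_le {K z : ℝ} (hK : 0 ≤ K) (hz : 2 ≤ z) :
    ∏ p ∈ primesLt z, (1 + (p : ℝ) ^ (K / log z - 1)) ≤ exp (4 + 3 * K * exp K) * log z := by
  have hlogz : 0 < log z := log_pos (by linarith)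
  calc ∏ p ∈ primesLt z, (1 + (p : ℝ) ^ (K / log z - 1))
      ≤ exp (∑ p ∈ primesLt z, (p : ℝ) ^ (K / log z - 1)) :=
        prod_one_add_le_exp_sum _ fun p => by positivity
    _ ≤ exp (log (log z) + (4 + 3 * K * exp K)) := exp_le_exp.2 (sum_primesLt_rpow_le hK hz)
    _ = exp (4 + 3 * K * exp K) * log z := by rw [exp_add, exp_log hlogz, mul_comm]

theorem abs_card_filter_gcd_Pz_sub_le {K X z : ℝ} (hK : 0 ≤ K) (hX : 0 ≤ X) (hz : 2 ≤ z)
    (hKz : K ≤ log z) :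
    |(#{n ∈ Icc 1 ⌊X⌋₊ | n.gcd (Pz z) = 1} : ℝ) - X * ∏ p ∈ primesLt z, (1 - 1 / (p : ℝ))|
      ≤ exp (4 + 3 * K * exp K) * (X ^ (1 - K / log z) * log z) := by
  have hlogz : 0 < log z := log_pos (by linarith)
  have hs₀ : 0 ≤ 1 - K / log z := sub_nonneg.2 ((div_le_one hlogz).2 hKz)
  have hs₁ : 1 - K / log z ≤ 1 := sub_le_self 1 (by positivity)
  have hsieve := abs_card_filter_gcd_eq_one_sub_le (squarefree_Pz z) hX hs₀ hs₁
  rw [primeFactors_Pz, neg_sub] at hsieve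
  calc _ ≤ _ := hsieve
    _ ≤ X ^ (1 - K / log z) * (exp (4 + 3 * K * exp K) * log z) := by
        gcongr
        exact prod_primesLt_one_add_rpow_le hK hz
    _ = _ := mul_left_comm _ _ _

end SmallPrimes

section Asymptotics

open Filter

theorem tendsto_log_log_atTop : Tendsto (fun X : ℝ => log (log X)) atTop atTop :=
  tendsto_log_atTop.comp tendsto_log_atTop

theorem tendsto_div_log_atTop : Tendsto (fun y : ℝ => y / log y) atTop atTop := by
  have hzero : Tendsto (fun y : ℝ => log y / y) atTop (nhdsWithin 0 (Set.Ioi 0)) := by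
    refine tendsto_nhdsWithin_iff.2 ⟨?_, ?_⟩
    · simpa using tendsto_pow_log_div_mul_add_atTop 1 0 1 one_ne_zero
    · filter_upwards [eventually_gt_atTop 1] with y hy
      exact div_pos (log_pos hy) (by linarith)
  exact hzero.inv_tendsto_nhdsGT_zero.congr fun y => inv_div _ _

theorem tendsto_log_rpow_div_log_log_atTop {c : ℝ} (hc : 0 < c) :
    Tendsto (fun X : ℝ => log (X ^ (c / log (log X)))) atTop atTop := by
  refine ((tendsto_div_log_atTop.comp tendsto_log_atTop).const_mul_atTop hc).congr' ?_
  filter_upwards [eventually_gt_atTop 0] with X hX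
  rw [log_rpow hX, Function.comp_apply, mul_div_left_comm, mul_comm, div_mul_eq_mul_div,
    mul_div_right_comm]

theorem log_rpow_div_log_log_le_log {X c : ℝ} (hX : 1 ≤ X) (hL : 0 < log (log X))
    (hc : c ≤ log (log X)) : log (X ^ (c / log (log X))) ≤ log X := by
  rw [log_rpow (by linarith)]
  exact mul_le_of_le_one_left (log_nonneg hX) ((div_le_one hL).2 hc)

theorem rpow_one_sub_div_log_rpow {X c B : ℝ} (hX : 1 < X) (hL : log (log X) ≠ 0)
    (hc : c ≠ 0) :
    X ^ (1 - c * B / log (X ^ (c / log (log X)))) = X * log X ^ (-B) := by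
  have hX₀ : 0 < X := by linarith
  have hlogX : 0 < log X := log_pos hX
  have hexponent : log X * (c * B / (c / log (log X) * log X)) = log (log X) * B := by
    field_simp
  rw [log_rpow hX₀, rpow_sub hX₀, rpow_one, rpow_def_of_pos hX₀, hexponent,
    ← rpow_def_of_pos hlogX, rpow_neg hlogX.le, div_eq_mul_inv]

theorem statement6_general {c : ℝ} (hc : 0 < c) (A : ℝ) :
    ∃ C > (0 : ℝ), ∀ᶠ X : ℝ in atTop,
      |(#{d ∈ Icc 1 ⌊X⌋₊ | d.gcd (Pz (X ^ (c / log (log X)))) = 1} : ℝ)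
          - X * ∏ p ∈ primesLt (X ^ (c / log (log X))), (1 - 1 / (p : ℝ))|
        ≤ C * X / log X ^ A := by
  set K := c * (|A| + 1) with hK
  refine ⟨exp (4 + 3 * K * exp K), exp_pos _, ?_⟩
  filter_upwards [eventually_gt_atTop 1, tendsto_log_atTop.eventually_ge_atTop 1,
    tendsto_log_log_atTop.eventually_ge_atTop c,
    (tendsto_log_rpow_div_log_log_atTop hc).eventually_ge_atTop (max 1 K)] with X hX hlogX hcL hz
  have hL : 0 < log (log X) := hc.trans_le hcL
  have hrpow := rpow_one_sub_div_log_rpow (B := |A| + 1) hX hL.ne' hc.ne'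
  have hzX := log_rpow_div_log_log_le_log hX.le hL hcL
  have hz₀ : 0 < X ^ (c / log (log X)) := rpow_pos_of_pos (by linarith) _
  rw [← hK] at hrpow
  generalize X ^ (c / log (log X)) = z at *
  obtain ⟨hlogz, hKz⟩ := max_le_iff.1 hz
  have hz₂ : 2 ≤ z := by linarith [log_le_sub_one_of_pos hz₀]
  calc _ ≤ exp (4 + 3 * K * exp K) * (X ^ (1 - K / log z) * log z) :=
        abs_card_filter_gcd_Pz_sub_le (by positivity) (by linarith) hz₂ hKz
    _ ≤ exp (4 + 3 * K * exp K) * (X * log X ^ (-(|A| + 1)) * log X) := by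
        rw [hrpow]
        gcongr
    _ = exp (4 + 3 * K * exp K) * (X * log X ^ (-|A|)) := by
        rw [mul_assoc X, ← rpow_add_one (by positivity), neg_add, neg_add_cancel_right]
    _ ≤ exp (4 + 3 * K * exp K) * (X * log X ^ (-A)) := by
        gcongr
        exact le_abs_self A
    _ = exp (4 + 3 * K * exp K) * X / log X ^ A := by
        rw [rpow_neg (by positivity), ← mul_assoc, div_eq_mul_inv]

end Asymptotics

/-- With `c = 1/(2(A+1))` and `z = X^(c/log log X)`: for all sufficiently large `X`,
`|#{d ≤ X : gcd(d, P_z) = 1} - X·∏_{p < z}(1 - 1/p)| ≤ C·X/(log X)^A`. -/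
theorem statement6 (A : ℝ) (hA : 0 < A) :
    ∃ C > (0 : ℝ), ∃ X₀ : ℝ, ∀ X : ℝ, X ≥ X₀ →
      |((((Finset.Icc 1 ⌊X⌋₊).filter fun d => Nat.gcd d (Pz (zf A X)) = 1).card : ℝ))
          - X * ∏ p ∈ primesLt (zf A X), (1 - 1 / (p : ℝ))|
        ≤ C * X / (Real.log X) ^ A := by
  obtain ⟨C, hC, hbound⟩ := statement6_general (c := 1 / (2 * (A + 1))) (by positivity) A
  exact ⟨C, hC, Filter.eventually_atTop.1 hbound⟩
end

section
/- For all sufficiently large real X, the number of natural numbers n with 3 ≤ n ≤ X satisfying |ω(n) − log log n| > (log log n)^{2/3} is at most X/(log log X)^{1/3}. -/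
open Real Finset

/-- `α` is Liouville: for every `n ∈ ℕ` there are integers `p, q` with `q > 1`
and `|α - p/q| ≤ q^(-n)`. -/
def IsLiouvilleNum (α : ℝ) : Prop :=
  ∀ n : ℕ, ∃ p q : ℤ, 1 < q ∧ |α - (p : ℝ) / (q : ℝ)| ≤ (q : ℝ) ^ (-(n : ℤ))

/-!
Chernoff's method applied to the weights `z ^ ω(n)`. Uniformly for bounded `z ≥ 0`,
`∑_{n ≤ x} z ^ ω(n) = O(x (log x) ^ (z - 1))`: the logarithmic mean `∑_{n ≤ x} z ^ ω(n) / n` is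
bounded by an Euler product at `1 + 1 / log x`, and `log = Λ * 1` together with Chebyshev's bound
passes to the ordinary mean at the cost of a factor `x / log x`. Taking `z = 1 ± δ`, at most
`O(x exp(-δ² log log x / 6))` integers satisfy `|ω(n) - log log x| ≥ δ log log x`; with
`δ = (log log x) ^ (α - 1) / 2` this beats every power of `log log x` as soon as `1/2 < α ≤ 1`.
Finally `log log n` and `log log x` differ by at most `1` for `√x < n ≤ x`.
-/

section EulerProduct

lemma sum_Ioc_le_prod_primesBelow_tsum {g : ℕ → ℝ} (hg₁ : g 1 = 1)
    (hmul : ∀ {m n}, Nat.Coprime m n → g (m * n) = g m * g n) (hg : ∀ n, 0 ≤ g n)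
    (hsum : ∀ {p : ℕ}, p.Prime → Summable fun k : ℕ => g (p ^ k)) (N : ℕ) :
    ∑ n ∈ Ioc 0 N, g n ≤ ∏ p ∈ (N + 1).primesBelow, ∑' k : ℕ, g (p ^ k) := by
  have hnorm : ∀ {p : ℕ}, p.Prime → Summable fun k : ℕ => ‖g (p ^ k)‖ := fun hp => by
    simpa only [norm_of_nonneg (hg _)] using hsum hp
  have hprod := (EulerProduct.summable_and_hasSum_smoothNumbers_prod_primesBelow_tsum
    hg₁ hmul hnorm (N + 1)).2
  have hsmooth : ∀ n ∈ Ioc 0 N, n ∈ (N + 1).smoothNumbers := fun n hn =>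
    Nat.mem_smoothNumbers_of_lt (mem_Ioc.1 hn).1 (Nat.lt_succ_of_le (mem_Ioc.1 hn).2)
  calc ∑ n ∈ Ioc 0 N, g n = ∑ n ∈ Ioc 0 N, (N + 1).smoothNumbers.indicator g n :=
        sum_congr rfl fun n hn => (Set.indicator_of_mem (hsmooth n hn) g).symm
    _ ≤ _ := sum_le_hasSum _ (fun n _ => Set.indicator_nonneg (fun m _ => hg m) n)
        (hasSum_subtype_iff_indicator.1 hprod)

lemma tsum_rpow_neg_le {s : ℝ} (hs : 1 < s) : ∑' n : ℕ, (n : ℝ) ^ (-s) ≤ 1 + (s - 1)⁻¹ := by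
  have hsummable : Summable fun n : ℕ => (n : ℝ) ^ (-s) := summable_nat_rpow.2 (by linarith)
  have hshift : ∑' n : ℕ, (n : ℝ) ^ (-s) = ∑' n : ℕ, 1 / (n + 1 : ℝ) ^ s := by
    rw [hsummable.tsum_eq_zero_add, Nat.cast_zero, zero_rpow (by linarith), zero_add]
    refine tsum_congr fun n => ?_
    rw [one_div, ← rpow_neg (by positivity), Nat.cast_add_one]
  have hterm : 0 ≤ ZetaAsymptotics.termTSum s :=
    tsum_nonneg fun n => ZetaAsymptotics.term_nonneg _ _
  have hzeta := ZetaAsymptotics.zeta_limit_aux1 hs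
  rw [one_div (s - 1)] at hzeta
  rw [hshift]
  nlinarith

lemma prime_rpow_neg_le_inv {s : ℝ} (hs : 1 ≤ s) {p : ℕ} (hp : p.Prime) :
    (p : ℝ) ^ (-s) ≤ (p : ℝ)⁻¹ := by
  rw [← rpow_neg_one]
  exact rpow_le_rpow_of_exponent_le (by exact_mod_cast hp.one_le) (by linarith)

lemma prime_rpow_neg_le_half {s : ℝ} (hs : 1 ≤ s) {p : ℕ} (hp : p.Prime) :
    (p : ℝ) ^ (-s) ≤ 1 / 2 := by
  refine (prime_rpow_neg_le_inv hs hp).trans ?_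
  rw [← one_div]
  exact one_div_le_one_div_of_le two_pos (by exact_mod_cast hp.two_le)

lemma sum_primesBelow_rpow_neg_le {s : ℝ} (hs : 1 < s) (N : ℕ) :
    ∑ p ∈ N.primesBelow, (p : ℝ) ^ (-s) ≤ log (1 + (s - 1)⁻¹) := by
  let f : ℕ →* ℝ :=
    { toFun n := (n : ℝ) ^ (-s)
      map_one' := by simp
      map_mul' m n := by rw [Nat.cast_mul, mul_rpow m.cast_nonneg n.cast_nonneg] }
  have hsummable : Summable f := summable_nat_rpow.2 (by linarith)
  rw [le_log_iff_exp_le (by have := inv_pos.2 (sub_pos.2 hs); linarith), exp_sum]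
  calc ∏ p ∈ N.primesBelow, exp ((p : ℝ) ^ (-s)) ≤ ∏ p ∈ N.primesBelow, (1 - f p)⁻¹ := by
        refine prod_le_prod (fun p _ => (exp_pos _).le) fun p hp => ?_
        have hhalf : f p ≤ 1 / 2 := prime_rpow_neg_le_half hs.le (Nat.prime_of_mem_primesBelow hp)
        rw [le_inv_comm₀ (exp_pos _) (by linarith), ← exp_neg]
        exact one_sub_le_exp_neg (f p)
    _ = ∑' n : N.smoothNumbers, f n :=
        EulerProduct.prod_primesBelow_geometric_eq_tsum_smoothNumbers hsummable N
    _ ≤ ∑' n : ℕ, f n := hsummable.tsum_subtype_le _ _ fun n => rpow_nonneg n.cast_nonneg _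
    _ ≤ 1 + (s - 1)⁻¹ := tsum_rpow_neg_le hs

lemma inv_prime_rpow_sub_one_le {s : ℝ} (hs : 1 ≤ s) {p : ℕ} (hp : p.Prime) :
    ((p : ℝ) ^ s - 1)⁻¹ ≤ (p : ℝ) ^ (-s) + 2 * ((p : ℝ) ^ 2)⁻¹ := by
  have hp0 : (0 : ℝ) < p := by exact_mod_cast hp.pos
  have hhalf := prime_rpow_neg_le_half hs hp
  have hinv := prime_rpow_neg_le_inv hs hp
  have hx : 0 < (p : ℝ) ^ (-s) := by positivity
  have hgeom : ((p : ℝ) ^ s - 1)⁻¹ = (p : ℝ) ^ (-s) / (1 - (p : ℝ) ^ (-s)) := by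
    rw [rpow_neg hp0.le]
    field_simp
  rw [hgeom, ← inv_pow]
  calc (p : ℝ) ^ (-s) / (1 - (p : ℝ) ^ (-s)) ≤ (p : ℝ) ^ (-s) + 2 * ((p : ℝ) ^ (-s)) ^ 2 := by
        rw [div_le_iff₀ (by linarith)]
        nlinarith [mul_pos hx hx]
    _ ≤ (p : ℝ) ^ (-s) + 2 * (p : ℝ)⁻¹ ^ 2 := by gcongr

lemma sum_primesBelow_inv_rpow_sub_one_le {s : ℝ} (hs : 1 < s) (N : ℕ) :
    ∑ p ∈ N.primesBelow, ((p : ℝ) ^ s - 1)⁻¹ ≤ log (1 + (s - 1)⁻¹) + 4 := by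
  have hsq : ∑ p ∈ N.primesBelow, ((p : ℝ) ^ 2)⁻¹ ≤ 2 := by
    calc ∑ p ∈ N.primesBelow, ((p : ℝ) ^ 2)⁻¹ ≤ ∑ n ∈ Ioo 0 N, ((n : ℝ) ^ 2)⁻¹ :=
          sum_le_sum_of_subset_of_nonneg (fun p hp => mem_Ioo.2
            ⟨(Nat.prime_of_mem_primesBelow hp).pos, Nat.lt_of_mem_primesBelow hp⟩)
            fun n _ _ => by positivity
      _ ≤ 2 := by simpa using sum_Ioo_inv_sq_le (α := ℝ) 0 N
  calc ∑ p ∈ N.primesBelow, ((p : ℝ) ^ s - 1)⁻¹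
      ≤ ∑ p ∈ N.primesBelow, ((p : ℝ) ^ (-s) + 2 * ((p : ℝ) ^ 2)⁻¹) :=
        sum_le_sum fun p hp => inv_prime_rpow_sub_one_le hs.le (Nat.prime_of_mem_primesBelow hp)
    _ = ∑ p ∈ N.primesBelow, (p : ℝ) ^ (-s) + 2 * ∑ p ∈ N.primesBelow, ((p : ℝ) ^ 2)⁻¹ := by
        rw [sum_add_distrib, mul_sum]
    _ ≤ log (1 + (s - 1)⁻¹) + 4 := by linarith [sum_primesBelow_rpow_neg_le hs N]

end EulerProduct

section HallTenenbaum

open ArithmeticFunction hiding log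

variable {f : ArithmeticFunction ℝ} {K x : ℝ}

/- Expanding `log n = ∑_{d ∣ n} Λ d` and factoring `n = a d` moves the weight to `f a ψ(x / a)`. -/
lemma sum_mul_log_le (hf : ∀ n, 0 ≤ f n) (hK : 0 ≤ K)
    (hfK : ∀ a d, IsPrimePow d → f (a * d) ≤ K * f a) (hx : 0 ≤ x) :
    ∑ n ∈ Ioc 0 ⌊x⌋₊, f n * log n ≤ K * (log 4 + 4) * x * ∑ n ∈ Ioc 0 ⌊x⌋₊, f n / n := by
  have hconv (n : ℕ) : f n * log n ≤ K * (f * vonMangoldt) n := by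
    rw [← vonMangoldt_sum, ArithmeticFunction.mul_apply, mul_sum, mul_sum,
      ← Nat.sum_divisorsAntidiagonal' fun _ d => f n * vonMangoldt d]
    refine sum_le_sum fun ⟨a, d⟩ had => ?_
    obtain ⟨rfl, -⟩ := Nat.mem_divisorsAntidiagonal.1 had
    rw [← mul_assoc]
    by_cases hd : IsPrimePow d
    · exact mul_le_mul_of_nonneg_right (hfK a d hd) vonMangoldt_nonneg
    · simp only [vonMangoldt_eq_zero_iff.2 hd, mul_zero, le_refl]
  calc ∑ n ∈ Ioc 0 ⌊x⌋₊, f n * log n ≤ ∑ n ∈ Ioc 0 ⌊x⌋₊, K * (f * vonMangoldt) n :=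
        sum_le_sum fun n _ => hconv n
    _ = K * ∑ a ∈ Ioc 0 ⌊x⌋₊, f a * Chebyshev.psi (x / a) := by
        simp only [← mul_sum, sum_Ioc_mul_eq_sum_sum, Chebyshev.psi, Nat.floor_div_natCast]
    _ ≤ K * ∑ a ∈ Ioc 0 ⌊x⌋₊, f a * ((log 4 + 4) * (x / a)) := by
        gcongr with a
        · exact hf a
        · exact Chebyshev.psi_le_const_mul_self (by positivity)
    _ = K * (log 4 + 4) * x * ∑ n ∈ Ioc 0 ⌊x⌋₊, f n / n := by
        rw [mul_sum, mul_sum]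
        exact sum_congr rfl fun n _ => by ring

lemma sum_mul_log_div_le (hf : ∀ n, 0 ≤ f n) (hx : 0 < x) :
    ∑ n ∈ Ioc 0 ⌊x⌋₊, f n * log (x / n) ≤ x * ∑ n ∈ Ioc 0 ⌊x⌋₊, f n / n := by
  rw [mul_sum]
  refine sum_le_sum fun n hn => ?_
  have hn0 : (0 : ℝ) < n := by exact_mod_cast (mem_Ioc.1 hn).1
  calc f n * log (x / n) ≤ f n * (x / n) :=
        mul_le_mul_of_nonneg_left (log_le_self (by positivity)) (hf n)
    _ = x * (f n / n) := by ring

theorem sum_mul_log_le_sum_div (hf : ∀ n, 0 ≤ f n) (hK : 0 ≤ K)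
    (hfK : ∀ a d, IsPrimePow d → f (a * d) ≤ K * f a) (hx : 0 < x) :
    (∑ n ∈ Ioc 0 ⌊x⌋₊, f n) * log x ≤
      (K * (log 4 + 4) + 1) * x * ∑ n ∈ Ioc 0 ⌊x⌋₊, f n / n := by
  have hsplit : (∑ n ∈ Ioc 0 ⌊x⌋₊, f n) * log x =
      ∑ n ∈ Ioc 0 ⌊x⌋₊, f n * log n + ∑ n ∈ Ioc 0 ⌊x⌋₊, f n * log (x / n) := by
    rw [sum_mul, ← sum_add_distrib]
    refine sum_congr rfl fun n hn => ?_
    have hn0 : (n : ℝ) ≠ 0 := by exact_mod_cast (mem_Ioc.1 hn).1.ne'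
    rw [log_div hx.ne' hn0]
    ring
  rw [hsplit]
  linarith [sum_mul_log_le hf hK hfK hx.le, sum_mul_log_div_le hf hx]

/- Rankin's trick: `n ^ (1 / log x) ≤ e` for `n ≤ x`. -/
lemma sum_div_le_exp_one_mul_sum_div_rpow (hf : ∀ n, 0 ≤ f n) (hx : 1 < x) :
    ∑ n ∈ Ioc 0 ⌊x⌋₊, f n / n ≤
      exp 1 * ∑ n ∈ Ioc 0 ⌊x⌋₊, f n / (n : ℝ) ^ (1 + (log x)⁻¹) := by
  have hlog : 0 < log x := log_pos hx
  rw [mul_sum]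
  refine sum_le_sum fun n hn => ?_
  have hn0 : (0 : ℝ) < n := by exact_mod_cast (mem_Ioc.1 hn).1
  have hnx : (n : ℝ) ≤ x := (Nat.le_floor_iff (by linarith)).1 (mem_Ioc.1 hn).2
  have hrankin : (n : ℝ) ^ (log x)⁻¹ ≤ exp 1 := by
    rw [rpow_def_of_pos hn0, exp_le_exp, ← div_eq_mul_inv, div_le_one hlog]
    exact log_le_log hn0 hnx
  rw [rpow_add hn0, rpow_one, ← div_div, mul_div_assoc', le_div_iff₀ (by positivity), mul_comm]
  exact mul_le_mul_of_nonneg_right hrankin (div_nonneg (hf n) hn0.le)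

end HallTenenbaum

section PowOmega

/-- The multiplicative function `n ↦ z ^ ω(n)`, whose mean values control the distribution of `ω`.
As an arithmetic function it is `0` at `0`. -/
noncomputable def powOmega (z : ℝ) : ArithmeticFunction ℝ :=
  ⟨fun n => if n = 0 then 0 else z ^ #n.primeFactors, if_pos rfl⟩

lemma powOmega_apply (z : ℝ) {n : ℕ} (hn : n ≠ 0) : powOmega z n = z ^ #n.primeFactors :=
  if_neg hn

lemma powOmega_nonneg {z : ℝ} (hz : 0 ≤ z) (n : ℕ) : 0 ≤ powOmega z n := by
  rcases eq_or_ne n 0 with rfl | hn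
  · rw [ArithmeticFunction.map_zero]
  · rw [powOmega_apply z hn]
    positivity

lemma isMultiplicative_powOmega (z : ℝ) : (powOmega z).IsMultiplicative := by
  refine ArithmeticFunction.IsMultiplicative.iff_ne_zero.2
    ⟨by simp [powOmega_apply z one_ne_zero], fun {m n} hm hn hmn => ?_⟩
  rw [powOmega_apply z (mul_ne_zero hm hn), powOmega_apply z hm, powOmega_apply z hn,
    hmn.primeFactors_mul, card_union_of_disjoint hmn.disjoint_primeFactors, pow_add]

lemma powOmega_prime_pow_succ (z : ℝ) {p : ℕ} (hp : p.Prime) (k : ℕ) :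
    powOmega z (p ^ (k + 1)) = z := by
  rw [powOmega_apply z (pow_ne_zero _ hp.ne_zero), Nat.primeFactors_prime_pow k.succ_ne_zero hp,
    card_singleton, pow_one]

lemma powOmega_mul_le {z : ℝ} (hz : 0 ≤ z) (a : ℕ) {d : ℕ} (hd : IsPrimePow d) :
    powOmega z (a * d) ≤ max 1 z * powOmega z a := by
  rcases eq_or_ne a 0 with rfl | ha
  · simp only [zero_mul, ArithmeticFunction.map_zero, mul_zero, le_refl]
  obtain ⟨p, k, hp, hk, rfl⟩ := hd
  have hfactors : (a * p ^ k).primeFactors = insert p a.primeFactors := by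
    rw [Nat.primeFactors_mul ha (pow_ne_zero k hp.ne_zero),
      Nat.primeFactors_prime_pow hk.ne' hp.nat_prime, union_comm, insert_eq]
  have hza : 0 ≤ z ^ #a.primeFactors := pow_nonneg hz _
  rw [powOmega_apply z ha, powOmega_apply z (mul_ne_zero ha (pow_ne_zero k hp.ne_zero)), hfactors]
  by_cases hpa : p ∈ a.primeFactors
  · rw [insert_eq_of_mem hpa]
    exact le_mul_of_one_le_left hza (le_max_left 1 z)
  · rw [card_insert_of_notMem hpa, pow_succ']
    exact mul_le_mul_of_nonneg_right (le_max_right 1 z) hza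

lemma hasSum_powOmega_prime_pow_div (z : ℝ) {s : ℝ} (hs : 0 < s) {p : ℕ} (hp : p.Prime) :
    HasSum (fun k : ℕ => powOmega z (p ^ k) / ((p ^ k : ℕ) : ℝ) ^ s)
      (1 + z * ((p : ℝ) ^ s - 1)⁻¹) := by
  have hp1 : (1 : ℝ) < p := by exact_mod_cast hp.one_lt
  have hps : 1 < (p : ℝ) ^ s := one_lt_rpow hp1 hs
  have hterm (k : ℕ) : powOmega z (p ^ (k + 1)) / ((p ^ (k + 1) : ℕ) : ℝ) ^ s =
      z * ((p : ℝ) ^ s)⁻¹ * ((p : ℝ) ^ s)⁻¹ ^ k := by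
    rw [powOmega_prime_pow_succ z hp, Nat.cast_pow, ← rpow_pow_comm p.cast_nonneg, div_eq_mul_inv,
      mul_assoc, ← pow_succ', inv_pow]
  have htail := (hasSum_geometric_of_lt_one (by positivity) (inv_lt_one_of_one_lt₀ hps)).mul_left
    (z * ((p : ℝ) ^ s)⁻¹)
  simp only [← hterm] at htail
  have hsum := (hasSum_nat_add_iff
    (f := fun k : ℕ => powOmega z (p ^ k) / ((p ^ k : ℕ) : ℝ) ^ s) 1).1 htail
  rw [sum_range_one, pow_zero, (isMultiplicative_powOmega z).map_one, Nat.cast_one, one_rpow,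
    div_one] at hsum
  have hvalue : z * ((p : ℝ) ^ s)⁻¹ * (1 - ((p : ℝ) ^ s)⁻¹)⁻¹ + 1 =
      1 + z * ((p : ℝ) ^ s - 1)⁻¹ := by
    rw [mul_assoc, ← mul_inv, mul_sub, mul_inv_cancel₀ (by positivity), mul_one, add_comm]
  rwa [hvalue] at hsum

lemma sum_powOmega_div_rpow_le {z s : ℝ} (hz : 0 ≤ z) (hs : 1 < s) (N : ℕ) :
    ∑ n ∈ Ioc 0 N, powOmega z n / (n : ℝ) ^ s ≤ exp (z * (log (1 + (s - 1)⁻¹) + 4)) := by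
  have hlocal {p : ℕ} (hp : p.Prime) := hasSum_powOmega_prime_pow_div z (by linarith : 0 < s) hp
  calc ∑ n ∈ Ioc 0 N, powOmega z n / (n : ℝ) ^ s
      ≤ ∏ p ∈ (N + 1).primesBelow, ∑' k : ℕ, powOmega z (p ^ k) / ((p ^ k : ℕ) : ℝ) ^ s := by
        refine sum_Ioc_le_prod_primesBelow_tsum (g := fun n => powOmega z n / (n : ℝ) ^ s)
          ?_ (fun {m n} hmn => ?_) (fun n => ?_) (fun hp => (hlocal hp).summable) N
        · rw [(isMultiplicative_powOmega z).map_one, Nat.cast_one, one_rpow, div_one]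
        · rw [(isMultiplicative_powOmega z).map_mul_of_coprime hmn, Nat.cast_mul,
            mul_rpow m.cast_nonneg n.cast_nonneg, mul_div_mul_comm]
        · exact div_nonneg (powOmega_nonneg hz n) (by positivity)
    _ = ∏ p ∈ (N + 1).primesBelow, (1 + z * ((p : ℝ) ^ s - 1)⁻¹) :=
        prod_congr rfl fun p hp => (hlocal (Nat.prime_of_mem_primesBelow hp)).tsum_eq
    _ ≤ ∏ p ∈ (N + 1).primesBelow, exp (z * ((p : ℝ) ^ s - 1)⁻¹) := by
        refine prod_le_prod (fun p hp => ?_) fun p _ => ?_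
        · rw [← (hlocal (Nat.prime_of_mem_primesBelow hp)).tsum_eq]
          exact tsum_nonneg fun k => div_nonneg (powOmega_nonneg hz _) (by positivity)
        · rw [add_comm]
          exact add_one_le_exp _
    _ = exp (z * ∑ p ∈ (N + 1).primesBelow, ((p : ℝ) ^ s - 1)⁻¹) := by rw [mul_sum, exp_sum]
    _ ≤ exp (z * (log (1 + (s - 1)⁻¹) + 4)) := by
        gcongr
        exact sum_primesBelow_inv_rpow_sub_one_le hs (N + 1)

lemma sum_powOmega_div_le {z x : ℝ} (hz : 0 ≤ z) (hx : 1 < x) :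
    ∑ n ∈ Ioc 0 ⌊x⌋₊, powOmega z n / n ≤ exp (4 * z + 1) * (1 + log x) ^ z := by
  have hlog : 0 < log x := log_pos hx
  calc ∑ n ∈ Ioc 0 ⌊x⌋₊, powOmega z n / n
      ≤ exp 1 * ∑ n ∈ Ioc 0 ⌊x⌋₊, powOmega z n / (n : ℝ) ^ (1 + (log x)⁻¹) :=
        sum_div_le_exp_one_mul_sum_div_rpow (powOmega_nonneg hz) hx
    _ ≤ exp 1 * exp (z * (log (1 + (1 + (log x)⁻¹ - 1)⁻¹) + 4)) := by
        gcongr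
        exact sum_powOmega_div_rpow_le hz (lt_add_of_pos_right 1 (inv_pos.2 hlog)) _
    _ = exp (4 * z + 1) * (1 + log x) ^ z := by
        rw [add_sub_cancel_left, inv_inv, rpow_def_of_pos (by positivity), ← exp_add, ← exp_add]
        ring_nf

theorem exists_sum_powOmega_le (Z : ℝ) : ∃ C, 0 ≤ C ∧ ∀ z, 0 ≤ z → z ≤ Z → ∀ x, 2 ≤ x →
    ∑ n ∈ Ioc 0 ⌊x⌋₊, powOmega z n ≤ C * x * log x ^ (z - 1) := by
  refine ⟨(max 1 Z * (log 4 + 4) + 1) * (exp (4 * Z + 1) * 3 ^ Z), by positivity,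
    fun z hz hzZ x hx => ?_⟩
  have hlog_half : 1 / 2 ≤ log x := by
    linarith [log_two_gt_d9, log_le_log two_pos hx]
  have hlog : 0 < log x := by linarith
  have hmean : ∑ n ∈ Ioc 0 ⌊x⌋₊, powOmega z n / n ≤ exp (4 * Z + 1) * 3 ^ Z * log x ^ z := by
    calc ∑ n ∈ Ioc 0 ⌊x⌋₊, powOmega z n / n ≤ exp (4 * z + 1) * (1 + log x) ^ z :=
          sum_powOmega_div_le hz (by linarith)
      _ ≤ exp (4 * z + 1) * (3 * log x) ^ z := by
          gcongr
          linarith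
      _ = exp (4 * z + 1) * 3 ^ z * log x ^ z := by
          rw [mul_rpow (by norm_num) hlog.le, mul_assoc]
      _ ≤ exp (4 * Z + 1) * 3 ^ Z * log x ^ z := by
          gcongr
          norm_num
  have hmean_nonneg : 0 ≤ ∑ n ∈ Ioc 0 ⌊x⌋₊, powOmega z n / n :=
    sum_nonneg fun n _ => div_nonneg (powOmega_nonneg hz n) n.cast_nonneg
  rw [rpow_sub_one hlog.ne', mul_div_assoc', le_div_iff₀ hlog]
  calc (∑ n ∈ Ioc 0 ⌊x⌋₊, powOmega z n) * log x
      ≤ (max 1 z * (log 4 + 4) + 1) * x * ∑ n ∈ Ioc 0 ⌊x⌋₊, powOmega z n / n :=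
        sum_mul_log_le_sum_div (powOmega_nonneg hz) (by positivity)
          (fun a d hd => powOmega_mul_le hz a hd) (by linarith)
    _ ≤ (max 1 Z * (log 4 + 4) + 1) * x * (exp (4 * Z + 1) * 3 ^ Z * log x ^ z) := by
        gcongr
    _ = _ := by ring

end PowOmega

section LargeDeviations

open InformationTheory (klFun klFun_zero klFun_apply)

lemma sq_sqrt_sub_one_le_klFun {x : ℝ} (hx : 0 ≤ x) : (√x - 1) ^ 2 ≤ klFun x := by
  rcases hx.eq_or_lt with rfl | hx
  · norm_num [klFun_zero]
  have hsqrt : 0 < √x := sqrt_pos.2 hx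
  have hlog : 2 * (1 - (√x)⁻¹) ≤ log x := by
    have := one_sub_inv_le_log_of_pos hsqrt
    rw [log_sqrt hx.le] at this
    linarith
  have hmul : x * (2 * (1 - (√x)⁻¹)) = 2 * x - 2 * √x := by
    nth_rw 1 [← sq_sqrt hx.le]
    nth_rw 3 [← sq_sqrt hx.le]
    field_simp
  rw [klFun_apply]
  nlinarith [mul_le_mul_of_nonneg_left hlog hx.le, sq_sqrt hx.le]

lemma sub_one_sq_div_six_le_klFun {x : ℝ} (hx : 0 ≤ x) (hx2 : x ≤ 2) :
    (x - 1) ^ 2 / 6 ≤ klFun x := by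
  have hsq : √x ^ 2 = x := sq_sqrt hx
  have hbound : (√x + 1) ^ 2 ≤ 6 := by nlinarith [sqrt_nonneg x]
  calc (x - 1) ^ 2 / 6 = (√x - 1) ^ 2 * ((√x + 1) ^ 2 / 6) := by
        nth_rw 1 [← hsq]
        ring
    _ ≤ (√x - 1) ^ 2 := mul_le_of_le_one_right (sq_nonneg _) (by linarith)
    _ ≤ klFun x := sq_sqrt_sub_one_le_klFun hx

/- Chernoff's method; the sign of `log z` decides which tail is counted. -/
theorem exists_card_tail_le (Z : ℝ) : ∃ C, 0 ≤ C ∧ ∀ z, 0 < z → z ≤ Z → ∀ x, 2 ≤ x →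
    (#{n ∈ Ioc 0 ⌊x⌋₊ | 0 ≤ log z * (#n.primeFactors - z * log (log x))} : ℝ) ≤
      C * x * exp (-(klFun z * log (log x))) := by
  obtain ⟨C, hC, hsum⟩ := exists_sum_powOmega_le Z
  refine ⟨C, hC, fun z hz hzZ x hx => ?_⟩
  set tail := {n ∈ Ioc 0 ⌊x⌋₊ | 0 ≤ log z * (#n.primeFactors - z * log (log x))}
  have hweight : ∀ n ∈ tail, exp (log z * (z * log (log x))) ≤ powOmega z n := fun n hn => by
    obtain ⟨hn, hdev⟩ := mem_filter.1 hn
    rw [powOmega_apply z (mem_Ioc.1 hn).1.ne', ← rpow_natCast, rpow_def_of_pos hz, exp_le_exp]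
    linarith
  have hmarkov : #tail * exp (log z * (z * log (log x))) ≤ C * x * log x ^ (z - 1) :=
    calc #tail * exp (log z * (z * log (log x))) ≤ ∑ n ∈ tail, powOmega z n := by
          rw [← nsmul_eq_mul]
          exact card_nsmul_le_sum _ _ _ hweight
      _ ≤ ∑ n ∈ Ioc 0 ⌊x⌋₊, powOmega z n :=
          sum_le_sum_of_subset_of_nonneg (filter_subset _ _) fun n _ _ => powOmega_nonneg hz.le n
      _ ≤ C * x * log x ^ (z - 1) := hsum z hz.le hzZ x hx
  rw [← le_div_iff₀ (exp_pos _), rpow_def_of_pos (log_pos (by linarith)), mul_div_assoc,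
    ← exp_sub] at hmarkov
  convert! hmarkov using 3
  rw [klFun_apply]
  ring

theorem exists_card_abs_sub_loglog_ge_le : ∃ C, 0 ≤ C ∧ ∀ δ, 0 ≤ δ → δ < 1 → ∀ x, exp 1 ≤ x →
    (#{n ∈ Ioc 0 ⌊x⌋₊ | δ * log (log x) ≤ |(#n.primeFactors : ℝ) - log (log x)|} : ℝ) ≤
      C * x * exp (-(δ ^ 2 / 6 * log (log x))) := by
  obtain ⟨C, hC, htail⟩ := exists_card_tail_le 2
  refine ⟨2 * C, by positivity, fun δ hδ hδ1 x hx => ?_⟩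
  have hx2 : 2 ≤ x := by linarith [add_one_le_exp (1 : ℝ)]
  have hloglog : 0 ≤ log (log x) := log_nonneg ((le_log_iff_exp_le (by linarith)).2 hx)
  set tail := fun z : ℝ => {n ∈ Ioc 0 ⌊x⌋₊ | 0 ≤ log z * (#n.primeFactors - z * log (log x))}
  have hcover : {n ∈ Ioc 0 ⌊x⌋₊ | δ * log (log x) ≤ |(#n.primeFactors : ℝ) - log (log x)|} ⊆
      tail (1 + δ) ∪ tail (1 - δ) := fun n hn => by
    obtain ⟨hn, hdev⟩ := mem_filter.1 hn
    rcases le_abs.1 hdev with hdev | hdev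
    · refine mem_union_left _ (mem_filter.2 ⟨hn, mul_nonneg (log_nonneg ?_) ?_⟩) <;> linarith
    · refine mem_union_right _
        (mem_filter.2 ⟨hn, mul_nonneg_of_nonpos_of_nonpos (log_nonpos ?_ ?_) ?_⟩) <;> linarith
  have hcard (z : ℝ) (hz : 0 < z) (hz2 : z ≤ 2) (hzδ : (z - 1) ^ 2 = δ ^ 2) :
      (#(tail z) : ℝ) ≤ C * x * exp (-(δ ^ 2 / 6 * log (log x))) := by
    refine (htail z hz hz2 x hx2).trans ?_
    gcongr
    exact hzδ ▸ sub_one_sq_div_six_le_klFun hz.le hz2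
  calc _ ≤ ((#(tail (1 + δ)) + #(tail (1 - δ)) : ℕ) : ℝ) := by
        exact_mod_cast (card_le_card hcover).trans (card_union_le _ _)
    _ ≤ 2 * C * x * exp (-(δ ^ 2 / 6 * log (log x))) := by
        push_cast
        linarith [hcard (1 + δ) (by linarith) (by linarith) (by ring),
          hcard (1 - δ) (by linarith) (by linarith) (by ring)]

end LargeDeviations

section HardyRamanujan

open Filter

/-- The integers `3 ≤ n ≤ x` for which `ω(n)` deviates from `log log n` by more than
`(log log n) ^ α`. -/
noncomputable def atypical (α x : ℝ) : Finset ℕ :=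
  {n ∈ Icc 3 ⌊x⌋₊ | |(#n.primeFactors : ℝ) - log (log n)| > log (log n) ^ α}

lemma abs_loglog_sub_le_one {x y : ℝ} (hx : exp 1 ≤ x) (hy : √x < y) (hyx : y ≤ x) :
    |log (log x) - log (log y)| ≤ 1 := by
  have hx0 : 0 < x := (exp_pos 1).trans_le hx
  have hy0 : 0 < y := (sqrt_nonneg x).trans_lt hy
  have hlogx : 1 ≤ log x := (le_log_iff_exp_le hx0).2 hx
  have hhalf : log x / 2 ≤ log y := by
    rw [← log_sqrt hx0.le]
    exact log_le_log (sqrt_pos.2 hx0) hy.le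
  have hlower := log_le_log (by linarith) hhalf
  rw [log_div (by linarith) two_ne_zero] at hlower
  have hupper := log_le_log (by linarith) (log_le_log hy0 hyx)
  rw [abs_le]
  constructor <;> linarith [log_two_lt_d9]

lemma half_rpow_add_one_le_rpow {κ L l : ℝ} (hκ : 0 ≤ κ) (hκ1 : κ ≤ 1) (hL : 1 ≤ L)
    (hLκ : 4 ≤ L ^ κ) (hl : L - 1 ≤ l) : L ^ κ / 2 + 1 ≤ l ^ κ := by
  have hsub : L ^ κ ≤ (L - 1) ^ κ + 1 := by
    simpa only [sub_add_cancel, one_rpow] using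
      rpow_add_le_add_rpow (sub_nonneg.2 hL) zero_le_one hκ hκ1
  have hmono : (L - 1) ^ κ ≤ l ^ κ := rpow_le_rpow (sub_nonneg.2 hL) hl hκ
  linarith

lemma atypical_subset {α κ x : ℝ} (hκ : 0 ≤ κ) (hκ1 : κ ≤ 1) (hκα : κ ≤ α) (hx : exp 1 ≤ x)
    (hL : 2 ≤ log (log x)) (hLκ : 4 ≤ log (log x) ^ κ) :
    atypical α x ⊆ Ioc 0 ⌊√x⌋₊ ∪
      {n ∈ Ioc 0 ⌊x⌋₊ | log (log x) ^ κ / 2 ≤ |(#n.primeFactors : ℝ) - log (log x)|} := by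
  intro n hn
  obtain ⟨hn, hdev⟩ := mem_filter.1 hn
  obtain ⟨hn3, hnx⟩ := mem_Icc.1 hn
  have hn0 : 0 < n := by omega
  rcases le_or_gt n ⌊√x⌋₊ with hsmall | hlarge
  · exact mem_union_left _ (mem_Ioc.2 ⟨hn0, hsmall⟩)
  refine mem_union_right _ (mem_filter.2 ⟨mem_Ioc.2 ⟨hn0, hnx⟩, ?_⟩)
  have hclose := abs_loglog_sub_le_one hx ((Nat.floor_lt (sqrt_nonneg x)).1 hlarge)
    ((Nat.le_floor_iff ((exp_pos 1).le.trans hx)).1 hnx)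
  have hl : log (log x) - 1 ≤ log (log n) := by linarith [(abs_le.1 hclose).2]
  have hthreshold : log (log x) ^ κ / 2 + 1 ≤ log (log n) ^ α :=
    (half_rpow_add_one_le_rpow hκ hκ1 (by linarith) hLκ hl).trans
      (rpow_le_rpow_of_exponent_le (by linarith) hκα)
  linarith [abs_sub_le (#n.primeFactors : ℝ) (log (log x)) (log (log n))]

lemma sqrt_le_two_mul_mul_exp_neg_loglog {x : ℝ} (hx : 1 < x) :
    √x ≤ 2 * x * exp (-log (log x)) := by
  have hx0 : 0 ≤ x := by linarith
  have hlog : log x ≤ 2 * √x := by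
    have := log_le_rpow_div hx0 (ε := 1 / 2) (by norm_num)
    rw [← sqrt_eq_rpow] at this
    linarith
  rw [exp_neg, exp_log (log_pos hx), ← div_eq_mul_inv, le_div_iff₀ (log_pos hx)]
  calc √x * log x ≤ √x * (2 * √x) := mul_le_mul_of_nonneg_left hlog (sqrt_nonneg x)
    _ = 2 * x := by rw [mul_left_comm, mul_self_sqrt hx0]

lemma tendsto_loglog_atTop : Tendsto (fun x => log (log x)) atTop atTop :=
  tendsto_log_atTop.comp tendsto_log_atTop

theorem exists_card_abs_sub_loglog_ge_half_rpow_le : ∃ C, 0 ≤ C ∧ ∀ κ : ℝ, κ ≤ 1 →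
    ∀ x, exp 1 ≤ x → 1 ≤ log (log x) →
    (#{n ∈ Ioc 0 ⌊x⌋₊ | log (log x) ^ κ / 2 ≤ |(#n.primeFactors : ℝ) - log (log x)|} : ℝ) ≤
      C * x * exp (-(log (log x) ^ (2 * κ - 1) / 24)) := by
  obtain ⟨C, hC, hdev⟩ := exists_card_abs_sub_loglog_ge_le
  refine ⟨C, hC, fun κ hκ x hx hL => ?_⟩
  set L := log (log x)
  have hL0 : 0 < L := by linarith
  have hδ : L ^ (κ - 1) ≤ 1 := rpow_le_one_of_one_le_of_nonpos hL (by linarith)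
  have hmul : L ^ (κ - 1) / 2 * L = L ^ κ / 2 := by
    rw [rpow_sub_one hL0.ne']
    field_simp
  have hexponent : (L ^ (κ - 1) / 2) ^ 2 / 6 * L = L ^ (2 * κ - 1) / 24 := by
    rw [two_mul, rpow_sub_one hL0.ne', rpow_sub_one hL0.ne', rpow_add hL0]
    field_simp
    norm_num
  have := hdev (L ^ (κ - 1) / 2) (by positivity) (by linarith) x hx
  rwa [hmul, hexponent] at this

theorem exists_eventually_card_atypical_le {α κ : ℝ} (hκ : 0 < κ) (hκ1 : κ ≤ 1) (hκα : κ ≤ α) :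
    ∃ C, 0 ≤ C ∧ ∀ᶠ x in atTop,
      (#(atypical α x) : ℝ) ≤ C * x * exp (-(log (log x) ^ (2 * κ - 1) / 24)) := by
  obtain ⟨C, hC, hlarge⟩ := exists_card_abs_sub_loglog_ge_half_rpow_le
  refine ⟨2 + C, by positivity, ?_⟩
  filter_upwards [eventually_ge_atTop (exp 1), tendsto_loglog_atTop.eventually_ge_atTop 2,
    ((tendsto_rpow_atTop hκ).comp tendsto_loglog_atTop).eventually_ge_atTop 4] with x hx hL hLκ
  have hcover := atypical_subset hκ.le hκ1 hκα hx hL hLκ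
  specialize hlarge κ hκ1 x hx (by linarith)
  set L := log (log x)
  have hx0 : 0 < x := (exp_pos 1).trans_le hx
  have hpow : L ^ (2 * κ - 1) ≤ L := by
    simpa only [rpow_one] using
      rpow_le_rpow_of_exponent_le (by linarith : 1 ≤ L) (by linarith : 2 * κ - 1 ≤ 1)
  have hsmall : (#(Ioc 0 ⌊√x⌋₊) : ℝ) ≤ 2 * x * exp (-(L ^ (2 * κ - 1) / 24)) := by
    rw [Nat.card_Ioc, Nat.sub_zero]
    calc (⌊√x⌋₊ : ℝ) ≤ √x := Nat.floor_le (sqrt_nonneg x)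
      _ ≤ 2 * x * exp (-L) :=
        sqrt_le_two_mul_mul_exp_neg_loglog ((one_lt_exp_iff.2 one_pos).trans_le hx)
      _ ≤ 2 * x * exp (-(L ^ (2 * κ - 1) / 24)) := by
        gcongr
        linarith
  calc (#(atypical α x) : ℝ)
      ≤ #(Ioc 0 ⌊√x⌋₊) + #{n ∈ Ioc 0 ⌊x⌋₊ | L ^ κ / 2 ≤ |(#n.primeFactors : ℝ) - L|} := by
        exact_mod_cast (card_le_card hcover).trans (card_union_le _ _)
    _ ≤ (2 + C) * x * exp (-(L ^ (2 * κ - 1) / 24)) := by linarith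

theorem statement7_general {α : ℝ} (hα : 1 / 2 < α) (β : ℝ) :
    ∀ᶠ x in atTop, (#(atypical α x) : ℝ) ≤ x / log (log x) ^ β := by
  set κ := min α 1
  have hκ : 1 / 2 < κ := lt_min hα (by norm_num)
  have hγ : 0 < 2 * κ - 1 := by linarith
  obtain ⟨C, hC, hcard⟩ := exists_eventually_card_atypical_le (by linarith : 0 < κ)
    (min_le_right α 1) (min_le_left α 1)
  have hdecay := ((isLittleO_exp_neg_mul_rpow_atTop (by norm_num : (0 : ℝ) < 1 / 24)
    (-β / (2 * κ - 1))).comp_tendsto ((tendsto_rpow_atTop hγ).comp tendsto_loglog_atTop)).def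
    (inv_pos.2 (by linarith : 0 < C + 1))
  filter_upwards [hcard, hdecay, eventually_ge_atTop 0,
    tendsto_loglog_atTop.eventually_gt_atTop 0] with x hcard hdecay hx hL
  set L := log (log x)
  have hexp : exp (-(L ^ (2 * κ - 1) / 24)) ≤ (C + 1)⁻¹ * L ^ (-β) := by
    simp only [Function.comp_apply] at hdecay
    rwa [← rpow_mul hL.le, mul_div_cancel₀ _ hγ.ne', norm_of_nonneg (exp_pos _).le,
      norm_of_nonneg (rpow_nonneg hL.le _), neg_mul, one_div_mul_eq_div] at hdecay
  calc (#(atypical α x) : ℝ) ≤ C * x * ((C + 1)⁻¹ * L ^ (-β)) := by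
        refine hcard.trans ?_
        gcongr
    _ = C / (C + 1) * (x / L ^ β) := by
        rw [rpow_neg hL.le]
        ring
    _ ≤ x / L ^ β :=
        mul_le_of_le_one_left (by positivity) ((div_le_one (by positivity)).2 (by linarith))

end HardyRamanujan

/-- For all sufficiently large `X`, the number of `3 ≤ n ≤ X` with
`|ω(n) - log log n| > (log log n)^(2/3)` is at most `X/(log log X)^(1/3)`. -/
theorem statement7 :
    ∃ X₀ : ℝ, ∀ X : ℝ, X ≥ X₀ →
      ((((Finset.Icc 3 ⌊X⌋₊).filter fun n : ℕ =>
          |(n.primeFactors.card : ℝ) - Real.log (Real.log (n : ℝ))| >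
            (Real.log (Real.log (n : ℝ))) ^ ((2 : ℝ) / 3)).card : ℝ))
        ≤ X / (Real.log (Real.log X)) ^ ((1 : ℝ) / 3) :=
  Filter.eventually_atTop.1 (statement7_general (α := 2 / 3) (by norm_num) (1 / 3))
end

section
/- Let P ∈ ℝ[x] be a polynomial whose coefficient of x is non-Liouville, and let μ ∈ (0,1), C > 0, C₀ > 0 be constants such that for every positive integer d and every real X with X/d > C one has |#A_d(X) − X/d²| ≤ C₀·(X/d)^{1−μ}. Fix ε ∈ (0,1) and A > 0, set c = 1/(2(A+1)) and z = X^{c/log log X}. Then there is a constant C₁ > 0 such that for all sufficiently large X, the sum of #A_d(X) over all integers d with 1 < d ≤ X/(log z)^ε and gcd(d, P_z) = 1 is at most C₁·X/(log z)^{εμ}. -/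
open Real Finset

/-!
An integer `d > 1` coprime to `P_z` is at least `z`, so the main terms `X/d²` contribute at most
`2X/z`, and every fixed power of `log z` is eventually below `z`. The error terms
`C₀ (X/d)^(1-μ)` are summed over all `d ≤ y = X/(log z)^ε`: since `∑_{d ≤ y} d^(μ-1) ≪ y^μ`,
they contribute `≪ X^(1-μ) y^μ = X/(log z)^(εμ)`. The same cutoff gives `X/d ≥ (log z)^ε`,
which eventually exceeds `C`, so the assumed bound applies to every `d` in the sum.
-/

theorem prime_dvd_Pz {p : ℕ} {z : ℝ} (hp : p.Prime) (hpz : (p : ℝ) < z) : p ∣ Pz z :=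
  Finset.dvd_prod_of_mem (fun q => q) <|
    Finset.mem_filter.mpr ⟨Finset.mem_range.mpr (Nat.lt_ceil.mpr hpz), hp, hpz⟩

theorem le_minFac_of_coprime_Pz {d : ℕ} {z : ℝ} (hd : d ≠ 1) (hcop : d.Coprime (Pz z)) :
    z ≤ d.minFac := by
  by_contra! hlt
  have hp : d.minFac.Prime := Nat.minFac_prime hd
  exact Nat.not_coprime_of_dvd_of_dvd hp.one_lt d.minFac_dvd (prime_dvd_Pz hp hlt) hcop

/-- The integers `1 < d ≤ y` coprime to `P_z`: the range of summation of the sifted sums. -/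
noncomputable def siftedIcc (z y : ℝ) : Finset ℕ :=
  (Finset.Icc 2 ⌊y⌋₊).filter fun d => Nat.gcd d (Pz z) = 1

theorem mul_rpow_sub_one_le_rpow_sub_rpow {x p : ℝ} (hx : 1 ≤ x) (hp₀ : 0 ≤ p) (hp₁ : p ≤ 1) :
    p * x ^ (p - 1) ≤ x ^ p - (x - 1) ^ p := by
  have hx₀ : 0 < x := by linarith
  have hinv : x⁻¹ ≤ 1 := inv_le_one_of_one_le₀ hx
  have bernoulli : (1 + -x⁻¹) ^ p ≤ 1 + p * -x⁻¹ :=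
    rpow_one_add_le_one_add_mul_self (by linarith) hp₀ hp₁
  suffices (x - 1) ^ p ≤ x ^ p - p * x ^ (p - 1) by linarith
  calc (x - 1) ^ p = x ^ p * (1 + -x⁻¹) ^ p := by
        rw [← Real.mul_rpow hx₀.le (by linarith)]
        congr 1
        field_simp
        ring
    _ ≤ x ^ p * (1 + p * -x⁻¹) := by gcongr
    _ = x ^ p - p * x ^ (p - 1) := by rw [Real.rpow_sub_one hx₀.ne']; ring

theorem mul_sum_Icc_rpow_sub_one_le {p : ℝ} (hp₀ : 0 < p) (hp₁ : p ≤ 1) (N : ℕ) :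
    p * ∑ d ∈ Finset.Icc 1 N, (d : ℝ) ^ (p - 1) ≤ (N : ℝ) ^ p := by
  induction N with
  | zero => simp [Real.zero_rpow hp₀.ne']
  | succ n ih =>
    have increment := mul_rpow_sub_one_le_rpow_sub_rpow (x := (n + 1 : ℕ))
      (by exact_mod_cast n.succ_pos) hp₀.le hp₁
    rw [Finset.sum_Icc_succ_top (by omega), mul_add]
    rw [show ((n + 1 : ℕ) : ℝ) - 1 = n by push_cast; ring] at increment
    linarith

theorem sum_Icc_rpow_le_of_nonneg {q : ℝ} (hq : 0 ≤ q) (N : ℕ) :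
    ∑ d ∈ Finset.Icc 1 N, (d : ℝ) ^ q ≤ N * (N : ℝ) ^ q := by
  calc ∑ d ∈ Finset.Icc 1 N, (d : ℝ) ^ q ≤ ∑ _d ∈ Finset.Icc 1 N, (N : ℝ) ^ q := by
        gcongr with d hd
        exact (Finset.mem_Icc.mp hd).2
    _ = N * (N : ℝ) ^ q := by simp

theorem sum_Icc_rpow_sub_one_le {p : ℝ} (hp : 0 < p) (N : ℕ) :
    ∑ d ∈ Finset.Icc 1 N, (d : ℝ) ^ (p - 1) ≤ (1 + p⁻¹) * (N : ℝ) ^ p := by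
  have hNp : 0 ≤ (N : ℝ) ^ p := by positivity
  rw [add_mul, one_mul]
  rcases le_total p 1 with hp₁ | hp₁
  · have := (le_inv_mul_iff₀ hp).mpr (mul_sum_Icc_rpow_sub_one_le hp hp₁ N)
    linarith
  · have hmul : (N : ℝ) * (N : ℝ) ^ (p - 1) = (N : ℝ) ^ p := by
      rw [← Real.rpow_one_add' N.cast_nonneg (by linarith), add_sub_cancel]
    have := sum_Icc_rpow_le_of_nonneg (sub_nonneg.mpr hp₁) N
    have : 0 ≤ p⁻¹ * (N : ℝ) ^ p := by positivity
    linarith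

section SiftedSums

variable {z y : ℝ}

theorem le_of_mem_siftedIcc {d : ℕ} (hd : d ∈ siftedIcc z y) : z ≤ d := by
  obtain ⟨hIcc, hcop⟩ := Finset.mem_filter.mp hd
  have hd₂ : 2 ≤ d := (Finset.mem_Icc.mp hIcc).1
  exact (le_minFac_of_coprime_Pz (by omega) hcop).trans (mod_cast Nat.minFac_le (by omega))

theorem siftedIcc_subset_Icc : siftedIcc z y ⊆ Finset.Icc 1 ⌊y⌋₊ :=
  (Finset.filter_subset _ _).trans (Finset.Icc_subset_Icc_left one_le_two)

theorem sum_siftedIcc_inv_sq_le (hz : 0 < z) :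
    ∑ d ∈ siftedIcc z y, ((d : ℝ) ^ 2)⁻¹ ≤ 2 / z := by
  obtain ⟨k, hk⟩ := Nat.exists_eq_succ_of_ne_zero (Nat.ceil_pos.mpr hz).ne'
  have hzk : z ≤ (k : ℝ) + 1 := by
    simpa [hk] using Nat.le_ceil z
  have hsub : siftedIcc z y ⊆ Finset.Ioo k (⌊y⌋₊ + 1) := fun d hd => by
    have hceil : ⌈z⌉₊ ≤ d := Nat.ceil_le.mpr (le_of_mem_siftedIcc hd)
    have hIcc := Finset.mem_Icc.mp (siftedIcc_subset_Icc hd)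
    exact Finset.mem_Ioo.mpr (by omega)
  calc ∑ d ∈ siftedIcc z y, ((d : ℝ) ^ 2)⁻¹
      ≤ ∑ d ∈ Finset.Ioo k (⌊y⌋₊ + 1), ((d : ℝ) ^ 2)⁻¹ :=
        Finset.sum_le_sum_of_subset_of_nonneg hsub fun _ _ _ => by positivity
    _ ≤ 2 / ((k : ℝ) + 1) := sum_Ioo_inv_sq_le k (⌊y⌋₊ + 1)
    _ ≤ 2 / z := by gcongr

theorem sum_siftedIcc_rpow_sub_one_le (hy : 0 ≤ y) {p : ℝ} (hp : 0 < p) :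
    ∑ d ∈ siftedIcc z y, (d : ℝ) ^ (p - 1) ≤ (1 + p⁻¹) * y ^ p :=
  calc ∑ d ∈ siftedIcc z y, (d : ℝ) ^ (p - 1)
      ≤ ∑ d ∈ Finset.Icc 1 ⌊y⌋₊, (d : ℝ) ^ (p - 1) :=
        Finset.sum_le_sum_of_subset_of_nonneg siftedIcc_subset_Icc fun _ _ _ => by positivity
    _ ≤ (1 + p⁻¹) * (⌊y⌋₊ : ℝ) ^ p := sum_Icc_rpow_sub_one_le hp ⌊y⌋₊
    _ ≤ (1 + p⁻¹) * y ^ p := by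
        gcongr
        exact Nat.floor_le hy

theorem sum_siftedIcc_le_of_le_main_add_error {b : ℕ → ℝ} {X μ C₀ : ℝ} (hz : 0 < z) (hy : 0 ≤ y)
    (hX : 0 ≤ X) (hμ : 0 < μ) (hC₀ : 0 ≤ C₀)
    (hb : ∀ d ∈ siftedIcc z y, b d ≤ X / (d : ℝ) ^ 2 + C₀ * (X / d) ^ (1 - μ)) :
    ∑ d ∈ siftedIcc z y, b d ≤ X * (2 / z) + C₀ * X ^ (1 - μ) * ((1 + μ⁻¹) * y ^ μ) := by
  have hsplit (d : ℕ) : X / (d : ℝ) ^ 2 + C₀ * (X / d) ^ (1 - μ) =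
      X * ((d : ℝ) ^ 2)⁻¹ + C₀ * X ^ (1 - μ) * (d : ℝ) ^ (μ - 1) := by
    rw [Real.div_rpow hX d.cast_nonneg, ← neg_sub 1 μ, Real.rpow_neg d.cast_nonneg]
    ring
  calc ∑ d ∈ siftedIcc z y, b d
      ≤ ∑ d ∈ siftedIcc z y, (X * ((d : ℝ) ^ 2)⁻¹ + C₀ * X ^ (1 - μ) * (d : ℝ) ^ (μ - 1)) :=
        Finset.sum_le_sum fun d hd => (hb d hd).trans_eq (hsplit d)
    _ = X * ∑ d ∈ siftedIcc z y, ((d : ℝ) ^ 2)⁻¹ +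
          C₀ * X ^ (1 - μ) * ∑ d ∈ siftedIcc z y, (d : ℝ) ^ (μ - 1) := by
        rw [Finset.sum_add_distrib, Finset.mul_sum, Finset.mul_sum]
    _ ≤ X * (2 / z) + C₀ * X ^ (1 - μ) * ((1 + μ⁻¹) * y ^ μ) := by
        gcongr
        · exact sum_siftedIcc_inv_sq_le hz
        · exact sum_siftedIcc_rpow_sub_one_le hy hμ

theorem lt_div_of_mem_siftedIcc_div {X w C : ℝ} {d : ℕ} (hX : 0 ≤ X) (hw : 0 < w) (hC : C < w)
    (hd : d ∈ siftedIcc z (X / w)) : C < X / d := by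
  obtain ⟨hd₁, hdy⟩ := Finset.mem_Icc.mp (siftedIcc_subset_Icc hd)
  have hd₀ : (0 : ℝ) < d := by exact_mod_cast hd₁
  have hdX : (d : ℝ) ≤ X / w := (Nat.le_floor_iff (by positivity)).mp hdy
  exact hC.trans_le ((le_div_comm₀ hd₀ hw).mp hdX)

end SiftedSums

theorem eventually_log_rpow_le (κ : ℝ) : ∀ᶠ z in Filter.atTop, Real.log z ^ κ ≤ z := by
  filter_upwards [(isLittleO_log_rpow_rpow_atTop κ one_pos).bound one_pos,
    Filter.eventually_ge_atTop 0] with z hbound hz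
  simpa only [Real.rpow_one, one_mul, Real.norm_of_nonneg hz] using
    (Real.le_norm_self _).trans hbound

theorem tendsto_zf_atTop {A : ℝ} (hA : -1 < A) :
    Filter.Tendsto (zf A) Filter.atTop Filter.atTop := by
  have hc : 0 < 1 / (2 * (A + 1)) := by
    have : 0 < A + 1 := by linarith
    positivity
  have hexp := (Real.tendsto_exp_div_pow_atTop 1).comp
    (Real.tendsto_log_atTop.comp Real.tendsto_log_atTop)
  refine (Real.tendsto_exp_atTop.comp (hexp.const_mul_atTop hc)).congr' ?_
  filter_upwards [Filter.eventually_gt_atTop 1] with X hX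
  have hlog : 0 < Real.log X := Real.log_pos hX
  rw [zf, Real.rpow_def_of_pos (by linarith)]
  simp only [Function.comp_apply, pow_one, Real.exp_log hlog]
  congr 1
  ring

theorem statement8_general {a : ℕ → ℝ → ℝ} {z : ℝ → ℝ} {μ C C₀ ε : ℝ}
    (hμ : 0 < μ) (hC₀ : 0 ≤ C₀) (hε : 0 < ε) (hz : Filter.Tendsto z Filter.atTop Filter.atTop)
    (ha : ∀ d : ℕ, 0 < d → ∀ X : ℝ, X / d > C →
      a d X ≤ X / (d : ℝ) ^ 2 + C₀ * (X / d) ^ (1 - μ)) :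
    ∃ C₁ > (0 : ℝ), ∀ᶠ X in Filter.atTop,
      ∑ d ∈ siftedIcc (z X) (X / Real.log (z X) ^ ε), a d X
        ≤ C₁ * X / Real.log (z X) ^ (ε * μ) := by
  refine ⟨2 + C₀ * (1 + μ⁻¹), by positivity, ?_⟩
  have hlog := Real.tendsto_log_atTop.comp hz
  filter_upwards [Filter.eventually_gt_atTop 0, hz.eventually_gt_atTop 0,
    hlog.eventually_gt_atTop 0, ((tendsto_rpow_atTop hε).comp hlog).eventually_gt_atTop C,
    hz.eventually (eventually_log_rpow_le (ε * μ))] with X hX hzX hL hCL hLz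
  simp only [Function.comp_apply] at hL hCL
  set L := Real.log (z X)
  have herror : X ^ (1 - μ) * (X / L ^ ε) ^ μ = X / L ^ (ε * μ) := by
    rw [Real.div_rpow hX.le (by positivity), ← Real.rpow_mul hL.le, ← mul_div_assoc,
      ← Real.rpow_add hX, sub_add_cancel, Real.rpow_one]
  calc ∑ d ∈ siftedIcc (z X) (X / L ^ ε), a d X
      ≤ X * (2 / z X) + C₀ * X ^ (1 - μ) * ((1 + μ⁻¹) * (X / L ^ ε) ^ μ) :=
        sum_siftedIcc_le_of_le_main_add_error hzX (by positivity) hX.le hμ hC₀ fun d hd =>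
          ha d (Finset.mem_Icc.mp (siftedIcc_subset_Icc hd)).1 X
            (lt_div_of_mem_siftedIcc_div hX.le (by positivity) hCL hd)
    _ = X * (2 / z X) + C₀ * (1 + μ⁻¹) * (X ^ (1 - μ) * (X / L ^ ε) ^ μ) := by ring
    _ ≤ X * (2 / L ^ (ε * μ)) + C₀ * (1 + μ⁻¹) * (X / L ^ (ε * μ)) := by
        rw [herror]
        gcongr
    _ = (2 + C₀ * (1 + μ⁻¹)) * X / L ^ (ε * μ) := by ring

/-- Assuming the `A_d(X)` error bound with constants `μ ∈ (0,1)`, `C`, `C₀`: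
with `c = 1/(2(A+1))` and `z = X^(c/log log X)`, for all sufficiently large `X`,
`∑_{1 < d ≤ X/(log z)^ε, gcd(d, P_z) = 1} #A_d(X) ≤ C₁·X/(log z)^(εμ)`. -/
theorem statement8 (P : Polynomial ℝ) (hP : ¬ IsLiouvilleReal (P.coeff 1))
    (μ C C₀ : ℝ) (hμ : μ ∈ Set.Ioo (0 : ℝ) 1) (hC : 0 < C) (hC₀ : 0 < C₀)
    (hbound : ∀ d : ℕ, 0 < d → ∀ X : ℝ, X / (d : ℝ) > C →
      |((AP P d X).card : ℝ) - X / (d : ℝ) ^ 2| ≤ C₀ * (X / (d : ℝ)) ^ (1 - μ))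
    (ε A : ℝ) (hε : ε ∈ Set.Ioo (0 : ℝ) 1) (hA : 0 < A) :
    ∃ C₁ > (0 : ℝ), ∃ X₂ : ℝ, ∀ X : ℝ, X ≥ X₂ →
      (∑ d ∈ (Finset.Icc 2 ⌊X / (Real.log (zf A X)) ^ ε⌋₊).filter
          (fun d => Nat.gcd d (Pz (zf A X)) = 1), ((AP P d X).card : ℝ))
        ≤ C₁ * X / (Real.log (zf A X)) ^ (ε * μ) := by
  obtain ⟨C₁, hC₁, hsum⟩ := statement8_general hμ.1 hC₀.le hε.1 (tendsto_zf_atTop (by linarith))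
    fun d hd X hX => sub_le_iff_le_add'.mp (abs_le.mp (hbound d hd X hX)).2
  exact ⟨C₁, hC₁, Filter.eventually_atTop.mp hsum⟩
end

section
/- Let P ∈ ℝ[x] be any polynomial. Fix ε ∈ (0,1) and A > 0, set c = 1/(2(A+1)) and z = X^{c/log log X}. Then there is a constant C₁ > 0 such that for all sufficiently large X, the sum of #A_d(X) over all integers d with X/(log z)^ε < d ≤ X and gcd(d, P_z) = 1 is at most X/(log z)^{1−ε} + C₁·X/(log X)^A. -/
/-!
A value `d > X / Y` divides at most `X / d < Y` integers up to `X`, so after interchanging the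
order of summation the sum of the `#A_d(X)` over `z`-rough `d > X / Y` is at most the sum over
`m ≤ Y` of the number of `z`-rough integers up to `X / m`.

There are `O(x / log z)` rough integers up to `x`. Indeed, the set of rough integers is closed
under divisors, so that `log n = ∑_{d ∣ n} Λ(n / d)` and Chebyshev's bound for `ψ` give
`#{n} * log x ≪ x * ∑ 1 / n`, the sums being over rough `n ≤ x`. On the other hand
`(∑ 1 / n) * log z ≪ log x`, because the products of a rough `n ≤ x` and an integer `m < z`
are distinct integers up to `x * z`.

Hence the sum is `O(X * (1 + log Y) / log z)`, and for `Y = (log z) ^ ε` the factor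
`1 + log Y` is beaten by `Y` itself.
-/

open Real Finset

open Filter Asymptotics
open ArithmeticFunction (vonMangoldt vonMangoldt_sum vonMangoldt_nonneg)

lemma sum_vonMangoldt_div_le_psi {s : Finset ℕ} {x : ℝ} (hs : ∀ n ∈ s, n ≠ 0 ∧ (n : ℝ) ≤ x)
    {d : ℕ} (hd : d ≠ 0) : ∑ n ∈ s with d ∣ n, vonMangoldt (n / d) ≤ Chebyshev.psi (x / d) := by
  have div_inj : Set.InjOn (· / d) (s.filter (d ∣ ·) : Set ℕ) := fun n hn n' hn' h =>
    (Nat.div_left_inj (mem_filter.1 hn).2 (mem_filter.1 hn').2).1 h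
  rw [← sum_image (f := fun k => vonMangoldt k) div_inj]
  refine sum_le_sum_of_subset_of_nonneg (image_subset_iff.2 fun n hn => ?_)
    fun _ _ _ => vonMangoldt_nonneg
  obtain ⟨hns, hdn⟩ := mem_filter.1 hn
  obtain ⟨hn0, hnx⟩ := hs n hns
  have div_pos : 0 < n / d :=
    Nat.div_pos (Nat.le_of_dvd (Nat.pos_of_ne_zero hn0) hdn) (Nat.pos_of_ne_zero hd)
  exact mem_Ioc.2 ⟨div_pos, Nat.le_floor (Nat.cast_div_le.trans (by gcongr))⟩

lemma sum_log_le_sum_psi {s : Finset ℕ} {x : ℝ} (hs : ∀ n ∈ s, n ≠ 0 ∧ (n : ℝ) ≤ x)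
    (hdvd : ∀ n ∈ s, ∀ d, d ∣ n → d ∈ s) :
    ∑ n ∈ s, log n ≤ ∑ d ∈ s, Chebyshev.psi (x / d) := by
  have swap (n d : ℕ) : n ∈ s ∧ d ∈ n.divisors ↔ n ∈ s.filter (d ∣ ·) ∧ d ∈ s := by
    simp only [Nat.mem_divisors, mem_filter]
    exact ⟨fun ⟨hn, hd, _⟩ => ⟨⟨hn, hd⟩, hdvd n hn d hd⟩,
      fun ⟨⟨hn, hd⟩, _⟩ => ⟨hn, hd, (hs n hn).1⟩⟩
  calc ∑ n ∈ s, log n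
      = ∑ n ∈ s, ∑ d ∈ n.divisors, vonMangoldt (n / d) := by
        simp only [Nat.sum_div_divisors, vonMangoldt_sum]
    _ = ∑ d ∈ s, ∑ n ∈ s with d ∣ n, vonMangoldt (n / d) := sum_comm' swap
    _ ≤ ∑ d ∈ s, Chebyshev.psi (x / d) :=
        sum_le_sum fun d hd => sum_vonMangoldt_div_le_psi hs (hs d hd).1

lemma card_mul_log_le {s : Finset ℕ} {x : ℝ} (hs : ∀ n ∈ s, n ≠ 0 ∧ (n : ℝ) ≤ x)
    (hdvd : ∀ n ∈ s, ∀ d, d ∣ n → d ∈ s) :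
    #s * log x ≤ 7 * x * ∑ n ∈ s, (n : ℝ)⁻¹ := by
  have cast_pos {n : ℕ} (hn : n ∈ s) : (0 : ℝ) < n :=
    Nat.cast_pos.2 (Nat.pos_of_ne_zero (hs n hn).1)
  have hx {n : ℕ} (hn : n ∈ s) : 0 < x := (cast_pos hn).trans_le (hs n hn).2
  have log_split {n : ℕ} (hn : n ∈ s) : log x ≤ log n + x * (n : ℝ)⁻¹ := by
    have h := log_le_sub_one_of_pos (div_pos (hx hn) (cast_pos hn))
    rw [log_div (hx hn).ne' (cast_pos hn).ne', div_eq_mul_inv] at h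
    linarith
  have psi_le {n : ℕ} (hn : n ∈ s) : Chebyshev.psi (x / n) ≤ 6 * (x * (n : ℝ)⁻¹) := by
    have hxn : 0 ≤ x / n := div_nonneg (hx hn).le (cast_pos hn).le
    rw [← div_eq_mul_inv]
    refine (Chebyshev.psi_le_const_mul_self hxn).trans ?_
    gcongr
    linarith [log_four_eq, log_two_lt_d9]
  calc #s * log x = ∑ _n ∈ s, log x := by rw [sum_const, nsmul_eq_mul]
    _ ≤ ∑ n ∈ s, (log n + x * (n : ℝ)⁻¹) := sum_le_sum fun n => log_split
    _ = ∑ n ∈ s, log n + ∑ n ∈ s, x * (n : ℝ)⁻¹ := sum_add_distrib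
    _ ≤ ∑ n ∈ s, 6 * (x * (n : ℝ)⁻¹) + ∑ n ∈ s, x * (n : ℝ)⁻¹ := by
        exact add_le_add_left ((sum_log_le_sum_psi hs hdvd).trans (sum_le_sum fun n => psi_le)) _
    _ = 7 * x * ∑ n ∈ s, (n : ℝ)⁻¹ := by
        simp only [← mul_sum]
        ring

lemma injOn_mul_of_coprime {s t : Set ℕ} (hs : 0 ∉ s) (hst : ∀ a ∈ s, ∀ b ∈ t, a.Coprime b) :
    Set.InjOn (fun q : ℕ × ℕ => q.1 * q.2) (s ×ˢ t) := by
  rintro ⟨a, b⟩ ⟨ha, hb⟩ ⟨a', b'⟩ ⟨ha', hb'⟩ (h : a * b = a' * b')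
  obtain rfl : a = a' := Nat.dvd_antisymm
    ((hst a ha b' hb').dvd_of_dvd_mul_right (h ▸ dvd_mul_right a b))
    ((hst a' ha' b hb).dvd_of_dvd_mul_right (h ▸ dvd_mul_right a' b'))
  rw [Nat.eq_of_mul_eq_mul_left (Nat.pos_of_ne_zero fun h0 => hs (h0 ▸ ha)) h]

lemma sum_inv_mul_sum_inv_le {s t u : Finset ℕ} (hs : 0 ∉ s)
    (hst : ∀ a ∈ s, ∀ b ∈ t, a.Coprime b) (hu : ∀ a ∈ s, ∀ b ∈ t, a * b ∈ u) :
    (∑ a ∈ s, (a : ℝ)⁻¹) * ∑ b ∈ t, (b : ℝ)⁻¹ ≤ ∑ k ∈ u, (k : ℝ)⁻¹ := by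
  calc (∑ a ∈ s, (a : ℝ)⁻¹) * ∑ b ∈ t, (b : ℝ)⁻¹
      = ∑ q ∈ s ×ˢ t, ((q.1 * q.2 : ℕ) : ℝ)⁻¹ := by
        simp only [sum_mul_sum, sum_product, Nat.cast_mul, mul_inv]
    _ = ∑ k ∈ (s ×ˢ t).image fun q : ℕ × ℕ => q.1 * q.2, (k : ℝ)⁻¹ := by
        rw [sum_image (coe_product s t ▸ injOn_mul_of_coprime (mod_cast hs) hst)]
    _ ≤ ∑ k ∈ u, (k : ℝ)⁻¹ :=
        sum_le_sum_of_subset_of_nonneg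
          (image_subset_iff.2 fun q hq => hu _ (mem_product.1 hq).1 _ (mem_product.1 hq).2)
          fun _ _ _ => by positivity

lemma sum_Icc_inv_le_one_add_log {y : ℝ} (hy : 1 ≤ y) :
    ∑ n ∈ Icc 1 ⌊y⌋₊, (n : ℝ)⁻¹ ≤ 1 + log y := by
  simpa [harmonic_eq_sum_Icc] using harmonic_floor_le_one_add_log y hy

lemma log_le_sum_Ico_inv {z : ℝ} (hz : 1 ≤ z) : log z ≤ ∑ m ∈ Ico 1 ⌈z⌉₊, (m : ℝ)⁻¹ := by
  obtain ⟨k, hk : ⌈z⌉₊ = k + 1⟩ :=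
    Nat.exists_eq_succ_of_ne_zero (Nat.ceil_pos.2 (by linarith : 0 < z)).ne'
  calc log z ≤ log (k + 1 : ℕ) := log_le_log (by linarith) (hk ▸ Nat.le_ceil z)
    _ ≤ harmonic k := log_add_one_le_harmonic k
    _ = ∑ m ∈ Ico 1 ⌈z⌉₊, (m : ℝ)⁻¹ := by
        simp only [hk, harmonic_eq_sum_Icc, Rat.cast_sum, Rat.cast_inv, Rat.cast_natCast]
        rfl

lemma coprime_Pz_iff {n : ℕ} {z : ℝ} :
    n.Coprime (Pz z) ↔ ∀ p : ℕ, p.Prime → (p : ℝ) < z → ¬p ∣ n := by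
  simp only [Pz, primesLt, Nat.coprime_prod_right_iff, mem_filter, mem_range, Nat.lt_ceil]
  exact ⟨fun h p hp hpz => hp.coprime_iff_not_dvd.1 (h p ⟨hpz, hp, hpz⟩).symm,
    fun h p ⟨_, hp, hpz⟩ => (hp.coprime_iff_not_dvd.2 (h p hp hpz)).symm⟩

lemma coprime_of_coprime_Pz {n m : ℕ} {z : ℝ} (hn : n.Coprime (Pz z)) (hm : m ≠ 0)
    (hmz : (m : ℝ) < z) : n.Coprime m := by
  refine (Nat.coprime_of_dvd fun p hp hpm => coprime_Pz_iff.1 hn p hp ?_).symm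
  exact hmz.trans_le' (by exact_mod_cast Nat.le_of_dvd (Nat.pos_of_ne_zero hm) hpm)

/-- The `z`-rough integers `1 ≤ n ≤ x`, that is, those without a prime factor `p < z`; the
condition is encoded as coprimality to `P_z`, as in the sum over `d` to be estimated. -/
noncomputable def roughUpTo (x z : ℝ) : Finset ℕ :=
  {n ∈ Icc 1 ⌊x⌋₊ | n.Coprime (Pz z)}

lemma mem_roughUpTo {n : ℕ} {x z : ℝ} :
    n ∈ roughUpTo x z ↔ (n ≠ 0 ∧ (n : ℝ) ≤ x) ∧ n.Coprime (Pz z) := by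
  rw [roughUpTo, mem_filter, mem_Icc, Nat.one_le_iff_ne_zero]
  exact and_congr_left fun _ => and_congr_right fun hn => Nat.le_floor_iff' hn

lemma mem_roughUpTo_of_dvd {n d : ℕ} {x z : ℝ} (hn : n ∈ roughUpTo x z) (hd : d ∣ n) :
    d ∈ roughUpTo x z := by
  obtain ⟨⟨hn0, hnx⟩, hnz⟩ := mem_roughUpTo.1 hn
  have hdn : (d : ℝ) ≤ n := by exact_mod_cast Nat.le_of_dvd (Nat.pos_of_ne_zero hn0) hd
  exact mem_roughUpTo.2 ⟨⟨ne_zero_of_dvd_ne_zero hn0 hd, hdn.trans hnx⟩, hnz.coprime_dvd_left hd⟩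

lemma card_roughUpTo_le {x : ℝ} (hx : 0 ≤ x) (z : ℝ) : (#(roughUpTo x z) : ℝ) ≤ x := by
  refine (Nat.cast_le.2 (card_filter_le _ _)).trans ?_
  rw [Nat.card_Icc, Nat.add_sub_cancel]
  exact Nat.floor_le hx

lemma sum_roughUpTo_inv_mul_log_le {x z : ℝ} (hx : 1 ≤ x) (hz : 1 ≤ z) :
    (∑ n ∈ roughUpTo x z, (n : ℝ)⁻¹) * log z ≤ 1 + log (x * z) := by
  have lt_of_mem {m : ℕ} (hm : m ∈ Ico 1 ⌈z⌉₊) : m ≠ 0 ∧ (m : ℝ) < z :=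
    ⟨Nat.one_le_iff_ne_zero.1 (mem_Ico.1 hm).1, Nat.lt_ceil.1 (mem_Ico.1 hm).2⟩
  calc (∑ n ∈ roughUpTo x z, (n : ℝ)⁻¹) * log z
      ≤ (∑ n ∈ roughUpTo x z, (n : ℝ)⁻¹) * ∑ m ∈ Ico 1 ⌈z⌉₊, (m : ℝ)⁻¹ := by
        gcongr
        exact log_le_sum_Ico_inv hz
    _ ≤ ∑ k ∈ Icc 1 ⌊x * z⌋₊, (k : ℝ)⁻¹ := by
        refine sum_inv_mul_sum_inv_le (fun h => (mem_roughUpTo.1 h).1.1 rfl)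
          (fun n hn m hm => coprime_of_coprime_Pz (mem_roughUpTo.1 hn).2 (lt_of_mem hm).1
            (lt_of_mem hm).2) fun n hn m hm => ?_
        obtain ⟨⟨hn0, hnx⟩, -⟩ := mem_roughUpTo.1 hn
        obtain ⟨hm0, hmz⟩ := lt_of_mem hm
        refine mem_Icc.2 ⟨Nat.one_le_iff_ne_zero.2 (mul_ne_zero hn0 hm0), Nat.le_floor ?_⟩
        push_cast
        gcongr
    _ ≤ 1 + log (x * z) := sum_Icc_inv_le_one_add_log (one_le_mul_of_one_le_of_one_le hx hz)

lemma card_roughUpTo_mul_log_le {x z : ℝ} (hz : 1 ≤ z) (hzx : z ≤ x) :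
    #(roughUpTo x z) * log z ≤ 21 * x := by
  have hx : 1 ≤ x := hz.trans hzx
  have hlog : log z ≤ log x := log_le_log (by linarith) hzx
  have hlz : 0 ≤ log z := log_nonneg hz
  rcases lt_or_ge (log x) 1 with hx1 | hx1
  · calc #(roughUpTo x z) * log z ≤ x * 1 := by
          gcongr
          · exact card_roughUpTo_le (by linarith) z
          · exact (hlog.trans_lt hx1).le
      _ ≤ 21 * x := by linarith
  · have recip : (∑ n ∈ roughUpTo x z, (n : ℝ)⁻¹) * log z ≤ 3 * log x := by
      have h := sum_roughUpTo_inv_mul_log_le hx hz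
      rw [log_mul (by positivity) (by positivity)] at h
      linarith
    have count : #(roughUpTo x z) * log x ≤ 7 * x * ∑ n ∈ roughUpTo x z, (n : ℝ)⁻¹ :=
      card_mul_log_le (fun n hn => (mem_roughUpTo.1 hn).1) fun n hn d => mem_roughUpTo_of_dvd hn
    refine le_of_mul_le_mul_right ?_ (zero_lt_one.trans_le hx1)
    calc #(roughUpTo x z) * log z * log x
        = #(roughUpTo x z) * log x * log z := by ring
      _ ≤ 7 * x * (∑ n ∈ roughUpTo x z, (n : ℝ)⁻¹) * log z := by gcongr
      _ = 7 * x * ((∑ n ∈ roughUpTo x z, (n : ℝ)⁻¹) * log z) := by ring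
      _ ≤ 7 * x * (3 * log x) := by gcongr
      _ = 21 * x * log x := by ring

lemma sum_floor_div_eq_sum_card {s : Finset ℕ} {X Y : ℝ} (hX : 0 ≤ X) (hY : 0 < Y)
    (hs : ∀ d ∈ s, X / Y < d) :
    ∑ d ∈ s, ⌊X / d⌋₊ = ∑ m ∈ Icc 1 ⌊Y⌋₊, #{d ∈ s | (d : ℕ) ≤ X / m} := by
  have card_eq {d : ℕ} (hd : d ∈ s) : ⌊X / d⌋₊ = #{m ∈ Icc 1 ⌊Y⌋₊ | (d : ℝ) ≤ X / (m : ℕ)} := by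
    have hd0 : (0 : ℝ) < d := (div_nonneg hX hY.le).trans_lt (hs d hd)
    have hXd : X / d < Y := (div_lt_comm₀ hY hd0).1 (hs d hd)
    suffices h : {m ∈ Icc 1 ⌊Y⌋₊ | (d : ℝ) ≤ X / (m : ℕ)} = Icc 1 ⌊X / d⌋₊ by
      rw [h, Nat.card_Icc, Nat.add_sub_cancel]
    ext m
    simp only [mem_filter, mem_Icc, and_assoc, and_congr_right_iff]
    intro hm
    have hm0 : (0 : ℝ) < m := Nat.cast_pos.2 hm
    rw [Nat.le_floor_iff hY.le, Nat.le_floor_iff (div_nonneg hX hd0.le), le_div_comm₀ hd0 hm0]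
    exact ⟨And.right, fun h => ⟨h.trans hXd.le, h⟩⟩
  rw [sum_congr rfl fun d => card_eq]
  exact sum_card_bipartiteAbove_eq_sum_card_bipartiteBelow fun (d m : ℕ) => (d : ℝ) ≤ X / m

lemma sum_floor_div_le_sum_card_roughUpTo {X Y : ℝ} (z : ℝ) (hX : 0 ≤ X) (hY : 0 < Y) :
    ∑ d ∈ roughUpTo X z with X / Y < (d : ℕ), ⌊X / d⌋₊
      ≤ ∑ m ∈ Icc 1 ⌊Y⌋₊, #(roughUpTo (X / m) z) := by
  rw [sum_floor_div_eq_sum_card hX hY fun d hd => (mem_filter.1 hd).2]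
  refine sum_le_sum fun m _ => card_le_card fun d hd => ?_
  obtain ⟨hd, hdm⟩ := mem_filter.1 hd
  obtain ⟨⟨hd0, -⟩, hdz⟩ := mem_roughUpTo.1 (mem_filter.1 hd).1
  exact mem_roughUpTo.2 ⟨⟨hd0, hdm⟩, hdz⟩

lemma sum_floor_div_le {X Y z : ℝ} (hz : 1 < z) (hY : 1 ≤ Y) (hX : z * Y ≤ X) :
    ∑ d ∈ roughUpTo X z with X / Y < (d : ℕ), (⌊X / d⌋₊ : ℝ)
      ≤ X / log z * (21 * (1 + log Y)) := by
  have hX0 : 0 ≤ X := by nlinarith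
  have card_le {m : ℕ} (hm : m ∈ Icc 1 ⌊Y⌋₊) :
      (#(roughUpTo (X / m) z) : ℝ) ≤ 21 * (X / log z) * (m : ℝ)⁻¹ := by
    obtain ⟨hm1, hmY⟩ := mem_Icc.1 hm
    have hm0 : (0 : ℝ) < m := Nat.cast_pos.2 hm1
    have hzm : z ≤ X / m := by
      rw [le_div_iff₀ hm0]
      exact hX.trans' (by gcongr; exact (Nat.le_floor_iff (by linarith)).1 hmY)
    calc (#(roughUpTo (X / m) z) : ℝ) ≤ 21 * (X / m) / log z :=
          (le_div_iff₀ (log_pos hz)).2 (card_roughUpTo_mul_log_le hz.le hzm)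
      _ = 21 * (X / log z) * (m : ℝ)⁻¹ := by ring
  calc ∑ d ∈ roughUpTo X z with X / Y < (d : ℕ), (⌊X / d⌋₊ : ℝ)
      ≤ ∑ m ∈ Icc 1 ⌊Y⌋₊, (#(roughUpTo (X / m) z) : ℝ) := by
        exact_mod_cast sum_floor_div_le_sum_card_roughUpTo z hX0 (by linarith)
    _ ≤ ∑ m ∈ Icc 1 ⌊Y⌋₊, 21 * (X / log z) * (m : ℝ)⁻¹ := sum_le_sum fun m => card_le
    _ = 21 * (X / log z) * ∑ m ∈ Icc 1 ⌊Y⌋₊, (m : ℝ)⁻¹ := (mul_sum ..).symm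
    _ ≤ 21 * (X / log z) * (1 + log Y) := by
        have := log_pos hz
        gcongr
        exact sum_Icc_inv_le_one_add_log hY
    _ = X / log z * (21 * (1 + log Y)) := by ring

lemma eventually_mul_one_add_log_le (c : ℝ) : ∀ᶠ y in atTop, c * (1 + log y) ≤ y := by
  have h : (fun y => c * (1 + log y)) =o[atTop] (id : ℝ → ℝ) :=
    ((isLittleO_const_id_atTop 1).add isLittleO_log_id_atTop).const_mul_left c
  filter_upwards [h.bound one_pos, eventually_ge_atTop 0] with y hy hy0
  rw [one_mul, id, norm_of_nonneg hy0] at hy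
  exact (le_norm_self _).trans hy

lemma eventually_log_rpow_le_self (r : ℝ) : ∀ᶠ z in atTop, log z ^ r ≤ z := by
  filter_upwards [(isLittleO_log_rpow_rpow_atTop r one_pos).bound one_pos,
    eventually_ge_atTop 0] with z hz hz0
  rw [one_mul, rpow_one, norm_of_nonneg hz0] at hz
  exact (le_norm_self _).trans hz

lemma tendsto_rpow_div_log_log {c : ℝ} (hc : 0 < c) :
    Tendsto (fun X => X ^ (c / log (log X))) atTop atTop := by
  have div_log : Tendsto (fun y => y / log y) atTop atTop := by
    have h : Tendsto (fun t : ℝ => exp t / t) atTop atTop := by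
      simpa using tendsto_exp_div_pow_atTop 1
    refine (h.comp tendsto_log_atTop).congr' ?_
    filter_upwards [eventually_gt_atTop 0] with y hy
    rw [Function.comp_apply, exp_log hy]
  refine (tendsto_exp_atTop.comp
    ((div_log.comp tendsto_log_atTop).const_mul_atTop hc)).congr' ?_
  filter_upwards [eventually_gt_atTop 0] with X hX
  rw [rpow_def_of_pos hX, Function.comp_apply, Function.comp_apply, mul_div_left_comm]

lemma eventually_rpow_div_log_log_pow_le (c : ℝ) (k : ℕ) :
    ∀ᶠ X : ℝ in atTop, (X ^ (c / log (log X))) ^ k ≤ X := by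
  have hll : Tendsto (fun X => log (log X)) atTop atTop := tendsto_log_atTop.comp tendsto_log_atTop
  filter_upwards [hll.eventually_ge_atTop (c * k), hll.eventually_gt_atTop 0,
    eventually_ge_atTop 1] with X hck hpos hX
  rw [← rpow_mul_natCast (by linarith)]
  refine rpow_le_self_of_one_le hX ?_
  rwa [div_mul_eq_mul_div, div_le_one hpos]

lemma card_AP_le (P : Polynomial ℝ) (d : ℕ) (X : ℝ) : #(AP P d X) ≤ ⌊X / d⌋₊ := by
  rw [Nat.floor_div_natCast, ← Nat.Ioc_filter_dvd_card_eq_div]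
  refine card_le_card fun x hx => ?_
  obtain ⟨hx, hdx, -⟩ := mem_filter.1 hx
  exact mem_filter.2 ⟨mem_Ioc.2 (mem_Icc.1 hx), Int.natCast_dvd_natCast.1 hdx⟩

lemma sum_card_AP_le_sum_floor_div (P : Polynomial ℝ) (X Y z : ℝ) :
    ∑ d ∈ (Icc 1 ⌊X⌋₊).filter (fun d : ℕ => X / Y < d ∧ Nat.gcd d (Pz z) = 1), (#(AP P d X) : ℝ)
      ≤ ∑ d ∈ roughUpTo X z with X / Y < (d : ℕ), (⌊X / d⌋₊ : ℝ) := by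
  rw [roughUpTo, filter_filter]
  simp only [and_comm, Nat.Coprime]
  exact sum_le_sum fun d _ => Nat.cast_le.2 (card_AP_le P d X)

theorem statement9_general {ε : ℝ} (hε : 0 < ε) :
    ∀ᶠ z in atTop, ∀ X : ℝ, z ^ 2 ≤ X →
      ∑ d ∈ roughUpTo X z with X / log z ^ ε < (d : ℕ), (⌊X / d⌋₊ : ℝ)
        ≤ X / log z ^ (1 - ε) := by
  have hY : Tendsto (fun z => log z ^ ε) atTop atTop :=
    (tendsto_rpow_atTop hε).comp tendsto_log_atTop
  filter_upwards [hY.eventually (eventually_mul_one_add_log_le 21), hY.eventually_ge_atTop 1,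
    eventually_log_rpow_le_self ε, eventually_gt_atTop 1] with z hlogY hY1 hYz hz X hX
  have hlog : 0 < log z := log_pos hz
  have hX0 : 0 ≤ X := hX.trans' (sq_nonneg z)
  calc ∑ d ∈ roughUpTo X z with X / log z ^ ε < (d : ℕ), (⌊X / d⌋₊ : ℝ)
      ≤ X / log z * (21 * (1 + log (log z ^ ε))) :=
        sum_floor_div_le hz hY1 (hX.trans' (by rw [sq]; gcongr))
    _ ≤ X / log z * log z ^ ε := by gcongr
    _ = X / log z ^ (1 - ε) := by
        rw [rpow_sub hlog, rpow_one, div_div_eq_mul_div, div_mul_eq_mul_div]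

open Classical in
/-- With `c = 1/(2(A+1))` and `z = X^(c/log log X)`, for all sufficiently large `X`,
`∑_{X/(log z)^ε < d ≤ X, gcd(d, P_z) = 1} #A_d(X) ≤ X/(log z)^(1-ε) + C₁·X/(log X)^A`. -/
theorem statement9 (P : Polynomial ℝ)
    (ε A : ℝ) (hε : ε ∈ Set.Ioo (0 : ℝ) 1) (hA : 0 < A) :
    ∃ C₁ > (0 : ℝ), ∃ X₂ : ℝ, ∀ X : ℝ, X ≥ X₂ →
      (∑ d ∈ (Finset.Icc 1 ⌊X⌋₊).filter
          (fun d : ℕ => X / (Real.log (zf A X)) ^ ε < (d : ℝ) ∧ Nat.gcd d (Pz (zf A X)) = 1),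
          ((AP P d X).card : ℝ))
        ≤ X / (Real.log (zf A X)) ^ (1 - ε) + C₁ * X / (Real.log X) ^ A := by
  have hc : 0 < 1 / (2 * (A + 1)) := by positivity
  obtain ⟨X₂, hX₂⟩ := eventually_atTop.1 <|
    ((tendsto_rpow_div_log_log hc).eventually (statement9_general hε.1)).and <|
      (eventually_rpow_div_log_log_pow_le _ 2).and (eventually_ge_atTop 1)
  refine ⟨1, one_pos, X₂, fun X hX => ?_⟩
  obtain ⟨hsum, hsq, hX1⟩ := hX₂ X hX
  have hlog : 0 ≤ log X := log_nonneg hX1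
  exact (sum_card_AP_le_sum_floor_div P X _ _).trans <| (hsum X hsq).trans <|
    le_add_of_nonneg_right (by positivity)
end
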